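/- Let d ≥ 1 and let P = (p⁽¹⁾,…,p⁽ᵈ⁾) and Q = (q⁽¹⁾,…,q⁽ᵈ⁾) be d-tuples of probability vectors such that the columns of P share a common support and the columns of Q share a common support. Assume D_α(P) > D_α(Q) for every α ∈ (A₊ ∪ A₋) \ {e₁,…,e_d}, D^T_β(P) > D^T_β(Q) for every β ∈ B₋ \ {0}, and D₁(p⁽ᵏ⁾‖p⁽ˡ⁾) > D₁(q⁽ᵏ⁾‖q⁽ˡ⁾) for all k ≠ ℓ. Then for every sufficiently large n ∈ ℕ, defining the probability vectors r⁽ᵏ⁾ := (1/n) · ⨁_{s=0}^{n−1} ( (p⁽ᵏ⁾)^{⊗(n−1−s)} ⊗ (q⁽ᵏ⁾)^{⊗s} ) for k = 1,…,d, there exists a stochastic matrix T with T (p⁽ᵏ⁾ ⊗ r⁽ᵏ⁾) = q⁽ᵏ⁾ ⊗ r⁽ᵏ⁾ for all k = 1,…,d. -/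

import Mathlib

open scoped BigOperators NNReal

noncomputable section

/-- A probability vector on a finite index type. -/
def IsProbVec {ι : Type*} [Fintype ι] (p : ι → ℝ) : Prop :=
  (∀ i, 0 ≤ p i) ∧ ∑ i, p i = 1

/-- A (column-)stochastic matrix: nonnegative entries, every column sums to `1`. -/
def IsStochastic {ι κ : Type*} [Fintype ι] [Fintype κ] (T : ι → κ → ℝ) : Prop :=
  (∀ i j, 0 ≤ T i j) ∧ ∀ j, ∑ i, T i j = 1

/-- Matrix–vector multiplication. -/
def matVec {ι κ : Type*} [Fintype κ] (T : ι → κ → ℝ) (v : κ → ℝ) : ι → ℝ :=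
  fun i => ∑ j, T i j * v j

/-- Kronecker product of two vectors. -/
def kron {ι κ : Type*} (p : ι → ℝ) (q : κ → ℝ) : ι × κ → ℝ :=
  fun x => p x.1 * q x.2

/-- `n`-fold Kronecker power of a vector. -/
def kpow {ι : Type*} (p : ι → ℝ) (n : ℕ) : (Fin n → ι) → ℝ :=
  fun f => ∏ j, p (f j)

/-- Kronecker product reindexed along `Fin (m * n)`. -/
def kronFin {m n : ℕ} (p : Fin m → ℝ) (q : Fin n → ℝ) : Fin (m * n) → ℝ :=
  fun i => kron p q (finProdFinEquiv.symm i)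

/-- The sum of the `k` largest entries of a nonnegative vector, expressed as the
largest sum over subsets of cardinality at most `k`. -/
def topSum {ι : Type*} [Fintype ι] (p : ι → ℝ) (k : ℕ) : ℝ :=
  ⨆ s ∈ {s : Finset ι | s.card ≤ k}, ∑ i ∈ s, p i

/-- Majorization for nonnegative vectors (possibly of different lengths):
equal total sums, and for each `k` the sum of the `k` largest entries of `p` is
at least that of `q`. -/
def Majorizes {ι κ : Type*} [Fintype ι] [Fintype κ] (p : ι → ℝ) (q : κ → ℝ) : Prop :=
  (∑ i, p i = ∑ j, q j) ∧ ∀ k : ℕ, topSum q k ≤ topSum p k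

/-- The size of the support, `‖p‖₀`. -/
def supp0 {ι : Type*} [Fintype ι] (p : ι → ℝ) : ℕ :=
  (Finset.univ.filter fun i => p i ≠ 0).card

/-- Entrywise nonnegativity. -/
def NonnegVec {n : ℕ} (p : Fin n → ℝ) : Prop := ∀ i, 0 ≤ p i

/-- The modified majorization preorder `≽₀,₁`: majorization plus equality of
support sizes. -/
def MajMod {ι κ : Type*} [Fintype ι] [Fintype κ] (p : ι → ℝ) (q : κ → ℝ) : Prop :=
  Majorizes p q ∧ supp0 p = supp0 q

/-- `f_α(p) = ∑_{i ∈ supp p} (p i)^α`. -/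
def fA {ι : Type*} [Fintype ι] (α : ℝ) (p : ι → ℝ) : ℝ :=
  ∑ i, if p i = 0 then 0 else p i ^ α

/-- Shannon entropy (the terms with `p i = 0` vanish). -/
def H1ent {ι : Type*} [Fintype ι] (p : ι → ℝ) : ℝ := -∑ i, p i * Real.log (p i)

/-- `H₀'(p) = ∑_{i ∈ supp p} log p_i`. -/
def H0' {ι : Type*} [Fintype ι] (p : ι → ℝ) : ℝ :=
  ∑ i, if p i = 0 then 0 else Real.log (p i)

/-- Rényi entropy of order `α` (with `α = 1` the Shannon entropy). -/
def Hent {ι : Type*} [Fintype ι] (α : ℝ) (p : ι → ℝ) : ℝ :=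
  if α = 1 then -∑ i, p i * Real.log (p i)
  else (1 / (1 - α)) * Real.log (∑ i, if p i = 0 then 0 else p i ^ α)

/-- Min-entropy `H_∞(p) = - log max_i p_i`. -/
def HentInf {ι : Type*} [Fintype ι] (p : ι → ℝ) : ℝ := -Real.log (⨆ i, p i)

/-- Kullback–Leibler divergence (the terms with `p i = 0` vanish). -/
def KL {n : ℕ} (p q : Fin n → ℝ) : ℝ :=
  ∑ i, p i * Real.log (p i / q i)

/-- Rényi divergence of order `α` for vectors with common support. -/
def Renyi {n : ℕ} (α : ℝ) (p q : Fin n → ℝ) : ℝ :=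
  if α = 1 then ∑ i, p i * Real.log (p i / q i)
  else (1 / (α - 1)) * Real.log (∑ i, if p i = 0 then 0 else p i ^ α * q i ^ (1 - α))

/-- Max-divergence `D_∞(p‖q) = max_{i ∈ supp q} log (p_i / q_i)`. -/
def RenyiInf {n : ℕ} (p q : Fin n → ℝ) : ℝ :=
  ⨆ i ∈ Finset.univ.filter (fun i => q i ≠ 0), Real.log (p i / q i)

/-- Rényi divergence with values in the extended reals `[0, ∞]`. -/
def RenyiE {n : ℕ} (α : ℝ) (p q : Fin n → ℝ) : EReal :=
  if α = 1 then
    (if ∀ i, p i ≠ 0 → q i ≠ 0 then ((∑ i, p i * Real.log (p i / q i) : ℝ) : EReal) else ⊤)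
  else if α < 1 then
    (if ∃ i, p i ≠ 0 ∧ q i ≠ 0 then
      (((1 / (α - 1)) *
        Real.log (∑ i, if p i = 0 ∨ q i = 0 then 0 else p i ^ α * q i ^ (1 - α)) : ℝ) : EReal)
    else (⊤ : EReal))
  else
    (if ∀ i, p i ≠ 0 → q i ≠ 0 then
      (((1 / (α - 1)) *
        Real.log (∑ i, if p i = 0 then 0 else p i ^ α * q i ^ (1 - α)) : ℝ) : EReal)
    else (⊤ : EReal))

/-- The common support of a tuple of vectors. -/
def suppIdx {d n : ℕ} (P : Fin d → Fin n → ℝ) : Finset (Fin n) :=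
  Finset.univ.filter fun i => ∃ k, P k i ≠ 0

/-- `f_α(P) = ∑_{i ∈ I} ∏_k (p_i^{(k)})^{α_k}` with `I` the common support. -/
def fMat {d n : ℕ} (α : Fin d → ℝ) (P : Fin d → Fin n → ℝ) : ℝ :=
  ∑ i ∈ suppIdx P, ∏ k, P k i ^ α k

/-- The matrix `α`-divergence `D_α`. -/
def Dmat {d n : ℕ} (α : Fin d → ℝ) (P : Fin d → Fin n → ℝ) : ℝ :=
  (1 / ((⨆ k, α k) - 1)) * Real.log (∑ i ∈ suppIdx P, ∏ k, P k i ^ α k)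

/-- The tropical matrix divergence `D^𝕋_β`. -/
def DmatT {d n : ℕ} (β : Fin d → ℝ) (P : Fin d → Fin n → ℝ) : ℝ :=
  (1 / (⨆ k, β k)) * Real.log (⨆ i ∈ suppIdx P, ∏ k, P k i ^ β k)

/-- Membership in `A₊`: entries summing to `1`, all nonnegative. -/
def memAplus {d : ℕ} (α : Fin d → ℝ) : Prop := (∑ k, α k = 1) ∧ ∀ k, 0 ≤ α k

/-- Membership in `A₋`: entries summing to `1`, one entry `≥ 1`, the others `≤ 0`. -/
def memAminus {d : ℕ} (α : Fin d → ℝ) : Prop :=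
  (∑ k, α k = 1) ∧ ∃ k, 1 ≤ α k ∧ ∀ l, l ≠ k → α l ≤ 0

/-- Membership in `B₋`: entries summing to `0`, one entry `≥ 0`, the others `≤ 0`. -/
def memBminus {d : ℕ} (β : Fin d → ℝ) : Prop :=
  (∑ k, β k = 0) ∧ ∃ k, 0 ≤ β k ∧ ∀ l, l ≠ k → β l ≤ 0

/-- `α` is none of the standard basis vectors `e₁, …, e_d`. -/
def notBasis {d : ℕ} (α : Fin d → ℝ) : Prop := ∀ k, α ≠ Pi.single k 1

/-- ℓ¹-distance of two vectors, padding with zeros to a common length. -/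
def l1PadDist {m n : ℕ} (p : Fin m → ℝ) (q : Fin n → ℝ) : ℝ :=
  ∑ i : Fin (max m n),
    |(if h : (i : ℕ) < m then p ⟨(i : ℕ), h⟩ else 0) -
      (if h : (i : ℕ) < n then q ⟨(i : ℕ), h⟩ else 0)|

/-- Index type of the direct sum `⨁_{s=0}^{n-1} p^{⊗(n-1-s)} ⊗ q^{⊗s}`. -/
abbrev TrickIdx (m m' n : ℕ) : Type :=
  Σ s : Fin n, (Fin (n - 1 - (s : ℕ)) → Fin m) × (Fin (s : ℕ) → Fin m')

/-- The standard catalyst `(1/n) ⨁_{s=0}^{n-1} p^{⊗(n-1-s)} ⊗ q^{⊗s}`. -/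
def trick {m m' : ℕ} (p : Fin m → ℝ) (q : Fin m' → ℝ) (n : ℕ) : TrickIdx m m' n → ℝ :=
  fun x => (1 / (n : ℝ)) * (kpow p (n - 1 - (x.1 : ℕ)) x.2.1 * kpow q (x.1 : ℕ) x.2.2)

/-- A valid tuple: nonnegative entries and common support across the tuple. -/
def TupOK {d n : ℕ} (P : Fin d → Fin n → ℝ) : Prop :=
  (∀ k i, 0 ≤ P k i) ∧ ∀ k l i, P k i ≠ 0 ↔ P l i ≠ 0

/-- Matrix majorization of tuples: a single stochastic matrix carrying each column
of `P` to the corresponding column of `Q`. -/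
def TupMaj {d m n : ℕ} (P : Fin d → Fin m → ℝ) (Q : Fin d → Fin n → ℝ) : Prop :=
  ∃ T : Fin n → Fin m → ℝ, IsStochastic T ∧ ∀ k, matVec T (P k) = Q k

/-!
A family of tuples `(p_i⁽ᵏ⁾)_k` with positive entries is encoded as the element `∑ i, X (log p_i)`
of the group algebra `ℝ[ℝᵈ]`, in which Kronecker products become products and direct sums become
sums. By Blackwell's theorem, matrix majorization is the order given by the cone dual to the
sublinear functions on `ℝᵈ`. Let `f` and `g` be the encodings of `P` and `Q`. Since
`f ^ n - g ^ n = r * (f - g)` for `r = ∑ s < n, f ^ (n - 1 - s) * g ^ s`, and `r` is `n` times the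
encoding of the catalyst, it suffices that `f ^ n - g ^ n` lies in this cone for large `n`.

A separation argument in the field of fractions yields a nonzero `r ≥ 0` with `r * x` in the cone,
provided `x` is positive under all extreme states, which are multiplicative. These states turn out
to be the monotone quantities behind the divergences: the sums `∑ i, ∏ k, (p_i⁽ᵏ⁾) ^ α k` for
`D_α`, derivations at the basis vectors `e_k` for the Kullback–Leibler divergences, and states at
infinity for `D^T_β`. Applied to `f - g`, this gives `θ < 1` such that `r * (θ (f - 1) - (g - 1))`
lies in the cone. With this uniform gap the states are positive even on `f ^ K - g ^ (K + 1)` for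
large `K`, and the surplus factor `g` compensates for `r` in high powers.
-/

namespace CatalyticMajorization

open Filter Topology

universe u

/-! ### Pure states on an ordered module over a commutative algebra -/

lemma exists_extremePoint_isMinOn {E : Type*} [AddCommGroup E] [Module ℝ E] [TopologicalSpace E]
    [T2Space E] [IsTopologicalAddGroup E] [ContinuousSMul ℝ E] [LocallyConvexSpace ℝ E]
    {s : Set E} (hs : IsCompact s) (hne : s.Nonempty) (l : E →L[ℝ] ℝ) :
    ∃ x ∈ s.extremePoints ℝ, IsMinOn l s x := by
  have hexposed : IsExposed ℝ s ((-l).toExposed s) :=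
    ContinuousLinearMap.toExposed.isExposed
  obtain ⟨x₀, hx₀, hmin⟩ := hs.exists_isMinOn hne l.continuous.continuousOn
  have hface : ((-l).toExposed s).Nonempty :=
    ⟨x₀, hx₀, fun y hy => neg_le_neg (isMinOn_iff.1 hmin y hy)⟩
  obtain ⟨x, hx⟩ := (hexposed.isCompact hs).extremePoints_nonempty hface
  exact ⟨x, hexposed.isExtreme.extremePoints_subset_extremePoints hx,
    fun y hy => neg_le_neg_iff.1 (hx.1.2 y hy)⟩

/-- A convex cone in a commutative real algebra `K` with a distinguished element `unit`, stable
under multiplication by the submonoid `pos`.  The cone induces the vector preorder of the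
Vergleichsstellensatz; `unit` serves as its order unit on the submodule `bounded`. -/
structure UnitalCone (K : Type*) [CommRing K] [Algebra ℝ K] where
  pos : Submonoid K
  cone : PointedCone ℝ K
  unit : K
  unit_mem : unit ∈ cone
  mul_mem_cone : ∀ {b x}, b ∈ pos → x ∈ cone → b * x ∈ cone

namespace UnitalCone

variable {K : Type*} [CommRing K] [Algebra ℝ K] (S : UnitalCone K)

lemma smul_unit_sub_mem_of_le {x : K} {M N : ℝ} (hMN : M ≤ N) (hx : M • S.unit - x ∈ S.cone) :
    N • S.unit - x ∈ S.cone := by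
  have h := S.cone.add_mem hx (S.cone.smul_mem (sub_nonneg.2 hMN) S.unit_mem)
  convert h using 1
  module

/-- The elements lying between two real multiples of the order unit. -/
def bounded : Submodule ℝ K where
  carrier := {x | ∃ M : ℝ, 0 ≤ M ∧ M • S.unit - x ∈ S.cone ∧ M • S.unit + x ∈ S.cone}
  zero_mem' := ⟨0, le_rfl, by simp, by simp⟩
  add_mem' := by
    rintro x y ⟨M, hM, hMx, hMx'⟩ ⟨N, hN, hNy, hNy'⟩
    refine ⟨M + N, add_nonneg hM hN, ?_, ?_⟩
    · convert S.cone.add_mem hMx hNy using 1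
      module
    · convert S.cone.add_mem hMx' hNy' using 1
      module
  smul_mem' := by
    rintro c x ⟨M, hM, hMx, hMx'⟩
    refine ⟨|c| * M, by positivity, ?_⟩
    rcases abs_cases c with ⟨hc, h0⟩ | ⟨hc, h0⟩ <;> rw [hc]
    · constructor
      · convert S.cone.smul_mem h0 hMx using 1
        module
      · convert S.cone.smul_mem h0 hMx' using 1
        module
    · have h0' : 0 ≤ -c := neg_nonneg.2 h0.le
      constructor
      · convert S.cone.smul_mem h0' hMx' using 1
        module
      · convert S.cone.smul_mem h0' hMx using 1
        module

lemma mem_bounded_of_mem_of_le {x : K} {M : ℝ} (hx : x ∈ S.cone) (hM : M • S.unit - x ∈ S.cone) :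
    x ∈ S.bounded :=
  ⟨max M 0, le_max_right _ _, S.smul_unit_sub_mem_of_le (le_max_left _ _) hM,
    S.cone.add_mem (S.cone.smul_mem (le_max_right _ _) S.unit_mem) hx⟩

lemma unit_mem_bounded : S.unit ∈ S.bounded :=
  S.mem_bounded_of_mem_of_le (M := 1) S.unit_mem (by simp)

lemma mul_mem_bounded {b x : K} (hb : b ∈ S.pos) (hb' : 1 - b ∈ S.pos) (hx : x ∈ S.bounded) :
    b * x ∈ S.bounded := by
  obtain ⟨M, hM, h₁, h₂⟩ := hx
  have hslack := S.cone.smul_mem hM (S.mul_mem_cone hb' S.unit_mem)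
  refine ⟨M, hM, ?_, ?_⟩
  · convert S.cone.add_mem (S.mul_mem_cone hb h₁) hslack using 1
    simp only [Algebra.smul_def]
    ring
  · convert S.cone.add_mem (S.mul_mem_cone hb h₂) hslack using 1
    simp only [Algebra.smul_def]
    ring

/-- The order unit as an element of `bounded`. -/
def boundedUnit : S.bounded := ⟨S.unit, S.unit_mem_bounded⟩

/-- Positivity of a functional on the bounded elements with respect to the cone. -/
def IsPositive (φ : S.bounded →ₗ[ℝ] ℝ) : Prop := ∀ x : S.bounded, (x : K) ∈ S.cone → 0 ≤ φ x

variable {S} in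
lemma IsPositive.abs_le {φ : S.bounded →ₗ[ℝ] ℝ} (hφ : S.IsPositive φ) {x : S.bounded} {M : ℝ}
    (h₁ : M • S.unit - (x : K) ∈ S.cone) (h₂ : M • S.unit + (x : K) ∈ S.cone) :
    |φ x| ≤ M * φ S.boundedUnit := by
  have hsub := hφ (M • S.boundedUnit - x) h₁
  have hadd := hφ (M • S.boundedUnit + x) h₂
  rw [map_sub, map_smul, smul_eq_mul] at hsub
  rw [map_add, map_smul, smul_eq_mul] at hadd
  exact _root_.abs_le.2 ⟨by linarith, by linarith⟩

variable {S} in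
lemma IsPositive.eq_zero {φ : S.bounded →ₗ[ℝ] ℝ} (hφ : S.IsPositive φ)
    (h0 : φ S.boundedUnit = 0) : φ = 0 := by
  ext x
  obtain ⟨M, -, h₁, h₂⟩ := x.2
  have h := hφ.abs_le h₁ h₂
  rw [h0, mul_zero] at h
  exact abs_nonpos_iff.1 h

/-- The normalised positive functionals, as a subset of the product space `S.bounded → ℝ`. -/
def stateSpace : Set (S.bounded → ℝ) :=
  Set.range (DFunLike.coe : (S.bounded →ₗ[ℝ] ℝ) → S.bounded → ℝ) ∩
    {g | (∀ x : S.bounded, (x : K) ∈ S.cone → 0 ≤ g x) ∧ g S.boundedUnit = 1}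

variable {S} in
lemma IsPositive.mem_stateSpace {φ : S.bounded →ₗ[ℝ] ℝ} (hφ : S.IsPositive φ)
    (h1 : φ S.boundedUnit = 1) : ⇑φ ∈ S.stateSpace :=
  ⟨⟨φ, rfl⟩, hφ, h1⟩

lemma isCompact_stateSpace : IsCompact S.stateSpace := by
  choose M _ h₁ h₂ using fun x : S.bounded => x.2
  refine (isCompact_univ_pi fun x => isCompact_Icc (a := -M x) (b := M x)).of_isClosed_subset
    ?_ ?_
  · have hnonneg : IsClosed {g : S.bounded → ℝ | ∀ x : S.bounded, (x : K) ∈ S.cone → 0 ≤ g x} := by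
      simp only [Set.ofPred_forall]
      exact isClosed_iInter fun x => isClosed_iInter fun _ =>
        isClosed_le continuous_const (continuous_apply x)
    exact (LinearMap.isClosed_range_coe _ _ (RingHom.id ℝ)).inter
      (hnonneg.inter (isClosed_eq (continuous_apply _) continuous_const))
  · rintro _ ⟨⟨φ, rfl⟩, hφ, h1⟩ x -
    have h := IsPositive.abs_le hφ (h₁ x) (h₂ x)
    rw [h1, mul_one] at h
    exact abs_le.1 h

variable {S}

lemma smul_eq_of_mem_extremePoints {L φ : S.bounded →ₗ[ℝ] ℝ}
    (hL : ⇑L ∈ S.stateSpace.extremePoints ℝ) (hφ : S.IsPositive φ) (hLφ : S.IsPositive (L - φ)) :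
    φ = φ S.boundedUnit • L := by
  have hL1 : L S.boundedUnit = 1 := hL.1.2.2
  have hrest : (L - φ) S.boundedUnit = 1 - φ S.boundedUnit := by
    rw [LinearMap.sub_apply, hL1]
  set t := φ S.boundedUnit
  have ht0 : 0 ≤ t := hφ _ S.unit_mem
  have ht1 : 0 ≤ 1 - t := hrest ▸ hLφ _ S.unit_mem
  rcases ht0.eq_or_lt with h0 | ht0
  · rw [← h0, zero_smul]
    exact hφ.eq_zero h0.symm
  rcases ht1.eq_or_lt with h1 | ht1
  · have hLeq : L = φ := sub_eq_zero.1 (hLφ.eq_zero (hrest.trans h1.symm))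
    rw [hLeq, ← sub_eq_zero.1 h1.symm, one_smul]
  have hstate {ψ : S.bounded →ₗ[ℝ] ℝ} {s : ℝ} (hψ : S.IsPositive ψ) (hs : 0 < s)
      (hψs : ψ S.boundedUnit = s) : ⇑(s⁻¹ • ψ) ∈ S.stateSpace :=
    IsPositive.mem_stateSpace (fun x hx => mul_nonneg (inv_nonneg.2 hs.le) (hψ x hx))
      (by simp [hψs, hs.ne'])
  have hL' : ⇑(t⁻¹ • φ) = ⇑L := hL.2 (hstate hφ ht0 rfl) (hstate hLφ ht1 hrest)
    ⟨t, 1 - t, ht0, ht1, by ring, by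
      ext x
      simp only [Pi.add_apply, Pi.smul_apply, LinearMap.smul_apply, LinearMap.sub_apply,
        smul_eq_mul]
      field_simp
      ring⟩
  rw [← DFunLike.coe_injective hL', smul_inv_smul₀ ht0.ne']

lemma map_mul_of_mem_extremePoints {L : S.bounded →ₗ[ℝ] ℝ}
    (hL : ⇑L ∈ S.stateSpace.extremePoints ℝ) {b : K} (hb : b ∈ S.pos) (hb' : 1 - b ∈ S.pos)
    (x : S.bounded) :
    L ⟨b * x, S.mul_mem_bounded hb hb' x.2⟩ =
      L ⟨b * S.unit, S.mul_mem_bounded hb hb' S.unit_mem_bounded⟩ * L x := by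
  let mulB : S.bounded →ₗ[ℝ] S.bounded :=
    (LinearMap.mulLeft ℝ b).restrict fun y hy => S.mul_mem_bounded hb hb' hy
  have hφ : S.IsPositive (L ∘ₗ mulB) := fun y hy => hL.1.2.1 _ (S.mul_mem_cone hb hy)
  have hLφ : S.IsPositive (L - L ∘ₗ mulB) := fun y hy => by
    have h := hL.1.2.1 (y - mulB y) (by
      have hy' := S.mul_mem_cone hb' hy
      rwa [sub_mul, one_mul] at hy')
    rwa [map_sub] at h
  exact LinearMap.congr_fun (smul_eq_of_mem_extremePoints hL hφ hLφ) x

lemma neg_unit_notMem_cone {y : S.bounded} (hy : (y : K) ∉ S.cone) : -S.unit ∉ S.cone := by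
  intro h
  obtain ⟨M, hM, -, hMy⟩ := y.2
  apply hy
  convert S.cone.add_mem hMy (S.cone.smul_mem hM h) using 1
  module

lemma nonneg_of_smul_unit_add_mem {y : S.bounded} (hy : (y : K) ∉ S.cone) {r t : ℝ} (ht : 0 ≤ t)
    (h : r • S.unit + t • (y : K) ∈ S.cone) : 0 ≤ r := by
  by_contra! hr
  rcases ht.eq_or_lt with rfl | ht
  · apply neg_unit_notMem_cone hy
    convert S.cone.smul_mem (inv_nonneg.2 (neg_nonneg.2 hr.le)) h using 1
    rw [zero_smul, add_zero, smul_smul, inv_neg, neg_mul, inv_mul_cancel₀ hr.ne, neg_one_smul]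
  · apply hy
    have hty : t • (y : K) ∈ S.cone := by
      convert S.cone.add_mem h (S.cone.smul_mem (neg_nonneg.2 hr.le) S.unit_mem) using 1
      module
    convert S.cone.smul_mem (inv_nonneg.2 ht.le) hty using 1
    rw [inv_smul_smul₀ ht.ne']

lemma exists_state_apply_nonpos {y : S.bounded} (hy : (y : K) ∉ S.cone) :
    ∃ φ : S.bounded →ₗ[ℝ] ℝ, ⇑φ ∈ S.stateSpace ∧ φ y ≤ 0 := by
  let c : PointedCone ℝ S.bounded :=
    { carrier := {x | ∃ t : ℝ, 0 ≤ t ∧ (x : K) + t • (y : K) ∈ S.cone}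
      zero_mem' := ⟨0, le_rfl, by simp⟩
      add_mem' := by
        rintro a b ⟨t, ht, ha⟩ ⟨s, hs, hb⟩
        refine ⟨t + s, add_nonneg ht hs, ?_⟩
        convert S.cone.add_mem ha hb using 1
        simp only [Submodule.coe_add]
        module
      smul_mem' := by
        rintro ⟨r, hr⟩ a ⟨t, ht, ha⟩
        refine ⟨r * t, mul_nonneg hr ht, ?_⟩
        convert S.cone.smul_mem hr ha using 1
        rw [smul_add, mul_smul]
        rfl }
  have hu : S.boundedUnit ≠ 0 := fun h => neg_unit_notMem_cone hy <| by
    rw [show S.unit = 0 from congrArg Subtype.val h, neg_zero]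
    exact S.cone.zero_mem
  obtain ⟨φ, hext, hpos⟩ := riesz_extension c (LinearPMap.mkSpanSingleton S.boundedUnit (1 : ℝ) hu)
    (by
      rintro ⟨x, hx⟩ ⟨t, ht, h⟩
      obtain ⟨r, rfl⟩ := Submodule.mem_span_singleton.1 hx
      have heval :
          LinearPMap.mkSpanSingleton S.boundedUnit (1 : ℝ) hu ⟨r • S.boundedUnit, hx⟩ = r :=
        (LinearPMap.mkSpanSingleton'_apply ..).trans (mul_one r)
      exact (nonneg_of_smul_unit_add_mem hy ht h).trans_eq heval.symm)
    (by
      intro x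
      obtain ⟨M, -, -, h⟩ := x.2
      refine ⟨⟨M • S.boundedUnit, Submodule.mem_span_singleton.2 ⟨M, rfl⟩⟩, 0, le_rfl, ?_⟩
      rwa [zero_smul, add_zero])
  have h1 : φ S.boundedUnit = 1 :=
    (hext ⟨_, Submodule.mem_span_singleton_self _⟩).trans
      (LinearPMap.mkSpanSingleton_apply ℝ ℝ hu 1)
  have hφ : S.IsPositive φ := fun x hx => hpos x ⟨0, le_rfl, by simpa using hx⟩
  have hy0 := hpos (-y) ⟨1, zero_le_one, by simp⟩
  rw [map_neg] at hy0
  exact ⟨φ, hφ.mem_stateSpace h1, neg_nonneg.1 hy0⟩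

variable (S) in
/-- Functionals that restrict to a multiplicative state on `S.bounded`.  They live on all of `K`,
with unconstrained values off `S.bounded`, to avoid carrying membership proofs. -/
structure IsState (L : K →ₗ[ℝ] ℝ) : Prop where
  map_unit : L S.unit = 1
  nonneg : ∀ x ∈ S.cone, x ∈ S.bounded → 0 ≤ L x
  map_mul : ∀ b ∈ S.pos, 1 - b ∈ S.pos → ∀ x ∈ S.bounded, L (b * x) = L (b * S.unit) * L x

lemma exists_isState_of_mem_extremePoints {φ : S.bounded →ₗ[ℝ] ℝ}
    (hφ : ⇑φ ∈ S.stateSpace.extremePoints ℝ) :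
    ∃ L : K →ₗ[ℝ] ℝ, S.IsState L ∧ ∀ x : S.bounded, L x = φ x := by
  obtain ⟨L, hL⟩ := LinearMap.exists_extend φ
  have hLφ (x : S.bounded) : L x = φ x := LinearMap.congr_fun hL x
  refine ⟨L, ⟨(hLφ S.boundedUnit).trans hφ.1.2.2, fun x hx hxb => ?_, fun b hb hb' x hx => ?_⟩, hLφ⟩
  · exact (hφ.1.2.1 ⟨x, hxb⟩ hx).trans_eq (hLφ ⟨x, hxb⟩).symm
  · have h := map_mul_of_mem_extremePoints hφ hb hb' ⟨x, hx⟩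
    rwa [← hLφ, ← hLφ, ← hLφ] at h

theorem exists_sub_smul_unit_mem_of_forall_isState_pos {y : K} (hy : y ∈ S.bounded)
    (hpos : ∀ L : K →ₗ[ℝ] ℝ, S.IsState L → 0 < L y) :
    ∃ η : ℝ, 0 < η ∧ y - η • S.unit ∈ S.cone := by
  lift y to S.bounded using hy
  rcases S.stateSpace.eq_empty_or_nonempty with hempty | hne
  · refine ⟨1, one_pos, ?_⟩
    by_contra hcon
    obtain ⟨φ, hφ, -⟩ := exists_state_apply_nonpos (y := y - (1 : ℝ) • S.boundedUnit) hcon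
    exact Set.notMem_empty _ (hempty ▸ hφ)
  obtain ⟨_, hext, hmin⟩ := exists_extremePoint_isMinOn S.isCompact_stateSpace hne
    (ContinuousLinearMap.proj y)
  obtain ⟨φ, rfl⟩ := hext.1.1
  obtain ⟨L, hL, hLφ⟩ := exists_isState_of_mem_extremePoints hext
  have hm : 0 < φ y := hLφ y ▸ hpos L hL
  refine ⟨φ y / 2, half_pos hm, ?_⟩
  by_contra hcon
  obtain ⟨ψ, hψ, hψy⟩ := exists_state_apply_nonpos (y := y - (φ y / 2) • S.boundedUnit) hcon
  have hle : φ y ≤ ψ y := hmin hψ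
  rw [map_sub, map_smul, hψ.2.2, smul_eq_mul, mul_one] at hψy
  linarith

end UnitalCone

/-! ### The group algebra of tuples and its majorization cone -/

section TupleAlgebra

variable {D : Type*}

/-- The group algebra of `D → ℝ`.  A family of tuples `(p_i⁽ᵏ⁾)_k` with positive entries is encoded
as `∑ i, X (log p_i)`; direct sums become sums and Kronecker products become products. -/
abbrev TupleAlgebra (D : Type*) := AddMonoidAlgebra ℝ (D → ℝ)

/-- The monomial with exponent `v`, encoding a single tuple with entries `exp (v k)`. -/
def X (v : D → ℝ) : TupleAlgebra D := AddMonoidAlgebra.single v 1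

lemma X_zero : X (0 : D → ℝ) = 1 := rfl

lemma X_add (v w : D → ℝ) : X (v + w) = X v * X w := by
  simp [X, AddMonoidAlgebra.single_mul_single]

lemma X_nsmul (n : ℕ) (v : D → ℝ) : X (n • v) = X v ^ n := by
  simp [X, AddMonoidAlgebra.single_pow]

lemma X_sum {ι : Type*} (s : Finset ι) (v : ι → D → ℝ) : X (∑ i ∈ s, v i) = ∏ i ∈ s, X (v i) :=
  map_prod (AddMonoidAlgebra.of ℝ (D → ℝ)) (fun i => Multiplicative.ofAdd (v i)) s

lemma X_mul_X_neg (v : D → ℝ) : X v * X (-v) = 1 := by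
  rw [← X_add, add_neg_cancel, X_zero]

lemma coeff_X (v : D → ℝ) : (X v).coeff = Finsupp.single v 1 := rfl

lemma eq_sum_smul_X (x : TupleAlgebra D) : x = ∑ v ∈ x.coeff.support, x.coeff v • X v := by
  conv_lhs => rw [← AddMonoidAlgebra.sum_coeff_single x]
  exact Finset.sum_congr rfl fun v _ => by simp [X]

lemma linearMap_ext_X {M : Type*} [AddCommMonoid M] [Module ℝ M] {f g : TupleAlgebra D →ₗ[ℝ] M}
    (h : ∀ v, f (X v) = g (X v)) : f = g :=
  AddMonoidAlgebra.lhom_ext' fun v => LinearMap.ext_ring (h v)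

/-- The linear functional `X v ↦ φ (exp v)`. -/
def pairing (φ : (D → ℝ) → ℝ) : TupleAlgebra D →ₗ[ℝ] ℝ :=
  Finsupp.linearCombination ℝ (fun v => φ fun k => Real.exp (v k)) ∘ₗ
    (AddMonoidAlgebra.coeffLinearEquiv ℝ).toLinearMap

@[simp] lemma pairing_X (φ : (D → ℝ) → ℝ) (v : D → ℝ) :
    pairing φ (X v) = φ fun k => Real.exp (v k) := by
  simp [pairing, AddMonoidAlgebra.coeffLinearEquiv, coeff_X]

/-- The algebra homomorphism `X v ↦ exp (v k)`, the total mass of the `k`-th column. -/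
def mass (k : D) : TupleAlgebra D →ₐ[ℝ] ℝ :=
  AddMonoidAlgebra.lift ℝ ℝ (D → ℝ)
    { toFun := fun v => Real.exp (v.toAdd k)
      map_one' := by simp
      map_mul' := fun v w => by simp [Real.exp_add] }

@[simp] lemma mass_X (k : D) (v : D → ℝ) : mass k (X v) = Real.exp (v k) := by
  simp [mass, X, AddMonoidAlgebra.lift_single]

/-- The elements with nonnegative coefficients. -/
def nonneg (D : Type*) : Subsemiring (TupleAlgebra D) where
  carrier := {x | ∀ v, 0 ≤ x.coeff v}
  zero_mem' := fun _ => by simp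
  one_mem' := fun v => by
    classical
    rw [← X_zero, coeff_X, Finsupp.single_apply]
    split_ifs <;> simp
  add_mem' := fun hx hy v => by simpa using add_nonneg (hx v) (hy v)
  mul_mem' := fun {x y} hx hy v => by
    classical
    rw [AddMonoidAlgebra.coeff_mul]
    refine Finset.sum_nonneg fun a _ => Finset.sum_nonneg fun b _ => ?_
    dsimp only
    split_ifs
    · exact mul_nonneg (hx a) (hy b)
    · exact le_rfl

lemma X_mem_nonneg (v : D → ℝ) : X v ∈ nonneg D := fun w => by
  classical
  rw [coeff_X, Finsupp.single_apply]
  split_ifs <;> simp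

lemma smul_mem_nonneg {r : ℝ} {x : TupleAlgebra D} (hr : 0 ≤ r) (hx : x ∈ nonneg D) :
    r • x ∈ nonneg D := fun v => by
  simpa using mul_nonneg hr (hx v)

lemma add_ne_zero_of_mem_nonneg {x y : TupleAlgebra D} (hx : x ∈ nonneg D) (hy : y ∈ nonneg D)
    (h : x ≠ 0) : x + y ≠ 0 := by
  contrapose! h
  ext v
  have hv : x.coeff v + y.coeff v = 0 := by simpa using congrArg (fun z => z.coeff v) h
  simpa using le_antisymm (by linarith [hy v]) (hx v)

lemma mass_pos {x : TupleAlgebra D} (hx : x ∈ nonneg D) (h : x ≠ 0) (k : D) : 0 < mass k x := by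
  rw [eq_sum_smul_X x]
  simp only [map_sum, map_smul, mass_X, smul_eq_mul]
  refine Finset.sum_pos (fun v hv => mul_pos ?_ (Real.exp_pos _)) ?_
  · exact (hx v).lt_of_ne' (Finsupp.mem_support_iff.1 hv)
  · rw [Finsupp.support_nonempty_iff]
    exact fun h0 => h (AddMonoidAlgebra.coeff_injective h0)

/-- The elements with nonnegative coefficients all of whose masses are `1`, such as the encodings of
tuples of probability vectors. -/
def normalized (D : Type*) : Submonoid (TupleAlgebra D) where
  carrier := {x | x ∈ nonneg D ∧ ∀ k, mass k x = 1}
  one_mem' := ⟨one_mem _, fun k => map_one _⟩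
  mul_mem' := fun hx hy => ⟨mul_mem hx.1 hy.1, fun k => by rw [map_mul, hx.2, hy.2, one_mul]⟩

lemma ne_zero_of_mem_normalized [Nonempty D] {x : TupleAlgebra D} (hx : x ∈ normalized D) :
    x ≠ 0 := by
  rintro rfl
  simpa using hx.2 (Classical.arbitrary D)

/-- Subadditive, positively homogeneous functions. -/
structure IsSublinear (φ : (D → ℝ) → ℝ) : Prop where
  map_add_le : ∀ x y, φ (x + y) ≤ φ x + φ y
  map_smul : ∀ (t : ℝ) x, 0 ≤ t → φ (t • x) = t * φ x

lemma IsSublinear.map_sum_le {φ : (D → ℝ) → ℝ} (hφ : IsSublinear φ) {ι : Type*} (s : Finset ι)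
    {c : ι → ℝ} (hc : ∀ i ∈ s, 0 ≤ c i) (x : ι → D → ℝ) :
    φ (∑ i ∈ s, c i • x i) ≤ ∑ i ∈ s, c i * φ (x i) := by
  have h0 : φ 0 = 0 := by simpa using hφ.map_smul 0 0 le_rfl
  refine (Finset.le_sum_of_subadditive φ h0.le hφ.map_add_le s _).trans_eq ?_
  exact Finset.sum_congr rfl fun i hi => hφ.map_smul _ _ (hc i hi)

/-- The cone dual to the sublinear functions.  By Blackwell's theorem, the difference of the
encodings of two tuples lies in it exactly when the first tuple majorizes the second. -/
def majCone (D : Type*) : PointedCone ℝ (TupleAlgebra D) where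
  carrier := {x | ∀ φ, IsSublinear φ → 0 ≤ pairing φ x}
  zero_mem' := fun φ _ => by simp
  add_mem' := fun hx hy φ hφ => by
    rw [map_add]
    exact add_nonneg (hx φ hφ) (hy φ hφ)
  smul_mem' := fun r x hx φ hφ =>
    (mul_nonneg r.2 (hx φ hφ)).trans_eq (map_smul (pairing φ) (r : ℝ) x).symm

lemma X_mul_mem_majCone (v : D → ℝ) {x : TupleAlgebra D} (hx : x ∈ majCone D) :
    X v * x ∈ majCone D := by
  intro φ hφ
  have hshift : pairing φ ∘ₗ LinearMap.mulLeft ℝ (X v) =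
      pairing fun y => φ fun k => Real.exp (v k) * y k :=
    linearMap_ext_X fun w => by
      simp only [LinearMap.comp_apply, LinearMap.mulLeft_apply, ← X_add, pairing_X, Pi.add_apply,
        Real.exp_add]
  refine (hx _ ⟨fun a b => ?_, fun t a ht => ?_⟩).trans_eq (LinearMap.congr_fun hshift x).symm
  · simp only [Pi.add_apply, mul_add]
    exact hφ.map_add_le _ _
  · rw [← hφ.map_smul t _ ht]
    exact congrArg φ (funext fun k => mul_left_comm _ _ _)

lemma mul_mem_majCone {r x : TupleAlgebra D} (hr : r ∈ nonneg D) (hx : x ∈ majCone D) :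
    r * x ∈ majCone D := by
  rw [eq_sum_smul_X r, Finset.sum_mul]
  refine sum_mem fun v _ => ?_
  rw [smul_mul_assoc]
  exact (majCone D).smul_mem (hr v) (X_mul_mem_majCone v hx)

lemma mass_eq_zero_of_mem_majCone {x : TupleAlgebra D} (hx : x ∈ majCone D) (k : D) :
    mass k x = 0 := by
  have hlin (c : ℝ) : 0 ≤ c * mass k x := by
    have hpair : pairing (fun y => c * y k) = c • (mass k).toLinearMap :=
      linearMap_ext_X fun v => by simp
    have h := hx (fun y => c * y k)
      ⟨fun a b => (mul_add _ _ _).le, fun t a _ => mul_left_comm _ _ _⟩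
    rwa [hpair] at h
  linarith [hlin 1, hlin (-1)]

lemma sub_X_mem_majCone_of_mass_eq {h : TupleAlgebra D} (hh : h ∈ nonneg D) (w : D → ℝ)
    (hw : ∀ k, mass k h = Real.exp (w k)) : h - X w ∈ majCone D := by
  intro φ hφ
  rw [map_sub, sub_nonneg, pairing_X]
  have hbarycenter : (fun k => Real.exp (w k)) =
      ∑ v ∈ h.coeff.support, h.coeff v • fun k => Real.exp (v k) := by
    funext k
    rw [← hw k]
    conv_lhs => rw [eq_sum_smul_X h]
    simp
  conv_rhs => rw [eq_sum_smul_X h]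
  simpa only [map_sum, map_smul, pairing_X, smul_eq_mul, hbarycenter] using
    hφ.map_sum_le _ (fun v _ => hh v) _

lemma sub_one_mem_majCone {h : TupleAlgebra D} (hh : h ∈ normalized D) : h - 1 ∈ majCone D := by
  rw [← X_zero]
  exact sub_X_mem_majCone_of_mass_eq hh.1 0 fun k => by simp [hh.2 k]

lemma pairing_X_const {φ : (D → ℝ) → ℝ} (hφ : IsSublinear φ) (c : ℝ) :
    pairing φ (X fun _ => c) = pairing φ (Real.exp c • 1) := by
  rw [map_smul, ← X_zero, pairing_X, pairing_X, smul_eq_mul, ← hφ.map_smul _ _ (Real.exp_pos c).le]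
  exact congrArg φ (funext fun _ => by simp)

lemma X_const_sub_mem_majCone (c : ℝ) : X (fun _ => c) - Real.exp c • 1 ∈ majCone D :=
  fun φ hφ => by rw [map_sub, pairing_X_const hφ, sub_self]

lemma sub_X_const_mem_majCone (c : ℝ) : Real.exp c • 1 - X (fun _ => c) ∈ majCone D :=
  fun φ hφ => by rw [map_sub, pairing_X_const hφ, sub_self]

/-! ### Fractions of tuples -/

/-- The field of fractions of the tuple algebra. -/
abbrev TupleField (D : Type*) := FractionRing (TupleAlgebra D)

/-- The embedding of the tuple algebra into its field of fractions. -/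
abbrev emb : TupleAlgebra D →ₐ[ℝ] TupleField D :=
  IsScalarTower.toAlgHom ℝ (TupleAlgebra D) (TupleField D)

lemma emb_injective : Function.Injective (emb : TupleAlgebra D → TupleField D) :=
  IsFractionRing.injective _ _

lemma emb_ne_zero {s : TupleAlgebra D} (hs : s ≠ 0) : emb s ≠ 0 :=
  (map_ne_zero_iff emb emb_injective).2 hs

/-- The fractions of elements with nonnegative coefficients. -/
def nonnegFractions (D : Type*) : Submonoid (TupleField D) where
  carrier := {b | ∃ r ∈ nonneg D, ∃ s ∈ nonneg D, s ≠ 0 ∧ b = emb r / emb s}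
  one_mem' := ⟨1, one_mem _, 1, one_mem _, one_ne_zero, by simp⟩
  mul_mem' := by
    rintro _ _ ⟨r, hr, s, hs, hs0, rfl⟩ ⟨r', hr', s', hs', hs0', rfl⟩
    exact ⟨r * r', mul_mem hr hr', s * s', mul_mem hs hs', mul_ne_zero hs0 hs0',
      by rw [map_mul, map_mul, div_mul_div_comm]⟩

/-- The fractions with numerator in the majorization cone and denominator with nonnegative
coefficients. -/
def fractionCone (D : Type*) : PointedCone ℝ (TupleField D) where
  carrier := {x | ∃ c ∈ majCone D, ∃ s ∈ nonneg D, s ≠ 0 ∧ x = emb c / emb s}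
  zero_mem' := ⟨0, zero_mem _, 1, one_mem _, one_ne_zero, by simp⟩
  add_mem' := by
    rintro _ _ ⟨c, hc, s, hs, hs0, rfl⟩ ⟨c', hc', s', hs', hs0', rfl⟩
    refine ⟨s' * c + s * c', add_mem (mul_mem_majCone hs' hc) (mul_mem_majCone hs hc'),
      s * s', mul_mem hs hs', mul_ne_zero hs0 hs0', ?_⟩
    rw [div_add_div _ _ (emb_ne_zero hs0) (emb_ne_zero hs0'), map_add, map_mul, map_mul, map_mul,
      mul_comm (emb s')]
  smul_mem' := by
    rintro ⟨r, hr⟩ _ ⟨c, hc, s, hs, hs0, rfl⟩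
    refine ⟨r • c, (majCone D).smul_mem hr hc, s, hs, hs0, ?_⟩
    rw [map_smul, smul_div_assoc]
    rfl

/-- The fraction cone with order unit `e`. -/
def fractionUnitalCone (e : TupleAlgebra D) (he : e ∈ majCone D) : UnitalCone (TupleField D) where
  pos := nonnegFractions D
  cone := fractionCone D
  unit := emb e
  unit_mem := ⟨e, he, 1, one_mem _, one_ne_zero, by simp⟩
  mul_mem_cone := by
    rintro _ _ ⟨r, hr, s, hs, hs0, rfl⟩ ⟨c, hc, s', hs', hs0', rfl⟩
    exact ⟨r * c, mul_mem_majCone hr hc, s * s', mul_mem hs hs', mul_ne_zero hs0 hs0',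
      by rw [map_mul, map_mul, div_mul_div_comm]⟩

lemma div_mem_fractionCone {c s : TupleAlgebra D} (hc : c ∈ majCone D) (hs : s ∈ nonneg D)
    (hs0 : s ≠ 0) : emb c / emb s ∈ fractionCone D :=
  ⟨c, hc, s, hs, hs0, rfl⟩

lemma emb_mem_fractionCone {c : TupleAlgebra D} (hc : c ∈ majCone D) : emb c ∈ fractionCone D := by
  simpa using div_mem_fractionCone hc (one_mem _) one_ne_zero

lemma div_mem_nonnegFractions {r s : TupleAlgebra D} (hr : r ∈ nonneg D) (hs : s ∈ nonneg D)
    (hs0 : s ≠ 0) : emb r / emb s ∈ nonnegFractions D :=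
  ⟨r, hr, s, hs, hs0, rfl⟩

lemma emb_mem_nonnegFractions {r : TupleAlgebra D} (hr : r ∈ nonneg D) :
    emb r ∈ nonnegFractions D := by
  simpa using div_mem_nonnegFractions hr (one_mem _) one_ne_zero

lemma one_sub_div_mem_nonnegFractions {r s : TupleAlgebra D} (hsr : s - r ∈ nonneg D)
    (hs : s ∈ nonneg D) (hs0 : s ≠ 0) : 1 - emb r / emb s ∈ nonnegFractions D := by
  rw [one_sub_div (emb_ne_zero hs0), ← map_sub]
  exact div_mem_nonnegFractions hsr hs hs0

lemma exists_mul_mem_majCone_of_emb_mem {y : TupleAlgebra D} (hy : emb y ∈ fractionCone D) :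
    ∃ s ∈ nonneg D, s ≠ 0 ∧ s * y ∈ majCone D := by
  obtain ⟨c, hc, s, hs, hs0, h⟩ := hy
  rw [eq_div_iff (emb_ne_zero hs0), ← map_mul] at h
  refine ⟨s, hs, hs0, ?_⟩
  rwa [mul_comm, emb_injective h]

end TupleAlgebra

namespace UnitalCone

/-! ### Extending a pure state to fractions -/

variable {K : Type*} [CommRing K] [Algebra ℝ K] {S : UnitalCone K} {L : K →ₗ[ℝ] ℝ}

variable (S L) in
/-- The functional `b ↦ L (b * unit)`, the eigenvalue by which a multiplier `b` acts on a state. -/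
def char : K →ₗ[ℝ] ℝ := L ∘ₗ LinearMap.mulRight ℝ S.unit

lemma char_apply (b : K) : S.char L b = L (b * S.unit) := rfl

namespace IsState

/-- The elements acting on the bounded elements, and on the state through its character. -/
def multipliers (hL : S.IsState L) : Subalgebra ℝ K where
  carrier := {b | ∀ x ∈ S.bounded, b * x ∈ S.bounded ∧ L (b * x) = S.char L b * L x}
  mul_mem' := by
    intro a b ha hb x hx
    obtain ⟨hbx, hLbx⟩ := hb x hx
    obtain ⟨hbu, hLbu⟩ := hb _ S.unit_mem_bounded
    refine ⟨mul_assoc a b x ▸ (ha _ hbx).1, ?_⟩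
    rw [mul_assoc, (ha _ hbx).2, hLbx, char_apply (a * b), mul_assoc a b, (ha _ hbu).2, hLbu,
      hL.map_unit]
    ring
  add_mem' := by
    intro a b ha hb x hx
    refine ⟨add_mul a b x ▸ add_mem (ha x hx).1 (hb x hx).1, ?_⟩
    rw [add_mul, map_add, map_add, (ha x hx).2, (hb x hx).2, add_mul]
  algebraMap_mem' := by
    intro r x hx
    refine ⟨Algebra.smul_def r x ▸ S.bounded.smul_mem r hx, ?_⟩
    rw [char_apply, ← Algebra.smul_def, ← Algebra.smul_def, map_smul, map_smul, hL.map_unit,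
      smul_eq_mul, smul_eq_mul, mul_one]

variable (hL : S.IsState L) {a b x y : K}

lemma mul_mem_bounded (hb : b ∈ hL.multipliers) (hx : x ∈ S.bounded) : b * x ∈ S.bounded :=
  (hb x hx).1

lemma map_multiplier_mul (hb : b ∈ hL.multipliers) (hx : x ∈ S.bounded) :
    L (b * x) = S.char L b * L x :=
  (hb x hx).2

lemma mem_multipliers_of_mem_pos (hb : b ∈ S.pos) (hb' : 1 - b ∈ S.pos) : b ∈ hL.multipliers :=
  fun _ hx => ⟨S.mul_mem_bounded hb hb' hx, hL.map_mul b hb hb' _ hx⟩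

lemma mul_unit_mem_bounded (hb : b ∈ hL.multipliers) : b * S.unit ∈ S.bounded :=
  hL.mul_mem_bounded hb S.unit_mem_bounded

include hL in
lemma char_one : S.char L 1 = 1 := by rw [char_apply, one_mul, hL.map_unit]

lemma char_mul (ha : a ∈ hL.multipliers) (hb : b ∈ hL.multipliers) :
    S.char L (a * b) = S.char L a * S.char L b := by
  rw [char_apply, mul_assoc, hL.map_multiplier_mul ha (hL.mul_unit_mem_bounded hb), char_apply b]

lemma char_pow (ha : a ∈ hL.multipliers) (n : ℕ) : S.char L (a ^ n) = S.char L a ^ n := by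
  induction n with
  | zero => rw [pow_zero, pow_zero, hL.char_one]
  | succ n ih => rw [pow_succ, hL.char_mul (pow_mem ha n) ha, ih, pow_succ]

lemma char_nonneg (hb : b ∈ hL.multipliers) (hpos : b ∈ S.pos) : 0 ≤ S.char L b :=
  hL.nonneg _ (S.mul_mem_cone hpos S.unit_mem) (hL.mul_unit_mem_bounded hb)

lemma char_mul_of_unit_mul_mem (ha : S.unit * a ∈ hL.multipliers) (hx : x ∈ S.bounded) :
    S.char L (a * x) = S.char L (S.unit * a) * L x := by
  rw [← hL.map_multiplier_mul ha hx, char_apply]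
  congr 1
  ring

/-- The positive multipliers with nonzero character. -/
def denominators : Submonoid K where
  carrier := {b | b ∈ hL.multipliers ∧ b ∈ S.pos ∧ S.char L b ≠ 0}
  one_mem' := ⟨one_mem _, one_mem _, hL.char_one ▸ one_ne_zero⟩
  mul_mem' := fun ha hb => ⟨mul_mem ha.1 hb.1, mul_mem ha.2.1 hb.2.1,
    hL.char_mul ha.1 hb.1 ▸ mul_ne_zero ha.2.2 hb.2.2⟩

/-- The elements that become bounded after multiplication by a denominator. -/
def boundedFractions : Submodule ℝ K where
  carrier := {x | ∃ b ∈ hL.denominators, b * x ∈ S.bounded}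
  zero_mem' := ⟨1, one_mem _, by simp⟩
  add_mem' := by
    rintro x y ⟨b, hb, hbx⟩ ⟨c, hc, hcy⟩
    refine ⟨b * c, mul_mem hb hc, ?_⟩
    rw [show b * c * (x + y) = c * (b * x) + b * (c * y) by ring]
    exact add_mem (hL.mul_mem_bounded hc.1 hbx) (hL.mul_mem_bounded hb.1 hcy)
  smul_mem' := by
    rintro r x ⟨b, hb, hbx⟩
    exact ⟨b, hb, mul_smul_comm r b x ▸ S.bounded.smul_mem r hbx⟩

lemma div_char_eq_div_char (ha : a ∈ hL.denominators) (hb : b ∈ hL.denominators)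
    (hax : a * x ∈ S.bounded) (hbx : b * x ∈ S.bounded) :
    L (a * x) / S.char L a = L (b * x) / S.char L b := by
  rw [div_eq_div_iff ha.2.2 hb.2.2, mul_comm, mul_comm _ (S.char L a),
    ← hL.map_multiplier_mul hb.1 hax, ← hL.map_multiplier_mul ha.1 hbx, mul_left_comm]

/-- The functional `x ↦ L (b * x) / char b`, for any denominator `b` with `b * x` bounded. -/
def fractionEval : hL.boundedFractions →ₗ[ℝ] ℝ where
  toFun x := L (x.2.choose * x) / S.char L x.2.choose
  map_add' x y := by
    obtain ⟨hb, hbx⟩ := x.2.choose_spec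
    obtain ⟨hc, hcy⟩ := y.2.choose_spec
    obtain ⟨ha, haxy⟩ := (x + y).2.choose_spec
    set b := x.2.choose
    set c := y.2.choose
    have hcbx := hL.mul_mem_bounded hc.1 hbx
    have hbcy := hL.mul_mem_bounded hb.1 hcy
    have hsplit : b * c * ((x + y : hL.boundedFractions) : K) = c * (b * x) + b * (c * y) := by
      rw [Submodule.coe_add]
      ring
    have hbc := mul_mem hb hc
    rw [hL.div_char_eq_div_char ha hbc haxy (hsplit ▸ add_mem hcbx hbcy), hsplit, map_add,
      hL.map_multiplier_mul hc.1 hbx, hL.map_multiplier_mul hb.1 hcy, hL.char_mul hb.1 hc.1]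
    have hb0 := hb.2.2
    have hc0 := hc.2.2
    field_simp
  map_smul' r x := by
    obtain ⟨hb, hbx⟩ := x.2.choose_spec
    obtain ⟨ha, harx⟩ := (r • x).2.choose_spec
    have hbrx : x.2.choose * ((r • x : hL.boundedFractions) : K) = r • (x.2.choose * (x : K)) :=
      mul_smul_comm r _ _
    rw [hL.div_char_eq_div_char ha hb harx (hbrx ▸ S.bounded.smul_mem r hbx), hbrx, map_smul,
      smul_div_assoc, RingHom.id_apply]

/-- A linear extension of `fractionEval` to all of `K`; arbitrary off the bounded fractions. -/
def extension : K →ₗ[ℝ] ℝ := (LinearMap.exists_extend hL.fractionEval).choose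

lemma extension_apply (hb : b ∈ hL.denominators) (hbx : b * x ∈ S.bounded) :
    hL.extension x = L (b * x) / S.char L b := by
  have hx : x ∈ hL.boundedFractions := ⟨b, hb, hbx⟩
  have hext := LinearMap.congr_fun (LinearMap.exists_extend hL.fractionEval).choose_spec ⟨x, hx⟩
  exact hext.trans (hL.div_char_eq_div_char hx.choose_spec.1 hb hx.choose_spec.2 hbx)

lemma extension_eq_of_mem_bounded (hx : x ∈ S.bounded) : hL.extension x = L x := by
  rw [hL.extension_apply (one_mem _) (by rwa [one_mul]), one_mul, hL.char_one, div_one]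

lemma extension_nonneg (hx : x ∈ hL.boundedFractions) (hcone : x ∈ S.cone) :
    0 ≤ hL.extension x := by
  obtain ⟨b, hb, hbx⟩ := hx
  rw [hL.extension_apply hb hbx]
  exact div_nonneg (hL.nonneg _ (S.mul_mem_cone hb.2.1 hcone) hbx) (hL.char_nonneg hb.1 hb.2.1)

/-- The elements that become multipliers after multiplication by a denominator. -/
def multiplierFractions : Subalgebra ℝ K where
  carrier := {x | ∃ b ∈ hL.denominators, b * x ∈ hL.multipliers}
  mul_mem' := by
    rintro x y ⟨b, hb, hbx⟩ ⟨c, hc, hcy⟩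
    exact ⟨b * c, mul_mem hb hc, mul_mul_mul_comm b x c y ▸ mul_mem hbx hcy⟩
  add_mem' := by
    rintro x y ⟨b, hb, hbx⟩ ⟨c, hc, hcy⟩
    refine ⟨b * c, mul_mem hb hc, ?_⟩
    rw [show b * c * (x + y) = c * (b * x) + b * (c * y) by ring]
    exact add_mem (mul_mem hc.1 hbx) (mul_mem hb.1 hcy)
  algebraMap_mem' := fun r => ⟨1, one_mem _, by rw [one_mul]; exact Subalgebra.algebraMap_mem _ r⟩

lemma mul_unit_mem_boundedFractions (hx : x ∈ hL.multiplierFractions) :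
    x * S.unit ∈ hL.boundedFractions := by
  obtain ⟨b, hb, hbx⟩ := hx
  exact ⟨b, hb, mul_assoc b x S.unit ▸ hL.mul_unit_mem_bounded hbx⟩

lemma mul_mem_boundedFractions (hx : x ∈ hL.multiplierFractions) (hy : y ∈ hL.boundedFractions) :
    x * y ∈ hL.boundedFractions := by
  obtain ⟨b, hb, hbx⟩ := hx
  obtain ⟨c, hc, hcy⟩ := hy
  exact ⟨b * c, mul_mem hb hc, mul_mul_mul_comm b x c y ▸ hL.mul_mem_bounded hbx hcy⟩

lemma extension_mul (hx : x ∈ hL.multiplierFractions) (hy : y ∈ hL.boundedFractions) :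
    hL.extension (x * y) = S.char hL.extension x * hL.extension y := by
  obtain ⟨b, hb, hbx⟩ := hx
  obtain ⟨c, hc, hcy⟩ := hy
  have hbxu : b * (x * S.unit) ∈ S.bounded := mul_assoc b x S.unit ▸ hL.mul_unit_mem_bounded hbx
  have hbcxy : b * c * (x * y) = b * x * (c * y) := mul_mul_mul_comm b c x y
  rw [char_apply, hL.extension_apply (mul_mem hb hc) (hbcxy ▸ hL.mul_mem_bounded hbx hcy),
    hL.extension_apply hb hbxu, hL.extension_apply hc hcy, hbcxy, hL.map_multiplier_mul hbx hcy,
    hL.char_mul hb.1 hc.1, char_apply (b * x), mul_assoc b x, div_mul_div_comm]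

lemma char_extension_one : S.char hL.extension 1 = 1 := by
  rw [char_apply, one_mul, hL.extension_eq_of_mem_bounded S.unit_mem_bounded, hL.map_unit]

lemma char_extension_mul (hx : x ∈ hL.multiplierFractions) (hy : y ∈ hL.multiplierFractions) :
    S.char hL.extension (x * y) = S.char hL.extension x * S.char hL.extension y := by
  rw [char_apply, mul_assoc, hL.extension_mul hx (hL.mul_unit_mem_boundedFractions hy),
    char_apply y]

lemma char_extension_nonneg (hx : x ∈ hL.multiplierFractions) (hpos : x ∈ S.pos) :
    0 ≤ S.char hL.extension x :=
  hL.extension_nonneg (hL.mul_unit_mem_boundedFractions hx) (S.mul_mem_cone hpos S.unit_mem)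

end IsState

end UnitalCone

/-! ### The Vergleichsstellensatz for tuples -/

section Vergleichsstellensatz

open UnitalCone

variable {D : Type*} {f g r s x e : TupleAlgebra D} {he : e ∈ majCone D}
  {L : TupleField D →ₗ[ℝ] ℝ}

lemma exists_eq_sub_of_nonneg (x : TupleAlgebra D) :
    ∃ p ∈ nonneg D, p ≠ 0 ∧ ∃ q ∈ nonneg D, q ≠ 0 ∧ x = p - q := by
  have hpart (c : (D → ℝ) → ℝ) (hc : ∀ v, 0 ≤ c v) :
      ∑ v ∈ x.coeff.support, c v • X v ∈ nonneg D :=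
    sum_mem fun v _ => smul_mem_nonneg (hc v) (X_mem_nonneg v)
  have hpos := hpart (fun v => (x.coeff v)⁺) fun v => posPart_nonneg _
  have hneg := hpart (fun v => (x.coeff v)⁻) fun v => negPart_nonneg _
  refine ⟨_, add_mem (one_mem _) hpos, add_ne_zero_of_mem_nonneg (one_mem _) hpos one_ne_zero,
    _, add_mem (one_mem _) hneg, add_ne_zero_of_mem_nonneg (one_mem _) hneg one_ne_zero, ?_⟩
  rw [add_sub_add_left_eq_sub, ← Finset.sum_sub_distrib]
  simp_rw [← sub_smul, posPart_sub_negPart]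
  exact eq_sum_smul_X x

lemma pow_sub_pow_mem_nonneg (hr : r ∈ nonneg D) (hs : s ∈ nonneg D) (hsr : s - r ∈ nonneg D)
    (n : ℕ) : s ^ n - r ^ n ∈ nonneg D := by
  rw [← (Commute.all s r).geom_sum₂_mul]
  exact mul_mem (sum_mem fun i _ => mul_mem (pow_mem hs _) (pow_mem hr _)) hsr

lemma one_add_X_ne_zero (u : D → ℝ) : 1 + X u ≠ 0 :=
  add_ne_zero_of_mem_nonneg (one_mem _) (X_mem_nonneg u) one_ne_zero

lemma one_add_X_mem_nonneg (u : D → ℝ) : 1 + X u ∈ nonneg D :=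
  add_mem (one_mem _) (X_mem_nonneg u)

lemma one_div_mem_nonnegFractions (hs : s ∈ nonneg D) (hs0 : s ≠ 0) :
    1 / emb s ∈ nonnegFractions D := by
  simpa using div_mem_nonnegFractions (one_mem _) hs hs0

lemma add_sub_two_mem_majCone (hf : f ∈ normalized D) (hg : g ∈ normalized D) :
    f + g - 2 ∈ majCone D := by
  convert add_mem (sub_one_mem_majCone hf) (sub_one_mem_majCone hg) using 1
  ring

/-- The fraction cone with order unit `f + g - 2`. -/
abbrev pairCone (hf : f ∈ normalized D) (hg : g ∈ normalized D) : UnitalCone (TupleField D) :=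
  fractionUnitalCone (f + g - 2) (add_sub_two_mem_majCone hf hg)

lemma map_X_pos (F : TupleAlgebra D →ₐ[ℝ] ℝ) (hF : ∀ v, 0 ≤ F (X v)) (v : D → ℝ) :
    0 < F (X v) := by
  refine (hF v).lt_of_ne' (left_ne_zero_of_mul_eq_one (b := F (X (-v))) ?_)
  rw [← map_mul, X_mul_X_neg, map_one]

/-- The powers of `f` eventually dominate every normalized element. -/
def IsPowerUniversal (f : TupleAlgebra D) : Prop :=
  ∀ h ∈ normalized D, ∀ᶠ n : ℕ in atTop, f ^ n - h ∈ majCone D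

/-- For every `u`, some power `f ^ t` contains a multiple of an element `y` that dominates
`X (t • a + u)`. -/
def TropicallyDominates (f : TupleAlgebra D) (a : D → ℝ) : Prop :=
  ∀ u, ∃ t ≠ 0, ∃ y ∈ nonneg D, ∃ κ : ℝ, 0 < κ ∧ f ^ t - κ • y ∈ nonneg D ∧
    y - X (t • a + u) ∈ majCone D

/-- A positive character `F` and a functional `Φ`, normalized by `Φ e = 1`, which is nonnegative on
the majorization cone and is an `F`-derivation on elements of mass zero.  A generic `F` forces `Φ`
to be a difference quotient of `F` and a mass; if `F` is a mass, then `Φ` is a derivative. -/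
structure IsCharacterPair (e : TupleAlgebra D) (F : TupleAlgebra D →ₐ[ℝ] ℝ)
    (Φ : TupleAlgebra D →ₗ[ℝ] ℝ) : Prop where
  pos : ∀ v, 0 < F (X v)
  map_nonneg : ∀ x ∈ majCone D, 0 ≤ Φ x
  map_mul : ∀ r x, (∀ k, mass k x = 0) → Φ (r * x) = F r * Φ x
  map_unit : Φ e = 1

/-- The sum `1 + f + ⋯ + f ^ m`. -/
def geomSum (f : TupleAlgebra D) (m : ℕ) : TupleAlgebra D := ∑ i ∈ Finset.range (m + 1), f ^ i

lemma geomSum_sub_one_mem_nonneg (hf : f ∈ nonneg D) (m : ℕ) : geomSum f m - 1 ∈ nonneg D := by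
  rw [geomSum, Finset.sum_range_succ', pow_zero, add_sub_cancel_right]
  exact sum_mem fun _ _ => pow_mem hf _

lemma geomSum_mem_nonneg (hf : f ∈ nonneg D) (m : ℕ) : geomSum f m ∈ nonneg D :=
  sum_mem fun _ _ => pow_mem hf _

lemma geomSum_ne_zero (hf : f ∈ nonneg D) (m : ℕ) : geomSum f m ≠ 0 := by
  rw [← add_sub_cancel 1 (geomSum f m)]
  exact add_ne_zero_of_mem_nonneg (one_mem _) (geomSum_sub_one_mem_nonneg hf m) one_ne_zero

lemma geomSum_mul_unit_sub_mem_majCone {m : ℕ} (hf : f ∈ normalized D) (hg : g ∈ normalized D)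
    (h : f ^ (m + 1) - 1 - x ∈ majCone D) : geomSum f m * (f + g - 2) - x ∈ majCone D := by
  have hgeom : geomSum f m * (f - 1) = f ^ (m + 1) - 1 := geom_sum_mul f (m + 1)
  convert add_mem h (mul_mem_majCone (geomSum_mem_nonneg hf.1 m) (sub_one_mem_majCone hg)) using 1
  rw [← hgeom]
  ring

lemma div_geomSum_mem_bounded {m : ℕ} (hf : f ∈ normalized D) (hg : g ∈ normalized D)
    (hx : x ∈ majCone D) (h : f ^ (m + 1) - 1 - x ∈ majCone D) :
    emb x / emb (geomSum f m) ∈ (pairCone hf hg).bounded := by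
  have hs := geomSum_mem_nonneg hf.1 m
  have hs0 := geomSum_ne_zero hf.1 m
  refine (pairCone hf hg).mem_bounded_of_mem_of_le (div_mem_fractionCone hx hs hs0) (M := 1) ?_
  change _ ∈ fractionCone D
  convert div_mem_fractionCone (geomSum_mul_unit_sub_mem_majCone hf hg h) hs hs0 using 1
  rw [map_sub, map_mul, sub_div, mul_div_cancel_left₀ _ (emb_ne_zero hs0), one_smul]
  rfl

lemma div_mem_multipliers (hL : (fractionUnitalCone e he).IsState L) (hr : r ∈ nonneg D)
    (hs : s ∈ nonneg D) (hs0 : s ≠ 0) (hsr : s - r ∈ nonneg D) : emb r / emb s ∈ hL.multipliers :=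
  hL.mem_multipliers_of_mem_pos (div_mem_nonnegFractions hr hs hs0)
    (one_sub_div_mem_nonnegFractions hsr hs hs0)

lemma one_div_mem_multipliers (hL : (fractionUnitalCone e he).IsState L) (hs : s ∈ nonneg D)
    (hs0 : s ≠ 0) (hs1 : s - 1 ∈ nonneg D) : 1 / emb s ∈ hL.multipliers := by
  simpa using div_mem_multipliers hL (one_mem _) hs hs0 hs1

/-- The element `f + g + 1`, which dominates `1`, `f` and `g` coefficientwise. -/
def envelope (f g : TupleAlgebra D) : TupleAlgebra D := f + g + 1

lemma envelope_mem_nonneg (hf : f ∈ nonneg D) (hg : g ∈ nonneg D) : envelope f g ∈ nonneg D :=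
  add_mem (add_mem hf hg) (one_mem _)

lemma envelope_ne_zero (hf : f ∈ nonneg D) (hg : g ∈ nonneg D) : envelope f g ≠ 0 := by
  rw [envelope, add_comm]
  exact add_ne_zero_of_mem_nonneg (one_mem _) (add_mem hf hg) one_ne_zero

lemma envelope_sub_one_mem_nonneg (hf : f ∈ nonneg D) (hg : g ∈ nonneg D) :
    envelope f g - 1 ∈ nonneg D := by
  rw [envelope, add_sub_cancel_right]
  exact add_mem hf hg

lemma envelope_sub_left_mem_nonneg (hg : g ∈ nonneg D) : envelope f g - f ∈ nonneg D := by
  rw [envelope, add_assoc, add_sub_cancel_left]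
  exact add_mem hg (one_mem _)

lemma envelope_sub_mem_nonneg_of_sub_mem (hf : f ∈ nonneg D) (h : g - r ∈ nonneg D) :
    envelope f g - r ∈ nonneg D := by
  convert add_mem (add_mem hf h) (one_mem _) using 1
  rw [envelope]
  ring

lemma unit_div_envelope (hf : f ∈ nonneg D) (hg : g ∈ nonneg D) :
    emb (f + g - 2) / emb (envelope f g) = 1 - (3 : ℝ) • (1 / emb (envelope f g)) := by
  have hunit : f + g - 2 = envelope f g - algebraMap ℝ _ 3 := by
    rw [envelope, map_ofNat]
    ring
  rw [hunit, map_sub, sub_div, div_self (emb_ne_zero (envelope_ne_zero hf hg)), AlgHom.commutes,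
    Algebra.smul_def, mul_one_div]

section State

lemma one_div_one_add_X_mem_multipliers (hL : (fractionUnitalCone e he).IsState L) (u : D → ℝ) :
    1 / emb (1 + X u) ∈ hL.multipliers :=
  one_div_mem_multipliers hL (one_add_X_mem_nonneg u) (one_add_X_ne_zero u)
    (by simpa using X_mem_nonneg u)

lemma X_div_one_add_X_mem_multipliers (hL : (fractionUnitalCone e he).IsState L) (u : D → ℝ) :
    emb (X u) / emb (1 + X u) ∈ hL.multipliers :=
  div_mem_multipliers hL (X_mem_nonneg u) (one_add_X_mem_nonneg u) (one_add_X_ne_zero u) (by simp)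

variable {hf : f ∈ normalized D} {hg : g ∈ normalized D} (hL : (pairCone hf hg).IsState L)
  {u v : D → ℝ}

include hL in
lemma char_X_div_one_add_X_eq_one (hu : (pairCone hf hg).char L (1 / emb (1 + X u)) = 0) :
    (pairCone hf hg).char L (emb (X u) / emb (1 + X u)) = 1 := by
  have hsum : emb (X u) / emb (1 + X u) = 1 - 1 / emb (1 + X u) := by
    rw [one_sub_div (emb_ne_zero (one_add_X_ne_zero u)), map_add, map_one, add_sub_cancel_left]
  rw [hsum, map_sub, hL.char_one, hu, sub_zero]

lemma one_div_envelope_mem_multipliers : 1 / emb (envelope f g) ∈ hL.multipliers :=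
  one_div_mem_multipliers hL (envelope_mem_nonneg hf.1 hg.1) (envelope_ne_zero hf.1 hg.1)
    (envelope_sub_one_mem_nonneg hf.1 hg.1)

lemma div_envelope_mem_multipliers (hr : r ∈ nonneg D) (h : envelope f g - r ∈ nonneg D) :
    emb r / emb (envelope f g) ∈ hL.multipliers :=
  div_mem_multipliers hL hr (envelope_mem_nonneg hf.1 hg.1) (envelope_ne_zero hf.1 hg.1) h

lemma unit_div_envelope_mem_multipliers :
    emb (f + g - 2) / emb (envelope f g) ∈ hL.multipliers := by
  rw [unit_div_envelope hf.1 hg.1]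
  exact sub_mem (one_mem _) (Subalgebra.smul_mem _ (one_div_envelope_mem_multipliers hL) _)

lemma geomSum_div_envelope_pow_mem_multipliers (m : ℕ) :
    emb (geomSum f m) / emb (envelope f g) ^ m ∈ hL.multipliers := by
  have hsum : emb (geomSum f m) / emb (envelope f g) ^ m = ∑ i ∈ Finset.range (m + 1),
      (emb f / emb (envelope f g)) ^ i * (1 / emb (envelope f g)) ^ (m - i) := by
    rw [geomSum, map_sum, Finset.sum_div]
    refine Finset.sum_congr rfl fun i hi => ?_
    rw [div_pow, one_div_pow, mul_one_div, div_div, ← pow_add,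
      Nat.add_sub_cancel' (Finset.mem_range_succ_iff.1 hi), map_pow]
  rw [hsum]
  exact sum_mem fun i _ => mul_mem
    (pow_mem (div_envelope_mem_multipliers hL hf.1 (envelope_sub_left_mem_nonneg hg.1)) _)
    (pow_mem (one_div_envelope_mem_multipliers hL) _)

/-! If some `1 / (1 + X u)` has character zero, the state lives at infinity: elements of the cone
below `f ^ (m + 1)` are negligible against `(f + g + 1) ^ (m + 1) * (1 + X u)`. -/

include hL in
lemma char_div_envelope_pow_eq_zero {m : ℕ}
    (hu : (pairCone hf hg).char L (1 / emb (1 + X u)) = 0) (hx : x ∈ majCone D)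
    (h : f ^ (m + 1) - 1 - x ∈ majCone D) :
    (pairCone hf hg).char L (emb x / (emb (envelope f g) ^ (m + 1) * emb (1 + X u))) = 0 := by
  set σ := emb (envelope f g)
  set w := emb (geomSum f m) / (σ ^ (m + 1) * emb (1 + X u))
  have hs0 : emb (geomSum f m) ≠ 0 := emb_ne_zero (geomSum_ne_zero hf.1 m)
  have hfactor : emb x / (σ ^ (m + 1) * emb (1 + X u)) = w * (emb x / emb (geomSum f m)) := by
    rw [div_mul_div_comm, mul_comm (emb (geomSum f m)), mul_div_mul_right _ _ hs0]
  have hunit : (pairCone hf hg).unit * w =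
      emb (f + g - 2) / σ * (emb (geomSum f m) / σ ^ m) * (1 / emb (1 + X u)) := by
    change emb (f + g - 2) * _ = _
    rw [div_mul_div_comm, div_mul_div_comm, mul_one, mul_div_assoc', pow_succ']
  have hmem := mul_mem (unit_div_envelope_mem_multipliers hL)
    (geomSum_div_envelope_pow_mem_multipliers hL m)
  have hmem' := one_div_one_add_X_mem_multipliers hL u
  rw [hfactor, hL.char_mul_of_unit_mul_mem (hunit ▸ mul_mem hmem hmem')
    (div_geomSum_mem_bounded hf hg hx h), hunit, hL.char_mul hmem hmem', hu, mul_zero, zero_mul]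

lemma char_X_div_envelope_eq_zero (hu : (pairCone hf hg).char L (1 / emb (1 + X u)) = 0)
    (hXv : emb (X v) / emb (envelope f g) ∈ hL.multipliers) (hdom : TropicallyDominates f v) :
    (pairCone hf hg).char L (emb (X v) / emb (envelope f g)) = 0 := by
  obtain ⟨t, ht, y, hy, κ, hκ, hfy, hyX⟩ := hdom u
  obtain ⟨m, rfl⟩ := Nat.exists_eq_succ_of_ne_zero ht
  have hx : κ • (y - X ((m + 1) • v + u)) ∈ majCone D := (majCone D).smul_mem hκ.le hyX
  have hfx : f ^ (m + 1) - 1 - κ • (y - X ((m + 1) • v + u)) ∈ majCone D := by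
    rw [sub_right_comm]
    refine sub_one_mem_majCone ⟨?_, fun k => ?_⟩
    · rw [smul_sub, ← sub_add]
      exact add_mem hfy (smul_mem_nonneg hκ.le (X_mem_nonneg _))
    · rw [map_sub, map_pow, hf.2 k, one_pow, mass_eq_zero_of_mem_majCone hx k, sub_zero]
  have hzero := char_div_envelope_pow_eq_zero hL hu hx hfx
  set σ := envelope f g with hσ
  have hsplit : emb (κ • (y - X ((m + 1) • v + u))) / (emb σ ^ (m + 1) * emb (1 + X u)) =
      emb (κ • y) / emb (σ ^ (m + 1)) * (1 / emb (1 + X u)) -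
        κ • ((emb (X v) / emb σ) ^ (m + 1) * (emb (X u) / emb (1 + X u))) := by
    rw [smul_sub, map_sub, sub_div, X_add, X_nsmul, map_pow, div_mul_div_comm, mul_one, div_pow,
      div_mul_div_comm, map_smul _ κ (_ * _), map_mul, map_pow, smul_div_assoc κ (_ * _)]
  have hσ0 := envelope_mem_nonneg hf.1 hg.1
  have hy' : emb (κ • y) / emb (σ ^ (m + 1)) ∈ hL.multipliers := by
    refine div_mem_multipliers hL (smul_mem_nonneg hκ.le hy) (pow_mem hσ0 _)
      (pow_ne_zero _ (envelope_ne_zero hf.1 hg.1)) ?_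
    rw [← sub_add_sub_cancel _ (f ^ (m + 1))]
    exact add_mem (pow_sub_pow_mem_nonneg hf.1 hσ0 (envelope_sub_left_mem_nonneg hg.1) _) hfy
  rw [hsplit, map_sub, map_smul (_ : TupleField D →ₗ[ℝ] ℝ),
    hL.char_mul hy' (one_div_one_add_X_mem_multipliers hL u), hu, mul_zero, zero_sub,
    hL.char_mul (pow_mem hXv _) (X_div_one_add_X_mem_multipliers hL u),
    char_X_div_one_add_X_eq_one hL hu, mul_one, hL.char_pow hXv, neg_eq_zero, smul_eq_zero] at hzero
  exact eq_zero_of_pow_eq_zero (hzero.resolve_left hκ.ne')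

lemma X_div_envelope_mem_multipliers (hv : v ∈ g.coeff.support) :
    emb (X v) / emb (envelope f g) ∈ hL.multipliers := by
  have hgv : 0 < g.coeff v := (hg.1 v).lt_of_ne' (Finsupp.mem_support_iff.1 hv)
  have hsub : g - g.coeff v • X v ∈ nonneg D := fun w => by
    classical
    have hw := hg.1 w
    rcases eq_or_ne v w with rfl | hne
    · simp [coeff_X]
    · simpa [coeff_X, Finsupp.single_apply, hne] using hw
  have hmem := div_envelope_mem_multipliers hL (smul_mem_nonneg hgv.le (X_mem_nonneg v))
    (envelope_sub_mem_nonneg_of_sub_mem hf.1 hsub)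
  convert Subalgebra.smul_mem _ hmem (g.coeff v)⁻¹ using 1
  rw [map_smul, smul_div_assoc, inv_smul_smul₀ hgv.ne']

include hL in
lemma char_div_envelope_eq_zero (hu : (pairCone hf hg).char L (1 / emb (1 + X u)) = 0)
    (hfg : ∀ v ∈ g.coeff.support, TropicallyDominates f v) :
    (pairCone hf hg).char L (emb g / emb (envelope f g)) = 0 := by
  have hsum : emb g / emb (envelope f g) =
      ∑ v ∈ g.coeff.support, g.coeff v • (emb (X v) / emb (envelope f g)) := by
    simp_rw [← smul_div_assoc, ← map_smul]
    rw [← Finset.sum_div, ← map_sum, ← eq_sum_smul_X]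
  rw [hsum, map_sum]
  refine Finset.sum_eq_zero fun v hv => ?_
  rw [map_smul, char_X_div_envelope_eq_zero hL hu (X_div_envelope_mem_multipliers hL hv)
    (hfg v hv), smul_zero]

include hL in
lemma pos_of_char_one_div_one_add_X_eq_zero
    (hu : (pairCone hf hg).char L (1 / emb (1 + X u)) = 0) (hf0 : TropicallyDominates f 0)
    (hfg : ∀ v ∈ g.coeff.support, TropicallyDominates f v)
    (hbdd : emb (f - g) ∈ (pairCone hf hg).bounded) : 0 < L (emb (f - g)) := by
  have hσ0 : emb (envelope f g) ≠ 0 := emb_ne_zero (envelope_ne_zero hf.1 hg.1)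
  have hone : (pairCone hf hg).char L (1 / emb (envelope f g)) = 0 := by
    have hmem : emb (X 0) / emb (envelope f g) ∈ hL.multipliers := by
      simpa [X_zero] using one_div_envelope_mem_multipliers hL
    simpa [X_zero] using char_X_div_envelope_eq_zero hL hu hmem hf0
  have hunit : (pairCone hf hg).unit * (1 / emb (envelope f g)) =
      1 - (3 : ℝ) • (1 / emb (envelope f g)) :=
    (mul_one_div _ _).trans (unit_div_envelope hf.1 hg.1)
  have hsplit : 1 / emb (envelope f g) * emb (f - g) =
      1 - (2 : ℝ) • (emb g / emb (envelope f g)) - 1 / emb (envelope f g) := by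
    have hsub : f - g = envelope f g - (2 : ℝ) • g - 1 := by
      rw [envelope, two_smul]
      ring
    rw [hsub, map_sub, map_sub, map_smul, map_one, one_div_mul_eq_div, sub_div, sub_div,
      div_self hσ0, smul_div_assoc]
  have hkey := hL.char_mul_of_unit_mul_mem (a := 1 / emb (envelope f g)) (x := emb (f - g))
    (by
      rw [hunit]
      exact sub_mem (one_mem _) (Subalgebra.smul_mem _ (one_div_envelope_mem_multipliers hL) _))
    hbdd
  rw [hunit, hsplit, map_sub, map_sub, map_sub, map_smul (_ : TupleField D →ₗ[ℝ] ℝ),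
    map_smul (_ : TupleField D →ₗ[ℝ] ℝ), hL.char_one, hone,
    char_div_envelope_eq_zero hL hu hfg] at hkey
  simp only [smul_zero, sub_zero, one_mul] at hkey
  exact hkey ▸ one_pos

section Finite

variable (hfin : ∀ u, (pairCone hf hg).char L (1 / emb (1 + X u)) ≠ 0)

include hfin

lemma emb_mem_multiplierFractions (r : TupleAlgebra D) : emb r ∈ hL.multiplierFractions := by
  rw [eq_sum_smul_X r, map_sum]
  refine sum_mem fun u _ => ?_
  rw [map_smul]
  have hden : 1 / emb (1 + X u) ∈ hL.denominators :=
    ⟨one_div_one_add_X_mem_multipliers hL u,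
      one_div_mem_nonnegFractions (one_add_X_mem_nonneg u) (one_add_X_ne_zero u), hfin u⟩
  have hX : emb (X u) ∈ hL.multiplierFractions :=
    ⟨_, hden, (one_div_mul_eq_div _ (emb (X u))).symm ▸ X_div_one_add_X_mem_multipliers hL u⟩
  exact Subalgebra.smul_mem _ hX _

lemma one_div_emb_mem_denominators (hs : s ∈ nonneg D) (hs0 : s ≠ 0) (hs1 : s - 1 ∈ nonneg D) :
    1 / emb s ∈ hL.denominators := by
  have hmem := one_div_mem_multipliers hL hs hs0 hs1
  refine ⟨hmem, one_div_mem_nonnegFractions hs hs0, fun hzero => ?_⟩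
  obtain ⟨b, hb, hbs⟩ := emb_mem_multiplierFractions hL hfin s
  refine hb.2.2 ?_
  rw [← mul_one b, ← mul_one_div_cancel (emb_ne_zero hs0), ← mul_assoc, hL.char_mul hbs hmem,
    hzero, mul_zero]

lemma emb_sub_one_mem_boundedFractions (huniv : IsPowerUniversal f) {p : TupleAlgebra D}
    (hp : p ∈ normalized D) : emb (p - 1) ∈ hL.boundedFractions := by
  obtain ⟨m, hm⟩ := ((tendsto_add_atTop_iff_nat 1).2 tendsto_id |>.eventually (huniv p hp)).exists
  refine ⟨1 / emb (geomSum f m), one_div_emb_mem_denominators hL hfin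
    (geomSum_mem_nonneg hf.1 m) (geomSum_ne_zero hf.1 m) (geomSum_sub_one_mem_nonneg hf.1 m), ?_⟩
  rw [one_div_mul_eq_div]
  refine div_geomSum_mem_bounded hf hg (sub_one_mem_majCone hp) ?_
  rwa [sub_sub_sub_cancel_right]

lemma emb_sub_X_mem_boundedFractions (huniv : IsPowerUniversal f) {p : TupleAlgebra D}
    (hp : p ∈ nonneg D) {w : D → ℝ} (hw : ∀ k, mass k p = Real.exp (w k)) :
    emb (p - X w) ∈ hL.boundedFractions := by
  have hnorm : X (-w) * p ∈ normalized D :=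
    ⟨mul_mem (X_mem_nonneg _) hp, fun k => by simp [hw k, ← Real.exp_add]⟩
  have hfactor : p - X w = X w * (X (-w) * p - 1) := by
    rw [mul_sub, ← mul_assoc, X_mul_X_neg, one_mul, mul_one]
  rw [hfactor, map_mul]
  exact hL.mul_mem_boundedFractions (emb_mem_multiplierFractions hL hfin _)
    (emb_sub_one_mem_boundedFractions hL hfin huniv hnorm)

lemma emb_mem_boundedFractions_of_mass_eq_zero (huniv : IsPowerUniversal f)
    (hx : ∀ k, mass k x = 0) : emb x ∈ hL.boundedFractions := by
  obtain ⟨p, hp, hp0, q, hq, _, rfl⟩ := exists_eq_sub_of_nonneg x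
  have hpw (k : D) : mass k p = Real.exp (Real.log (mass k p)) :=
    (Real.exp_log (mass_pos hp hp0 k)).symm
  have hqw (k : D) : mass k q = Real.exp (Real.log (mass k p)) := by
    rw [← hpw k, ← sub_eq_zero, ← neg_sub, ← map_sub, hx k, neg_zero]
  rw [← sub_sub_sub_cancel_right p q (X fun k => Real.log (mass k p)), map_sub]
  exact sub_mem (emb_sub_X_mem_boundedFractions hL hfin huniv hp hpw)
    (emb_sub_X_mem_boundedFractions hL hfin huniv hq hqw)

lemma exists_isCharacterPair (huniv : IsPowerUniversal f) :
    ∃ F, IsCharacterPair (f + g - 2) F (hL.extension ∘ₗ emb.toLinearMap) := by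
  have hfrac := emb_mem_multiplierFractions hL hfin
  have hmass := fun x hx => emb_mem_boundedFractions_of_mass_eq_zero (x := x) hL hfin huniv hx
  refine ⟨AlgHom.ofLinearMap ((pairCone hf hg).char hL.extension ∘ₗ emb.toLinearMap)
    ?_ fun x y => ?_, fun v => ?_, fun x hx => ?_, fun r x hx => ?_, ?_⟩
  · simpa using hL.char_extension_one
  · simpa using hL.char_extension_mul (hfrac x) (hfrac y)
  · refine map_X_pos _ (fun v => ?_) v
    exact hL.char_extension_nonneg (hfrac (X v)) (emb_mem_nonnegFractions (X_mem_nonneg v))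
  · exact hL.extension_nonneg (hmass x (mass_eq_zero_of_mem_majCone hx)) (emb_mem_fractionCone hx)
  · simpa using hL.extension_mul (hfrac r) (hmass x hx)
  · exact (hL.extension_eq_of_mem_bounded (unit_mem_bounded _)).trans hL.map_unit

end Finite

end State

lemma emb_sub_mem_bounded (hf : f ∈ normalized D) (hg : g ∈ normalized D) :
    emb (f - g) ∈ (pairCone hf hg).bounded := by
  have hf1 := sub_one_mem_majCone hf
  have hg1 := sub_one_mem_majCone hg
  have hbdd (x y : TupleAlgebra D) (hx : x ∈ majCone D) (hy : y ∈ majCone D)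
      (hxy : f + g - 2 - x = y) : emb x ∈ (pairCone hf hg).bounded := by
    refine (pairCone hf hg).mem_bounded_of_mem_of_le (M := 1) (emb_mem_fractionCone hx) ?_
    have hmem := emb_mem_fractionCone hy
    rwa [← hxy, map_sub, ← one_smul ℝ (emb (f + g - 2))] at hmem
  rw [← sub_sub_sub_cancel_right f g 1, map_sub]
  exact sub_mem (hbdd _ _ hf1 hg1 (by ring)) (hbdd _ _ hg1 hf1 (by ring))

theorem exists_mul_mem_majCone_of_forall_isCharacterPair_pos (hf : f ∈ normalized D)
    (hg : g ∈ normalized D) (huniv : IsPowerUniversal f) (hf0 : TropicallyDominates f 0)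
    (hfg : ∀ v ∈ g.coeff.support, TropicallyDominates f v)
    (hpos : ∀ F Φ, IsCharacterPair (f + g - 2) F Φ → 0 < Φ (f - g)) :
    ∃ η : ℝ, 0 < η ∧ ∃ h ∈ nonneg D, h ≠ 0 ∧ h * (f - g - η • (f + g - 2)) ∈ majCone D := by
  have hbdd := emb_sub_mem_bounded hf hg
  obtain ⟨η, hη, hmem⟩ :=
    (pairCone hf hg).exists_sub_smul_unit_mem_of_forall_isState_pos hbdd fun L hL => by
      by_cases hfin : ∀ u, (pairCone hf hg).char L (1 / emb (1 + X u)) ≠ 0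
      · obtain ⟨F, hF⟩ := exists_isCharacterPair hL hfin huniv
        exact (hpos F _ hF).trans_eq (hL.extension_eq_of_mem_bounded hbdd)
      · push Not at hfin
        obtain ⟨u, hu⟩ := hfin
        exact pos_of_char_one_div_one_add_X_eq_zero hL hu hf0 hfg hbdd
  refine ⟨η, hη, exists_mul_mem_majCone_of_emb_mem ?_⟩
  rwa [map_sub, map_smul]

end Vergleichsstellensatz

/-! ### Encodings of finite families -/

section Encoding

variable {D ι : Type*} [Fintype ι]

/-- The element encoding the family whose `i`-th tuple has entries `exp (v i k)`. -/
def encode (v : ι → D → ℝ) : TupleAlgebra D := ∑ i, X (v i)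

lemma encode_mem_nonneg (v : ι → D → ℝ) : encode v ∈ nonneg D :=
  sum_mem fun i _ => X_mem_nonneg (v i)

lemma encode_sub_X_mem_nonneg (v : ι → D → ℝ) (i : ι) : encode v - X (v i) ∈ nonneg D := by
  classical
  rw [encode, ← Finset.add_sum_erase _ _ (Finset.mem_univ i), add_sub_cancel_left]
  exact sum_mem fun i _ => X_mem_nonneg (v i)

lemma encode_pow (v : ι → D → ℝ) (n : ℕ) :
    encode v ^ n = encode fun p : Fin n → ι => ∑ t, v (p t) := by
  classical
  simp only [encode, Fintype.sum_pow, X_sum]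

lemma pairing_encode (φ : (D → ℝ) → ℝ) (v : ι → D → ℝ) :
    pairing φ (encode v) = ∑ i, φ fun k => Real.exp (v i k) := by
  simp only [encode, map_sum, pairing_X]

lemma mass_encode (v : ι → D → ℝ) (k : D) : mass k (encode v) = ∑ i, Real.exp (v i k) := by
  simp only [encode, map_sum, mass_X]

lemma encode_pow_sum_sub_X_mem_nonneg (v : ι → D → ℝ) (n : ι → ℕ) :
    encode v ^ (∑ i, n i) - X (∑ i, n i • v i) ∈ nonneg D := by
  classical
  simp only [← Finset.prod_pow_eq_pow_sum, X_sum, X_nsmul]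
  induction (Finset.univ : Finset ι) using Finset.induction_on with
  | empty => simp
  | insert i s hi ih =>
    rw [Finset.prod_insert hi, Finset.prod_insert hi, ← sub_add_sub_cancel _
      (encode v ^ n i * ∏ j ∈ s, X (v j) ^ n j), ← mul_sub, ← sub_mul]
    exact add_mem
      (mul_mem (pow_mem (encode_mem_nonneg v) _) ih)
      (mul_mem (pow_sub_pow_mem_nonneg (X_mem_nonneg _) (encode_mem_nonneg v)
        (encode_sub_X_mem_nonneg v i) _) (prod_mem fun j _ => pow_mem (X_mem_nonneg _) _))

lemma exists_pos_sub_smul_sum_mem_nonneg {f : TupleAlgebra D} (hf : f ∈ nonneg D)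
    {x : ι → TupleAlgebra D} (hx : ∀ i, f - x i ∈ nonneg D) {c : ι → ℝ} (hc : ∀ i, 0 ≤ c i) :
    ∃ κ : ℝ, 0 < κ ∧ f - κ • ∑ i, c i • x i ∈ nonneg D := by
  have hs : 0 ≤ ∑ i, c i := Finset.sum_nonneg fun i _ => hc i
  refine ⟨(1 + ∑ i, c i)⁻¹, by positivity, ?_⟩
  have hdecomp : f - (1 + ∑ i, c i)⁻¹ • ∑ i, c i • x i =
      (1 + ∑ i, c i)⁻¹ • (f + ∑ i, c i • (f - x i)) := by
    simp only [smul_sub, Finset.sum_sub_distrib, ← Finset.sum_smul]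
    rw [← add_sub_assoc, ← one_smul ℝ f, smul_smul, mul_one, ← add_smul, smul_sub,
      inv_smul_smul₀ (by positivity), one_smul]
  rw [hdecomp]
  exact smul_mem_nonneg (by positivity)
    (add_mem hf (sum_mem fun i _ => smul_mem_nonneg (hc i) (hx i)))

lemma eventually_exists_nonneg_mulVec_eq [Fintype D] [DecidableEq D] {A : ℕ → Matrix D D ℝ}
    (hA : Tendsto A atTop (𝓝 1)) {b : D → ℝ} (hb : ∀ i, 0 < b i) :
    ∀ᶠ t in atTop, IsUnit (A t) ∧ ∃ x : D → ℝ, (∀ i, 0 ≤ x i) ∧ (A t).mulVec x = b := by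
  have hdet : Tendsto (fun t => (A t).det) atTop (𝓝 1) := by
    have hcont : Continuous fun M : Matrix D D ℝ => M.det := continuous_id.matrix_det
    simpa [Function.comp_def] using (hcont.tendsto 1).comp hA
  have hadj : Tendsto (fun t => (A t).adjugate.mulVec b) atTop (𝓝 b) := by
    have hcont : Continuous fun M : Matrix D D ℝ => M.adjugate.mulVec b :=
      continuous_id.matrix_adjugate.matrix_mulVec continuous_const
    simpa [Function.comp_def] using (hcont.tendsto 1).comp hA
  have hsol : Tendsto (fun t => (A t).det⁻¹ • (A t).adjugate.mulVec b) atTop (𝓝 b) := by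
    simpa using (hdet.inv₀ one_ne_zero).smul hadj
  filter_upwards [hdet.eventually_ne one_ne_zero, eventually_all.2 fun i =>
    (tendsto_pi_nhds.1 hsol i).eventually (lt_mem_nhds (hb i))] with t ht hpos
  refine ⟨(Matrix.isUnit_iff_isUnit_det _).2 ht.isUnit, _, fun i => (hpos i).le, ?_⟩
  rw [Matrix.mulVec_smul, Matrix.mulVec_mulVec, Matrix.mul_adjugate, Matrix.smul_mulVec,
    Matrix.one_mulVec, inv_smul_smul₀ ht]

/-! ### Tropical domination -/

lemma exists_sum_eq_and_forall_abs_sub_le {w : ι → ℝ} (hw : w ∈ stdSimplex ℝ ι) (t : ℕ) :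
    ∃ n : ι → ℕ, ∑ i, n i = t ∧ ∀ i, |(n i : ℝ) - t * w i| ≤ Fintype.card ι := by
  classical
  have : Nonempty ι := by
    by_contra hne
    simpa [not_nonempty_iff.1 hne] using hw.2
  obtain ⟨i₀⟩ := this
  set m : ι → ℕ := fun i => ⌊(t : ℝ) * w i⌋₊
  have hle (i : ι) : (m i : ℝ) ≤ t * w i := Nat.floor_le (mul_nonneg (Nat.cast_nonneg _) (hw.1 i))
  have hlt (i : ι) : (t : ℝ) * w i < m i + 1 := Nat.lt_floor_add_one _
  have htw : ∑ i, (t : ℝ) * w i = t := by rw [← Finset.mul_sum, hw.2, mul_one]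
  have hsum : ∑ i, (m i : ℝ) ≤ t := (Finset.sum_le_sum fun i _ => hle i).trans_eq htw
  have hsum' : (t : ℝ) ≤ ∑ i, (m i : ℝ) + Fintype.card ι := by
    rw [← htw]
    simpa [Finset.sum_add_distrib] using Finset.sum_le_sum fun i (_ : i ∈ Finset.univ) => (hlt i).le
  have hmt : ∑ i, m i ≤ t := by exact_mod_cast hsum
  have hcard : (1 : ℝ) ≤ Fintype.card ι := by exact_mod_cast Fintype.card_pos_iff.2 ⟨i₀⟩
  -- Round down, and put the total rounding error on a single index.
  refine ⟨fun i => m i + if i = i₀ then t - ∑ i, m i else 0, ?_, fun i => ?_⟩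
  · rw [Finset.sum_add_distrib, Finset.sum_ite_eq' Finset.univ i₀, if_pos (Finset.mem_univ _)]
    omega
  · rw [abs_le]
    dsimp only
    split_ifs
    · push_cast [Nat.cast_sub hmt]
      constructor <;> linarith [hle i, hlt i]
    · push_cast
      constructor <;> linarith [hle i, hlt i]

lemma tendsto_sum_mul_sub_mul_atBot {w z : ι → ℝ} {n : ℕ → ι → ℕ} {C s : ℝ}
    (hn : ∀ t i, |(n t i : ℝ) - t * w i| ≤ C) (hs : ∑ i, w i * z i < s) :
    Tendsto (fun t => ∑ i, n t i * z i - t * s) atTop atBot := by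
  have hbound (t : ℕ) :
      ∑ i, n t i * z i - t * s ≤ ∑ i, C * |z i| - t * (s - ∑ i, w i * z i) := by
    have hsplit : ∑ i, n t i * z i - t * s =
        ∑ i, ((n t i : ℝ) - t * w i) * z i - t * (s - ∑ i, w i * z i) := by
      simp only [sub_mul, mul_sub, Finset.sum_sub_distrib, Finset.mul_sum, mul_assoc]
      ring
    rw [hsplit]
    refine sub_le_sub_right (Finset.sum_le_sum fun i _ => ?_) _
    calc ((n t i : ℝ) - t * w i) * z i ≤ |(n t i : ℝ) - t * w i| * |z i| := by
          rw [← abs_mul]; exact le_abs_self _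
      _ ≤ C * |z i| := by gcongr; exact hn t i
  refine tendsto_atBot_mono hbound (tendsto_atBot_add_const_left _ _ ?_)
  exact tendsto_neg_atTop_atBot.comp
    (tendsto_natCast_atTop_atTop.atTop_mul_const (sub_pos.2 hs))

/-- The point `a` lies in the interior of the tropical (max-plus) convex cone spanned by the
convex hull of the points `v i`. -/
def IsTropicallyInterior (v : ι → D → ℝ) (a : D → ℝ) : Prop :=
  ∀ k, ∃ w ∈ stdSimplex ℝ ι, ∀ l ≠ k, a k - a l < ∑ i, w i * (v i k - v i l)

lemma IsTropicallyInterior.exists_tendsto_one [DecidableEq D] {v : ι → D → ℝ} {a : D → ℝ}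
    (h : IsTropicallyInterior v a) : ∃ n : ℕ → D → ι → ℕ, (∀ t k, ∑ i, n t k i = t) ∧
      Tendsto (fun t => Matrix.of fun j k : D =>
        Real.exp (∑ i, n t k i * (v i j - v i k) - t * (a j - a k))) atTop (𝓝 1) := by
  choose w hw hwa using h
  choose n hnt hn using fun (t : ℕ) k => exists_sum_eq_and_forall_abs_sub_le (hw k) t
  refine ⟨n, hnt, tendsto_pi_nhds.2 fun j => tendsto_pi_nhds.2 fun k => ?_⟩
  rcases eq_or_ne j k with rfl | hjk
  · simp
  · rw [Matrix.one_apply_ne hjk]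
    refine Real.tendsto_exp_atBot.comp (tendsto_sum_mul_sub_mul_atBot (fun t => hn t k) ?_)
    have hneg : ∑ i, w k i * (v i j - v i k) = -∑ i, w k i * (v i k - v i j) := by
      rw [← Finset.sum_neg_distrib]
      exact Finset.sum_congr rfl fun i _ => by ring
    linarith [hwa k j hjk]

theorem IsTropicallyInterior.tropicallyDominates [Finite D] {v : ι → D → ℝ} {a : D → ℝ}
    (h : IsTropicallyInterior v a) : TropicallyDominates (encode v) a := by
  classical
  have := Fintype.ofFinite D
  intro u
  obtain ⟨n, hnt, hn⟩ := h.exists_tendsto_one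
  obtain ⟨t, ⟨-, x, hx0, hx⟩, ht⟩ := ((eventually_exists_nonneg_mulVec_eq hn
    (b := fun k => Real.exp (u k)) fun k => Real.exp_pos _).and (eventually_ne_atTop 0)).exists
  set b : D → D → ℝ := fun k => ∑ i, n t k i • v i
  have hb (k : D) : encode v ^ t - X (b k) ∈ nonneg D := by
    simpa only [hnt] using encode_pow_sum_sub_X_mem_nonneg v (n t k)
  set c : D → ℝ := fun k => x k * Real.exp (t * a k - b k k)
  have hc (k : D) : 0 ≤ c k := mul_nonneg (hx0 k) (Real.exp_pos _).le
  have hy : ∑ k, c k • X (b k) ∈ nonneg D :=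
    sum_mem fun k _ => smul_mem_nonneg (hc k) (X_mem_nonneg _)
  obtain ⟨κ, hκ, hle⟩ :=
    exists_pos_sub_smul_sum_mem_nonneg (pow_mem (encode_mem_nonneg v) t) hb hc
  refine ⟨t, ht, _, hy, κ, hκ, hle, sub_X_mem_majCone_of_mass_eq hy _ fun l => ?_⟩
  have hmul := congrFun hx l
  simp only [Matrix.mulVec, dotProduct, Matrix.of_apply] at hmul
  simp only [map_sum, map_smul, mass_X, smul_eq_mul, Pi.add_apply, nsmul_eq_mul, Pi.mul_apply,
    Pi.natCast_apply]
  rw [Real.exp_add, ← hmul, Finset.mul_sum]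
  refine Finset.sum_congr rfl fun k _ => ?_
  rw [mul_assoc, ← Real.exp_add, mul_left_comm, ← mul_assoc, ← Real.exp_add, mul_comm]
  congr 2
  simp only [b, Finset.sum_apply, nsmul_eq_mul, Pi.mul_apply, Pi.natCast_apply, mul_sub,
    Finset.sum_sub_distrib]
  ring

/-! ### Power universality -/

/-- Adding up the tuples of a family that are assigned by `c` to the same index `j` yields the
`j`-th column of this matrix. -/
def mergeMatrix [DecidableEq D] (v : ι → D → ℝ) (c : ι → D) : Matrix D D ℝ :=
  Matrix.of fun l j => ∑ i with c i = j, Real.exp (v i l)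

lemma mergeMatrix_mulVec_one [Fintype D] [DecidableEq D] (v : ι → D → ℝ) (c : ι → D) :
    (mergeMatrix v c).mulVec 1 = fun l => mass l (encode v) := by
  funext l
  simp only [mergeMatrix, Matrix.mulVec, dotProduct, Matrix.of_apply, Pi.one_apply, mul_one]
  rw [Finset.sum_fiberwise, mass_encode]

lemma sum_mergeMatrix_le_pairing_encode [Fintype D] [DecidableEq D] {φ : (D → ℝ) → ℝ}
    (hφ : IsSublinear φ) (v : ι → D → ℝ) (c : ι → D) :
    ∑ j, φ (fun l => mergeMatrix v c l j) ≤ pairing φ (encode v) := by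
  rw [pairing_encode, ← Finset.sum_fiberwise _ c]
  refine Finset.sum_le_sum fun j _ => ?_
  have hcol : (fun l => mergeMatrix v c l j) =
      ∑ i with c i = j, (1 : ℝ) • fun l => Real.exp (v i l) := by
    funext l
    simp [mergeMatrix]
  rw [hcol]
  simpa using hφ.map_sum_le {i | c i = j} (c := 1) (fun i _ => zero_le_one) _

lemma sum_smul_eq_one_of_mulVec_eq [Fintype D] [DecidableEq D] {v : ι → D → ℝ}
    {h : TupleAlgebra D} (hv : encode v ∈ normalized D) (hh : h ∈ normalized D) {c : ι → D}
    (hM : IsUnit (mergeMatrix v c)) {x : (D → ℝ) → D → ℝ}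
    (hx : ∀ w ∈ h.coeff.support, (mergeMatrix v c).mulVec (x w) = fun l => Real.exp (w l)) :
    ∑ w ∈ h.coeff.support, h.coeff w • x w = 1 := by
  refine Matrix.mulVec_injective_of_isUnit hM ?_
  rw [mergeMatrix_mulVec_one, Matrix.mulVec_sum]
  funext l
  rw [Finset.sum_apply, hv.2, ← hh.2 l]
  conv_rhs => rw [eq_sum_smul_X h]
  simp only [map_sum, map_smul, mass_X, smul_eq_mul]
  refine Finset.sum_congr rfl fun w hw => ?_
  rw [Matrix.mulVec_smul, hx w hw, Pi.smul_apply, smul_eq_mul]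

lemma encode_sub_mem_majCone_of_mulVec_eq [Fintype D] [DecidableEq D] {v : ι → D → ℝ}
    {h : TupleAlgebra D} (hv : encode v ∈ normalized D) (hh : h ∈ normalized D) {c : ι → D}
    (hM : IsUnit (mergeMatrix v c)) {x : (D → ℝ) → D → ℝ}
    (hx0 : ∀ w ∈ h.coeff.support, ∀ j, 0 ≤ x w j)
    (hx : ∀ w ∈ h.coeff.support, (mergeMatrix v c).mulVec (x w) = fun l => Real.exp (w l)) :
    encode v - h ∈ majCone D := by
  intro φ hφ
  rw [map_sub, sub_nonneg]
  have hsum := sum_smul_eq_one_of_mulVec_eq hv hh hM hx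
  calc pairing φ h
      = ∑ w ∈ h.coeff.support, h.coeff w * φ (fun l => Real.exp (w l)) := by
        conv_lhs => rw [eq_sum_smul_X h]
        simp
    _ ≤ ∑ w ∈ h.coeff.support, h.coeff w *
          ∑ j, x w j * φ (fun l => mergeMatrix v c l j) := by
        refine Finset.sum_le_sum fun w hw => mul_le_mul_of_nonneg_left ?_ (hh.1 w)
        refine le_of_eq_of_le (congrArg φ ?_) (hφ.map_sum_le _ (fun j _ => hx0 w hw j) _)
        rw [← hx w hw]
        funext l
        simp [Matrix.mulVec, dotProduct, mul_comm]
    _ = ∑ j, (∑ w ∈ h.coeff.support, h.coeff w • x w) j *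
          φ (fun l => mergeMatrix v c l j) := by
        simp only [Finset.mul_sum, Finset.sum_apply, Pi.smul_apply, smul_eq_mul, Finset.sum_mul]
        rw [Finset.sum_comm]
        simp only [mul_assoc]
    _ = ∑ j, φ (fun l => mergeMatrix v c l j) := by simp only [hsum, Pi.one_apply, one_mul]
    _ ≤ pairing φ (encode v) := sum_mergeMatrix_le_pairing_encode hφ v c

lemma exp_half_add_lt {x y : ℝ} (hxy : x ≠ y) :
    Real.exp ((x + y) / 2) < (Real.exp x + Real.exp y) / 2 := by
  have h := strictConvexOn_exp.2 (Set.mem_univ x) (Set.mem_univ y) hxy one_half_pos one_half_pos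
    (add_halves 1)
  simp only [smul_eq_mul, ← mul_add] at h
  rwa [div_eq_inv_mul, div_eq_inv_mul, ← one_div]

lemma exp_half_add_le (x y : ℝ) : Real.exp ((x + y) / 2) ≤ (Real.exp x + Real.exp y) / 2 := by
  rcases eq_or_ne x y with rfl | hxy
  · simp
  · exact (exp_half_add_lt hxy).le

lemma sum_exp_half_add_lt_one {v : ι → D → ℝ} (hv : encode v ∈ normalized D) {k l : D}
    (hkl : ∃ i, v i k ≠ v i l) : ∑ i, Real.exp ((v i k + v i l) / 2) < 1 := by
  obtain ⟨i₀, hi₀⟩ := hkl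
  have hsum (k : D) : ∑ i, Real.exp (v i k) = 1 := by rw [← mass_encode, hv.2]
  calc ∑ i, Real.exp ((v i k + v i l) / 2)
      < ∑ i, (Real.exp (v i k) + Real.exp (v i l)) / 2 :=
        Finset.sum_lt_sum (fun i _ => exp_half_add_le _ _)
          ⟨i₀, Finset.mem_univ _, exp_half_add_lt hi₀⟩
    _ = 1 := by rw [← Finset.sum_div, Finset.sum_add_distrib, hsum, hsum]; norm_num

-- The largest coordinate of the log-vector is a maximum-likelihood guess of the index `j`.
lemma mergeMatrix_pow_le [DecidableEq D] (v : ι → D → ℝ) {n : ℕ} {c : (Fin n → ι) → D}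
    (hc : ∀ p l, ∑ t, v (p t) l ≤ ∑ t, v (p t) (c p)) (l j : D) :
    mergeMatrix (fun p : Fin n → ι => ∑ t, v (p t)) c l j ≤
      (∑ i, Real.exp ((v i l + v i j) / 2)) ^ n := by
  classical
  rw [Fintype.sum_pow]
  refine (Finset.sum_le_sum fun p hp => ?_).trans (Finset.sum_le_sum_of_subset_of_nonneg
    (Finset.filter_subset _ _) fun p _ _ => by positivity)
  obtain rfl : c p = j := (Finset.mem_filter.1 hp).2
  rw [← Real.exp_sum, ← Finset.sum_div, Finset.sum_add_distrib]
  exact Real.exp_le_exp.2 (by simpa using by linarith [hc p l])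

lemma tendsto_mergeMatrix_pow [Finite D] [DecidableEq D] {v : ι → D → ℝ}
    (hv : encode v ∈ normalized D) (hne : ∀ k l, k ≠ l → ∃ i, v i k ≠ v i l)
    {c : (n : ℕ) → (Fin n → ι) → D}
    (hc : ∀ n p l, ∑ t, v (p t) l ≤ ∑ t, v (p t) (c n p)) :
    Tendsto (fun n => mergeMatrix (fun p : Fin n → ι => ∑ t, v (p t)) (c n)) atTop (𝓝 1) := by
  have := Fintype.ofFinite D
  set M := fun n => mergeMatrix (fun p : Fin n → ι => ∑ t, v (p t)) (c n)
  have hoff (l j : D) (hlj : l ≠ j) : Tendsto (fun n => M n l j) atTop (𝓝 0) :=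
    squeeze_zero (fun n => Finset.sum_nonneg fun p _ => (Real.exp_pos _).le)
      (fun n => mergeMatrix_pow_le v (hc n) l j)
      (tendsto_pow_atTop_nhds_zero_of_lt_one (Finset.sum_nonneg fun i _ => (Real.exp_pos _).le)
        (sum_exp_half_add_lt_one hv (hne l j hlj)))
  refine tendsto_pi_nhds.2 fun l => tendsto_pi_nhds.2 fun j => ?_
  rcases eq_or_ne l j with rfl | hlj
  · have hdiag (n : ℕ) : M n l l = 1 - ∑ j ∈ Finset.univ.erase l, M n l j := by
      have hrow := congrFun
        (mergeMatrix_mulVec_one (fun p : Fin n → ι => ∑ t, v (p t)) (c n)) l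
      rw [← encode_pow, (pow_mem hv n).2] at hrow
      rw [eq_sub_iff_add_eq, Finset.add_sum_erase _ _ (Finset.mem_univ l)]
      simpa [Matrix.mulVec, dotProduct] using hrow
    rw [Matrix.one_apply_eq, tendsto_congr hdiag]
    simpa only [Finset.sum_const_zero, sub_zero] using (tendsto_finsetSum (Finset.univ.erase l)
      fun j hj => hoff l j (Finset.ne_of_mem_erase hj).symm).const_sub 1
  · rw [Matrix.one_apply_ne hlj]
    exact hoff l j hlj

lemma majCone_eq_top_of_isEmpty [IsEmpty D] : majCone D = ⊤ := by
  refine eq_top_iff.2 fun x _ φ hφ => ?_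
  have hzero : pairing φ = 0 := linearMap_ext_X fun v => by
    simpa [Subsingleton.elim (fun k => Real.exp (v k)) 0] using hφ.map_smul 0 0 le_rfl
  simp [hzero]

theorem isPowerUniversal_encode [Finite D] {v : ι → D → ℝ} (hv : encode v ∈ normalized D)
    (hne : ∀ k l, k ≠ l → ∃ i, v i k ≠ v i l) : IsPowerUniversal (encode v) := by
  classical
  have := Fintype.ofFinite D
  intro h hh
  rcases isEmpty_or_nonempty D with hD | hD
  · simp [majCone_eq_top_of_isEmpty]
  choose c hc using fun (n : ℕ) (p : Fin n → ι) => Finite.exists_max fun l => ∑ t, v (p t) l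
  have hM := tendsto_mergeMatrix_pow hv hne hc
  have hsol (w : D → ℝ) := eventually_exists_nonneg_mulVec_eq hM
    (b := fun l => Real.exp (w l)) fun l => Real.exp_pos _
  filter_upwards [hsol 0, (Filter.eventually_all_finset h.coeff.support).2 fun w _ => hsol w]
    with n hunit hn
  choose! x hx0 hx using fun w hw => (hn w hw).2
  have hvn := pow_mem hv n
  rw [encode_pow] at hvn ⊢
  exact encode_sub_mem_majCone_of_mulVec_eq hvn hh hunit.1 hx0 hx

lemma IsPowerUniversal.pow {f : TupleAlgebra D} (hf : IsPowerUniversal f) {m : ℕ} (hm : m ≠ 0) :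
    IsPowerUniversal (f ^ m) := fun h hh => by
  simp only [← pow_mul]
  exact (tendsto_id.const_mul_atTop' (Nat.pos_of_ne_zero hm)).eventually (hf h hh)

end Encoding

/-! ### Blackwell's theorem and the telescoping catalyst -/

section Blackwell

variable {D ι κ : Type*}

lemma isSublinear_iSup [Finite κ] [Nonempty κ] (G : κ → (D → ℝ) →ₗ[ℝ] ℝ) :
    IsSublinear fun x => ⨆ j, G j x := by
  have hle (x : D → ℝ) (j : κ) : G j x ≤ ⨆ j, G j x :=
    le_ciSup (f := fun j => G j x) (Set.finite_range _).bddAbove j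
  refine ⟨fun x y => ciSup_le fun j => ?_, fun t x ht => ?_⟩
  · rw [map_add]
    exact add_le_add (hle x j) (hle y j)
  · simp only [map_smul, smul_eq_mul, Real.mul_iSup_of_nonneg ht]

theorem exists_isStochastic_of_forall_isSublinear_sum_le [Fintype ι] [Fintype κ] [Nonempty κ]
    (P : D → ι → ℝ) (Q : D → κ → ℝ)
    (h : ∀ φ, IsSublinear φ → ∑ j, φ (fun k => Q k j) ≤ ∑ i, φ (fun k => P k i)) :
    ∃ T : κ → ι → ℝ, IsStochastic T ∧ ∀ k, matVec T (P k) = Q k := by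
  classical
  set S : Set (ι → κ → ℝ) := Set.univ.pi fun _ => stdSimplex ℝ κ
  set L : (ι → κ → ℝ) → κ → D → ℝ := fun T j k => ∑ i, T i j * P k i
  have hS : IsCompact (L '' S) :=
    (isCompact_univ_pi fun _ => isCompact_stdSimplex ℝ κ).image (by fun_prop)
  have hconv : Convex ℝ (L '' S) := (convex_pi fun _ _ => convex_stdSimplex ℝ κ).is_linear_image
    ⟨fun T T' => by ext; simp [L, add_mul, Finset.sum_add_distrib],
      fun r T => by ext; simp [L, mul_assoc, Finset.mul_sum]⟩
  by_cases hQ : (fun j k => Q k j) ∈ L '' S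
  · obtain ⟨T, hT, hTQ⟩ := hQ
    exact ⟨fun j i => T i j, ⟨fun j i => (hT i trivial).1 j, fun i => (hT i trivial).2⟩,
      fun k => funext fun j => congrFun (congrFun hTQ j) k⟩
  -- The best response to a functional separating `Q` from the image contradicts `h`.
  exfalso
  obtain ⟨F, u, hFu, huF⟩ := geometric_hahn_banach_closed_point hconv hS.isClosed hQ
  set G : κ → (D → ℝ) →ₗ[ℝ] ℝ := fun j => F.toLinearMap ∘ₗ LinearMap.single ℝ (fun _ => D → ℝ) j
  choose c hc using fun i => exists_eq_ciSup_of_finite (f := fun j => G j fun k => P k i)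
  have hbest : L (fun i => Pi.single (c i) 1) = ∑ i, Pi.single (c i) fun k => P k i := by
    funext j k
    simp only [L, Finset.sum_apply, Pi.single_apply]
    exact Finset.sum_congr rfl fun i _ => by split_ifs <;> simp
  have hQsum : F (fun j k => Q k j) = ∑ j, G j fun k => Q k j := by
    conv_lhs => rw [← Finset.univ_sum_single fun j k => Q k j, map_sum]
    rfl
  have hlt : F (L fun i => Pi.single (c i) 1) < F fun j k => Q k j :=
    (hFu _ ⟨_, fun i _ => single_mem_stdSimplex ℝ (c i), rfl⟩).trans huF
  refine hlt.not_ge ?_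
  calc F (fun j k => Q k j) ≤ ∑ j, ⨆ j', G j' fun k => Q k j := by
        rw [hQsum]
        exact Finset.sum_le_sum fun j _ =>
          le_ciSup (f := fun j' => G j' fun k => Q k j) (Set.finite_range _).bddAbove j
    _ ≤ ∑ i, ⨆ j, G j fun k => P k i := h _ (isSublinear_iSup G)
    _ = F (L fun i => Pi.single (c i) 1) := by
        rw [hbest, map_sum]
        exact Finset.sum_congr rfl fun i _ => (hc i).symm

end Blackwell

section LargePowers

variable {D : Type*} {f g h x : TupleAlgebra D}

lemma exists_mem_normalized_mul_mem_majCone (hh : h ∈ nonneg D) (h0 : h ≠ 0)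
    (hx : h * x ∈ majCone D) : ∃ h' ∈ normalized D, h' * x ∈ majCone D := by
  refine ⟨X (fun k => -Real.log (mass k h)) * h, ⟨mul_mem (X_mem_nonneg _) hh, fun k => ?_⟩, ?_⟩
  · rw [map_mul, mass_X, Real.exp_neg, Real.exp_log (mass_pos hh h0 k),
      inv_mul_cancel₀ (mass_pos hh h0 k).ne']
  · rw [mul_assoc]
    exact X_mul_mem_majCone _ hx

lemma mul_pow_sub_pow_mem_majCone (hf : f ∈ nonneg D) (hg : g ∈ nonneg D)
    (hfg : h * (f - g) ∈ majCone D) (n : ℕ) : h * (f ^ n - g ^ n) ∈ majCone D := by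
  rw [← (Commute.all f g).geom_sum₂_mul, mul_left_comm]
  exact mul_mem_majCone (sum_mem fun i _ => mul_mem (pow_mem hf _) (pow_mem hg _)) hfg

theorem eventually_pow_sub_pow_mem_majCone (hf : f ∈ nonneg D) (hg : g ∈ normalized D)
    (huniv : IsPowerUniversal f) (hh : h ∈ nonneg D) (h0 : h ≠ 0) {K : ℕ}
    (hK : h * (f ^ K - g ^ (K + 1)) ∈ majCone D) :
    ∀ᶠ n : ℕ in Filter.atTop, f ^ n - g ^ n ∈ majCone D := by
  obtain ⟨h, hh, hK⟩ := exists_mem_normalized_mul_mem_majCone hh h0 hK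
  obtain ⟨N, hN⟩ := Filter.eventually_atTop.1 (huniv h hh)
  filter_upwards [Filter.eventually_ge_atTop ((K + 1) * (K + N))] with n hn
  set m := n / (K + 1) + 1
  have hgn : n ≤ (K + 1) * m := (Nat.lt_mul_div_succ n K.succ_pos).le
  have hfn : K * m + N ≤ n := by
    have hq : K + N ≤ n / (K + 1) := by
      rwa [Nat.le_div_iff_mul_le K.succ_pos, mul_comm]
    linarith [Nat.mul_div_le n (K + 1), show K * m = K * (n / (K + 1)) + K from rfl,
      add_one_mul K (n / (K + 1))]
  -- `f ^ n ≥ f ^ (K * m) * h ≥ g ^ ((K + 1) * m) * h ≥ g ^ ((K + 1) * m) ≥ g ^ n`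
  have hdominate := mul_mem_majCone (pow_mem hf (K * m)) (hN (n - K * m) (by lia))
  have hcatalyze := mul_pow_sub_pow_mem_majCone (pow_mem hf K) (pow_mem hg.1 (K + 1)) hK m
  have hdiscard := mul_mem_majCone (pow_mem hg.1 ((K + 1) * m)) (sub_one_mem_majCone hh)
  have hshrink := mul_mem_majCone (pow_mem hg.1 n)
    (sub_one_mem_majCone (pow_mem hg ((K + 1) * m - n)))
  rw [mul_sub, ← pow_add, Nat.add_sub_of_le (by lia)] at hdominate
  rw [mul_sub, ← pow_add, Nat.add_sub_of_le hgn] at hshrink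
  rw [← pow_mul, ← pow_mul] at hcatalyze
  convert add_mem (add_mem hdominate hcatalyze) (add_mem hdiscard hshrink) using 1
  ring

end LargePowers

section Catalyst

variable {d m m' : ℕ} {P : Fin d → Fin m → ℝ} {Q : Fin d → Fin m' → ℝ} {φ : (Fin d → ℝ) → ℝ}

/-- The entrywise logarithms of the tuples indexed by the common support. -/
def logVec (P : Fin d → Fin m → ℝ) : {i // i ∈ suppIdx P} → Fin d → ℝ :=
  fun i k => Real.log (P k i)

lemma pos_of_mem_suppIdx (hP : TupOK P) {i : Fin m} (hi : i ∈ suppIdx P) (k : Fin d) :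
    0 < P k i := by
  obtain ⟨l, hl⟩ := (Finset.mem_filter.1 hi).2
  exact (hP.1 k i).lt_of_ne' ((hP.2 k l i).2 hl)

lemma eq_zero_of_notMem_suppIdx {i : Fin m} (hi : i ∉ suppIdx P) (k : Fin d) : P k i = 0 := by
  contrapose! hi
  exact Finset.mem_filter.2 ⟨Finset.mem_univ i, k, hi⟩

lemma exp_logVec (hP : TupOK P) (i : {i // i ∈ suppIdx P}) (k : Fin d) :
    Real.exp (logVec P i k) = P k i :=
  Real.exp_log (pos_of_mem_suppIdx hP i.2 k)

lemma sum_subtype_suppIdx {F : Fin m → ℝ} (hF : ∀ i ∉ suppIdx P, F i = 0) :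
    ∑ i : {i // i ∈ suppIdx P}, F i = ∑ i, F i := by
  rw [Finset.sum_coe_sort]
  exact Finset.sum_subset (Finset.subset_univ _) fun i _ hi => hF i hi

lemma encode_logVec_mem_normalized (hP : TupOK P) (hP1 : ∀ k, IsProbVec (P k)) :
    encode (logVec P) ∈ normalized (Fin d) := by
  refine ⟨encode_mem_nonneg _, fun k => ?_⟩
  simp only [mass_encode, exp_logVec hP]
  rw [sum_subtype_suppIdx fun i hi => eq_zero_of_notMem_suppIdx hi k, (hP1 k).2]

lemma pairing_encode_logVec_pow (hP : TupOK P) (hφ : IsSublinear φ) (n : ℕ) :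
    pairing φ (encode (logVec P) ^ n) =
      ∑ p : Fin n → Fin m, φ fun k => kpow (P k) n p := by
  rw [encode_pow, pairing_encode]
  refine Fintype.sum_of_injective (fun p t => (p t).1)
    (fun p q h => funext fun t => Subtype.ext (congrFun h t)) _ _ (fun p hp => ?_) fun p => ?_
  · obtain ⟨t, ht⟩ : ∃ t, p t ∉ suppIdx P := by
      contrapose! hp
      exact ⟨fun t => ⟨p t, hp t⟩, rfl⟩
    have hzero : (fun k => kpow (P k) n p) = (0 : ℝ) • 0 := by
      rw [zero_smul]
      exact funext fun k => Finset.prod_eq_zero (Finset.mem_univ t) (eq_zero_of_notMem_suppIdx ht k)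
    rw [hzero, hφ.map_smul _ _ le_rfl, zero_mul]
  · simp only [Finset.sum_apply, Real.exp_sum, exp_logVec hP, kpow]

lemma sum_kpow {p : Fin m → ℝ} (hp : IsProbVec p) (n : ℕ) : ∑ f, kpow p n f = 1 := by
  calc ∑ f, kpow p n f = (∑ i, p i) ^ n := (Fintype.sum_pow p n).symm
    _ = 1 := by rw [hp.2, one_pow]

lemma isProbVec_trick {p : Fin m → ℝ} {q : Fin m' → ℝ} (hp : IsProbVec p) (hq : IsProbVec q)
    {n : ℕ} (hn : n ≠ 0) : IsProbVec (trick p q n) := by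
  refine ⟨fun x => mul_nonneg (by positivity) (mul_nonneg
    (Finset.prod_nonneg fun _ _ => hp.1 _) (Finset.prod_nonneg fun _ _ => hq.1 _)), ?_⟩
  simp only [Fintype.sum_sigma, trick, Fintype.sum_prod_type, ← Finset.mul_sum, sum_kpow hq,
    sum_kpow hp, mul_one]
  simp [hn]

/-- The sum of `φ` over the tuples of `P^{⊗a} ⊗ Q^{⊗b}`. -/
def mixedSum (φ : (Fin d → ℝ) → ℝ) (P : Fin d → Fin m → ℝ) (Q : Fin d → Fin m' → ℝ) (a b : ℕ) :
    ℝ :=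
  ∑ p : Fin a → Fin m, ∑ q : Fin b → Fin m', φ fun k => kpow (P k) a p * kpow (Q k) b q

lemma sum_mul_kpow_left (hφ : IsSublinear φ) {c : ℝ} (hc : 0 ≤ c) (a b : ℕ) :
    ∑ i, ∑ y : (Fin a → Fin m) × (Fin b → Fin m'),
      φ (fun k => P k i * (c * (kpow (P k) a y.1 * kpow (Q k) b y.2))) =
    c * mixedSum φ P Q (a + 1) b := by
  rw [mixedSum, ← (Fin.consEquiv fun _ => Fin m).sum_comp]
  simp only [Fintype.sum_prod_type, Finset.mul_sum, ← hφ.map_smul c _ hc]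
  refine Finset.sum_congr rfl fun i _ => Finset.sum_congr rfl fun p _ =>
    Finset.sum_congr rfl fun q _ => congrArg φ (funext fun k => ?_)
  simp only [kpow, Fin.prod_univ_succ, Fin.consEquiv_apply, Fin.cons_zero, Fin.cons_succ,
    Pi.smul_apply, smul_eq_mul]
  ring

lemma sum_mul_kpow_right (hφ : IsSublinear φ) {c : ℝ} (hc : 0 ≤ c) (a b : ℕ) :
    ∑ i, ∑ y : (Fin a → Fin m) × (Fin b → Fin m'),
      φ (fun k => Q k i * (c * (kpow (P k) a y.1 * kpow (Q k) b y.2))) =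
    c * mixedSum φ P Q a (b + 1) := by
  rw [mixedSum, Finset.sum_comm, Fintype.sum_prod_type]
  simp only [← (Fin.consEquiv fun _ => Fin m').sum_comp, Fintype.sum_prod_type_right,
    Finset.mul_sum, ← hφ.map_smul c _ hc]
  refine Finset.sum_congr rfl fun p _ => Finset.sum_congr rfl fun q _ =>
    Finset.sum_congr rfl fun i _ => congrArg φ (funext fun k => ?_)
  simp only [kpow, Fin.prod_univ_succ, Fin.consEquiv_apply, Fin.cons_zero, Fin.cons_succ,
    Pi.smul_apply, smul_eq_mul]
  ring

lemma sum_kron_trick_left (hφ : IsSublinear φ) (n : ℕ) :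
    ∑ x, φ (fun k => kron (P k) (trick (P k) (Q k) n) x) =
      ∑ s ∈ Finset.range n, 1 / (n : ℝ) * mixedSum φ P Q (n - s) s := by
  rw [Fintype.sum_prod_type, ← Fin.sum_univ_eq_sum_range]
  simp only [Fintype.sum_sigma]
  rw [Finset.sum_comm]
  refine Finset.sum_congr rfl fun s _ => ?_
  rw [show n - (s : ℕ) = n - 1 - s + 1 by lia]
  exact sum_mul_kpow_left hφ (by positivity) _ _

lemma sum_kron_trick_right (hφ : IsSublinear φ) (n : ℕ) :
    ∑ x, φ (fun k => kron (Q k) (trick (P k) (Q k) n) x) =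
      ∑ s ∈ Finset.range n, 1 / (n : ℝ) * mixedSum φ P Q (n - (s + 1)) (s + 1) := by
  rw [Fintype.sum_prod_type,
    ← Fin.sum_univ_eq_sum_range fun s => 1 / (n : ℝ) * mixedSum φ P Q (n - (s + 1)) (s + 1)]
  simp only [Fintype.sum_sigma]
  rw [Finset.sum_comm]
  refine Finset.sum_congr rfl fun s _ => ?_
  rw [show n - ((s : ℕ) + 1) = n - 1 - s by lia]
  exact sum_mul_kpow_right hφ (by positivity) _ _

lemma sum_kron_trick_le (hP : TupOK P) (hQ : TupOK Q) {n : ℕ}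
    (h : encode (logVec P) ^ n - encode (logVec Q) ^ n ∈ majCone (Fin d)) (hφ : IsSublinear φ) :
    ∑ x, φ (fun k => kron (Q k) (trick (P k) (Q k) n) x) ≤
      ∑ x, φ (fun k => kron (P k) (trick (P k) (Q k) n) x) := by
  have hpow := h φ hφ
  rw [map_sub, pairing_encode_logVec_pow hP hφ, pairing_encode_logVec_pow hQ hφ] at hpow
  rw [sum_kron_trick_left hφ, sum_kron_trick_right hφ, ← sub_nonneg, ← Finset.sum_sub_distrib,
    Finset.sum_range_sub' fun s => 1 / (n : ℝ) * mixedSum φ P Q (n - s) s, ← mul_sub]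
  refine mul_nonneg (by positivity) ?_
  rw [Nat.sub_self, Nat.sub_zero]
  simpa [mixedSum, kpow] using hpow

theorem exists_isStochastic_matVec_kron_trick [NeZero d] (hP : TupOK P) (hQ : TupOK Q)
    (hP1 : ∀ k, IsProbVec (P k)) (hQ1 : ∀ k, IsProbVec (Q k)) {n : ℕ} (hn : n ≠ 0)
    (h : encode (logVec P) ^ n - encode (logVec Q) ^ n ∈ majCone (Fin d)) :
    ∃ T : Fin m' × TrickIdx m m' n → Fin m × TrickIdx m m' n → ℝ, IsStochastic T ∧
      ∀ k, matVec T (kron (P k) (trick (P k) (Q k) n)) = kron (Q k) (trick (P k) (Q k) n) := by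
  have hne {ι : Type} [Fintype ι] {p : ι → ℝ} (hp : IsProbVec p) : Nonempty ι := by
    by_contra hι
    simpa [not_nonempty_iff.1 hι] using hp.2
  have := hne (hQ1 0)
  have := hne (isProbVec_trick (hP1 0) (hQ1 0) hn)
  exact exists_isStochastic_of_forall_isSublinear_sum_le _ _ fun φ hφ =>
    sum_kron_trick_le hP hQ h hφ

end Catalyst

/-! ### Classification of character pairs -/

section Classification

variable {D : Type*}

lemma half_smul_add_half_smul_sub_one_mem_majCone {t : D → ℝ} (ht : ∀ j, |t j| < 1) :
    (1 / 2 : ℝ) • X (fun j => Real.log (1 + t j)) +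
      (1 / 2 : ℝ) • X (fun j => Real.log (1 - t j)) - 1 ∈ majCone D := by
  refine sub_one_mem_majCone ⟨add_mem (smul_mem_nonneg (by norm_num) (X_mem_nonneg _))
    (smul_mem_nonneg (by norm_num) (X_mem_nonneg _)), fun j => ?_⟩
  have hj := abs_lt.1 (ht j)
  simp only [map_add, map_smul, mass_X, smul_eq_mul]
  rw [Real.exp_log (by linarith), Real.exp_log (by linarith)]
  ring

lemma X_add_X_log_one_sub_exp_sub_one_mem_majCone {v : D → ℝ} (hv : ∀ j, v j < 0) :
    X v + X (fun j => Real.log (1 - Real.exp (v j))) - 1 ∈ majCone D := by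
  refine sub_one_mem_majCone ⟨add_mem (X_mem_nonneg _) (X_mem_nonneg _), fun j => ?_⟩
  rw [map_add, mass_X, mass_X, Real.exp_log (sub_pos.2 (Real.exp_lt_one_iff.2 (hv j)))]
  ring

/-- In the coordinates `A = exp v` the map is convex, hence continuous, on the open orthant. -/
lemma continuous_comp_X_of_nonneg_on_majCone [Finite D] {Ψ : TupleAlgebra D →ₗ[ℝ] ℝ}
    (hΨ : ∀ x ∈ majCone D, 0 ≤ Ψ x) : Continuous fun v => Ψ (X v) := by
  have := Fintype.ofFinite D
  set U : Set (D → ℝ) := Set.univ.pi fun _ => Set.Ioi 0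
  have hpos {A : D → ℝ} (hA : A ∈ U) (l : D) : 0 < A l := hA l trivial
  have hU : Convex ℝ U := convex_pi fun _ _ => convex_Ioi 0
  have hconv : ConvexOn ℝ U fun A => Ψ (X fun l => Real.log (A l)) := by
    refine ⟨hU, fun A hA B hB a b ha hb hab => ?_⟩
    have hmem := hΨ _ (sub_X_mem_majCone_of_mass_eq
      (add_mem (smul_mem_nonneg ha (X_mem_nonneg fun l => Real.log (A l)))
        (smul_mem_nonneg hb (X_mem_nonneg fun l => Real.log (B l))))
      (fun l => Real.log ((a • A + b • B) l)) fun l => by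
        rw [Real.exp_log (hpos (hU hA hB ha hb hab) l)]
        simp [Real.exp_log (hpos hA l), Real.exp_log (hpos hB l)])
    simpa only [map_sub, map_add, map_smul, sub_nonneg] using hmem
  have hexp : Continuous fun (v : D → ℝ) l => Real.exp (v l) := by fun_prop
  have hcont := (hconv.continuousOn (isOpen_set_pi Set.finite_univ fun _ _ => isOpen_Ioi)
    ).comp_continuous hexp fun v l _ => Real.exp_pos (v l)
  simpa only [Function.comp_def, Real.log_exp] using hcont

lemma exists_eq_sum_mul_of_map_add [Fintype D] {δ : (D → ℝ) → ℝ}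
    (hadd : ∀ u w, δ (u + w) = δ u + δ w) (hδ : Continuous δ) :
    ∃ γ : D → ℝ, ∀ v, δ v = ∑ k, γ k * v k := by
  classical
  set L := (AddMonoidHom.mk' δ hadd).toRealLinearMap hδ
  refine ⟨fun k => L (Pi.single k 1), fun v => ?_⟩
  calc δ v = L (∑ k, v k • Pi.single k 1) := congrArg L (pi_eq_sum_univ' v)
    _ = ∑ k, L (Pi.single k 1) * v k := by simp only [map_sum, map_smul, smul_eq_mul, mul_comm]

namespace IsCharacterPair

variable {e : TupleAlgebra D} {F : TupleAlgebra D →ₐ[ℝ] ℝ} {Φ : TupleAlgebra D →ₗ[ℝ] ℝ}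

lemma map_eq_map_unit_mul (h : IsCharacterPair e F Φ) (he : ∀ l, mass l e = 0)
    {x : TupleAlgebra D} (hx : ∀ l, mass l x = 0) : F x = F e * Φ x := by
  have h1 := h.map_mul x e he
  rw [h.map_unit, mul_one] at h1
  rw [← h1, mul_comm, h.map_mul e x hx]

lemma map_X_const (h : IsCharacterPair e F Φ) (he : ∀ l, mass l e = 0) (c : ℝ) :
    F (X fun _ => c) = Real.exp c := by
  have hΦ : Φ (X (fun _ => c) - Real.exp c • 1) = 0 := by
    have h1 := h.map_nonneg _ (X_const_sub_mem_majCone c)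
    have h2 := h.map_nonneg _ (sub_X_const_mem_majCone c)
    rw [← neg_sub, map_neg] at h2
    linarith
  have hF := h.map_eq_map_unit_mul he (mass_eq_zero_of_mem_majCone (X_const_sub_mem_majCone c))
  rw [hΦ, mul_zero, map_sub, map_smul, map_one, smul_eq_mul, mul_one] at hF
  exact sub_eq_zero.1 hF

lemma exists_map_X_eq_exp [Fintype D] (h : IsCharacterPair e F Φ) (he : ∀ l, mass l e = 0)
    (h0 : F e ≠ 0) : ∃ α : D → ℝ, (∀ v, F (X v) = Real.exp (∑ k, α k * v k)) ∧ ∑ k, α k = 1 := by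
  have hcont : Continuous fun v => F (X v) := by
    have hscaled := continuous_comp_X_of_nonneg_on_majCone (Ψ := (F e)⁻¹ • F.toLinearMap)
      fun x hx => by
        have hFx := h.map_eq_map_unit_mul he (mass_eq_zero_of_mem_majCone hx)
        simpa [hFx, inv_mul_cancel_left₀ h0] using h.map_nonneg x hx
    exact (hscaled.const_smul (F e)).congr fun v => by simp [h0]
  obtain ⟨α, hα⟩ := exists_eq_sum_mul_of_map_add (δ := fun v => Real.log (F (X v)))
    (fun u w => by
      rw [X_add, _root_.map_mul, Real.log_mul (h.pos u).ne' (h.pos w).ne'])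
    (hcont.log fun v => (h.pos v).ne')
  have hexp (v : D → ℝ) : F (X v) = Real.exp (∑ k, α k * v k) := by
    rw [← hα, Real.exp_log (h.pos v)]
  refine ⟨α, hexp, ?_⟩
  have hone := h.map_X_const he 1
  rw [hexp] at hone
  simpa using Real.exp_injective hone

lemma exists_eq_mass [Finite D] (h : IsCharacterPair e F Φ) (he : ∀ l, mass l e = 0)
    (h0 : F e = 0) : ∃ k, F = mass k := by
  have := Fintype.ofFinite D
  by_contra! hne
  have hX (k : D) : ∃ v, F (X v) ≠ mass k (X v) := by
    by_contra! heq
    exact hne k (AlgHom.toLinearMap_injective (linearMap_ext_X heq))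
  choose v hv using hX
  -- `F` vanishes on every element of mass zero, but not on this product.
  set y : TupleAlgebra D := ∏ l, (X (v l) - algebraMap ℝ _ (mass l (X (v l))))
  have hy (l : D) : mass l y = 0 := by
    rw [map_prod]
    refine Finset.prod_eq_zero (Finset.mem_univ l) ?_
    rw [map_sub, AlgHom.commutes]
    exact sub_self _
  have hFy := h.map_eq_map_unit_mul he hy
  rw [h0, zero_mul, map_prod, Finset.prod_eq_zero_iff] at hFy
  obtain ⟨l, -, hl⟩ := hFy
  rw [map_sub, AlgHom.commutes] at hl
  exact hv l (sub_eq_zero.1 hl)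

end IsCharacterPair

lemma notBasis_of_map_X_eq_exp {d : ℕ} {e : TupleAlgebra (Fin d)} (he : ∀ l, mass l e = 0)
    {F : TupleAlgebra (Fin d) →ₐ[ℝ] ℝ} (h0 : F e ≠ 0) {α : Fin d → ℝ}
    (hα : ∀ v, F (X v) = Real.exp (∑ k, α k * v k)) : notBasis α := by
  rintro k rfl
  have hF : F.toLinearMap = (mass k).toLinearMap := linearMap_ext_X fun v => by
    simp [hα, Pi.single_apply]
  exact h0 ((LinearMap.congr_fun hF e).trans (he k))

lemma sum_mul_log_one_add_neg [Fintype D] {α t : D → ℝ} (ht : ∀ j, |t j| < 1)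
    (hα : ∀ j, t j ≠ 0 → 0 < α j) (hne : ∃ j, t j ≠ 0) (hsum : ∑ j, α j * t j = 0) :
    ∑ j, α j * Real.log (1 + t j) < 0 := by
  have hlt {j : D} (h0 : t j ≠ 0) : α j * Real.log (1 + t j) < α j * t j := by
    have hlog := Real.log_lt_sub_one_of_pos (x := 1 + t j) (by linarith [abs_lt.1 (ht j)])
      (by simpa using h0)
    exact mul_lt_mul_of_pos_left (by linarith) (hα j h0)
  obtain ⟨j₀, h0⟩ := hne
  calc ∑ j, α j * Real.log (1 + t j) < ∑ j, α j * t j := by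
        refine Finset.sum_lt_sum (fun j _ => ?_) ⟨j₀, Finset.mem_univ j₀, hlt h0⟩
        by_cases hj : t j = 0
        · simp [hj]
        · exact (hlt hj).le
    _ = 0 := hsum

lemma exists_perturbation_of_pos_of_pos [Fintype D] {α : D → ℝ} {k l : D} (hkl : k ≠ l)
    (hk : 0 < α k) (hl : 0 < α l) : ∃ t : D → ℝ, (∀ j, |t j| < 1) ∧ (∀ j, t j ≠ 0 → 0 < α j) ∧
      (∃ j, t j ≠ 0) ∧ ∑ j, α j * t j = 0 := by
  classical
  obtain ⟨τ, hτ, hτlt⟩ : ∃ τ, 0 < τ ∧ τ < min (α k) (α l) := exists_between (lt_min hk hl)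
  set t : D → ℝ := Pi.single k (τ / α k) - Pi.single l (τ / α l) with ht
  have htk : t k = τ / α k := by simp [ht, hkl]
  have htl : t l = -(τ / α l) := by simp [ht, Ne.symm hkl]
  have ht0 {j : D} (hjk : j ≠ k) (hjl : j ≠ l) : t j = 0 := by simp [ht, hjk, hjl]
  refine ⟨t, fun j => ?_, fun j hj => ?_, ⟨k, htk ▸ (div_pos hτ hk).ne'⟩, ?_⟩
  · rcases eq_or_ne j k with rfl | hjk
    · rw [htk, abs_of_pos (div_pos hτ hk), div_lt_one hk]
      exact hτlt.trans_le (min_le_left _ _)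
    rcases eq_or_ne j l with rfl | hjl
    · rw [htl, abs_neg, abs_of_pos (div_pos hτ hl), div_lt_one hl]
      exact hτlt.trans_le (min_le_right _ _)
    · simp [ht0 hjk hjl]
  · by_contra hαj
    exact hj (ht0 (by rintro rfl; exact hαj hk) (by rintro rfl; exact hαj hl))
  · simp [ht, mul_sub, Pi.single_apply, mul_div_cancel₀, hk.ne', hl.ne']

lemma eq_of_pos_of_pos_of_nonneg_on_majCone [Fintype D] {F : TupleAlgebra D →ₐ[ℝ] ℝ}
    (hF : ∀ x ∈ majCone D, 0 ≤ F x) {α : D → ℝ}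
    (hα : ∀ v, F (X v) = Real.exp (∑ k, α k * v k)) {k l : D} (hk : 0 < α k) (hl : 0 < α l) :
    k = l := by
  by_contra hkl
  -- Spreading by `± t` increases in the cone, but lowers the value of `F`.
  obtain ⟨t, ht1, htα, ⟨j₀, hj₀⟩, hsum⟩ := exists_perturbation_of_pos_of_pos hkl hk hl
  have hplus := Real.exp_lt_one_iff.2 (sum_mul_log_one_add_neg ht1 htα ⟨j₀, hj₀⟩ hsum)
  have hminus := Real.exp_lt_one_iff.2 (sum_mul_log_one_add_neg (t := -t) (by simpa using ht1)
    (by simpa using htα) ⟨j₀, by simpa using hj₀⟩ (by simpa using hsum))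
  have hcone := hF _ (half_smul_add_half_smul_sub_one_mem_majCone ht1)
  simp only [map_sub, map_add, map_smul, map_one, hα, smul_eq_mul] at hcone
  simp only [Pi.neg_apply, ← sub_eq_add_neg] at hminus
  linarith

lemma memAminus_of_nonneg_on_majCone {d : ℕ} {F : TupleAlgebra (Fin d) →ₐ[ℝ] ℝ}
    (hF : ∀ x ∈ majCone (Fin d), 0 ≤ F x) {α : Fin d → ℝ}
    (hα : ∀ v, F (X v) = Real.exp (∑ k, α k * v k)) (hsum : ∑ k, α k = 1) : memAminus α := by
  obtain ⟨k, -, hk⟩ : ∃ k ∈ Finset.univ, 0 < α k :=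
    Finset.exists_lt_of_sum_lt (f := 0) (by simp [hsum])
  have hl (l : Fin d) (hlk : l ≠ k) : α l ≤ 0 :=
    not_lt.1 fun hl => hlk (eq_of_pos_of_pos_of_nonneg_on_majCone hF hα hl hk)
  refine ⟨hsum, k, ?_, hl⟩
  rw [← hsum, ← Finset.add_sum_erase _ _ (Finset.mem_univ k)]
  linarith [Finset.sum_nonpos fun l (hl' : l ∈ Finset.univ.erase k) =>
    hl l (Finset.ne_of_mem_erase hl')]

lemma memAplus_of_nonpos_on_majCone {d : ℕ} {F : TupleAlgebra (Fin d) →ₐ[ℝ] ℝ}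
    (hF : ∀ x ∈ majCone (Fin d), F x ≤ 0) {α : Fin d → ℝ}
    (hα : ∀ v, F (X v) = Real.exp (∑ k, α k * v k)) (hsum : ∑ k, α k = 1) : memAplus α := by
  refine ⟨hsum, fun k => ?_⟩
  by_contra! hk
  set v : Fin d → ℝ := Pi.single k (1 / α k) - 1 with hv
  have hneg (j : Fin d) : v j < 0 := by
    have := one_div_neg.2 hk
    rcases eq_or_ne j k with rfl | hj
    · simp only [hv, Pi.sub_apply, Pi.single_eq_same, Pi.one_apply]
      linarith
    · simp [hv, hj]
  have hFv : F (X v) = 1 := by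
    rw [hα]
    simp [hv, mul_sub, Pi.single_apply, hk.ne, hsum]
  have hcone := hF _ (X_add_X_log_one_sub_exp_sub_one_mem_majCone hneg)
  rw [map_sub, map_add, map_one, hFv, hα] at hcone
  linarith [Real.exp_pos (∑ j, α j * Real.log (1 - Real.exp (v j)))]

/-- The Kullback–Leibler divergence of the `k`-th from the `l`-th column of `i ↦ exp (v i)`. -/
def relEntropy {ι : Type*} [Fintype ι] (v : ι → D → ℝ) (k l : D) : ℝ :=
  ∑ i, Real.exp (v i k) * (v i k - v i l)

section Derivation

variable {e : TupleAlgebra D} {Φ : TupleAlgebra D →ₗ[ℝ] ℝ} {k : D}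

lemma IsCharacterPair.exists_leibniz (h : IsCharacterPair e (mass k) Φ) :
    ∃ Ψ : TupleAlgebra D →ₗ[ℝ] ℝ, (∀ x, (∀ l, mass l x = 0) → Ψ x = Φ x) ∧
      ∀ u w, Ψ (X (u + w)) =
        Real.exp (w k) * (Ψ (X u) - Real.exp (u k) * Ψ 1) + Real.exp (u k) * Ψ (X w) := by
  classical
  obtain ⟨π, hπ⟩ : ∃ π : TupleAlgebra D, ∀ l, mass l π = (Pi.single k 1 : D → ℝ) l := by
    have hexp : Real.exp 1 - 1 ≠ 0 := sub_ne_zero.2 (Real.one_lt_exp_iff.2 one_pos).ne'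
    refine ⟨(Real.exp 1 - 1)⁻¹ • (X (Pi.single k 1) - 1), fun l => ?_⟩
    rcases eq_or_ne l k with rfl | hl
    · simp [hexp]
    · simp [hl]
  refine ⟨Φ ∘ₗ LinearMap.mulLeft ℝ π, fun x hx => ?_, fun u w => ?_⟩
  · simp [h.map_mul π x hx, hπ]
  · have hmul := h.map_mul (X w) (π * (X u - Real.exp (u k) • 1)) fun l => by
      rcases eq_or_ne l k with rfl | hl
      · simp
      · simp [hπ, hl]
    have hexpand : X w * (π * (X u - Real.exp (u k) • 1)) =
        π * X (u + w) - Real.exp (u k) • (π * X w) := by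
      rw [X_add]
      simp only [Algebra.smul_def, mul_one]
      ring
    rw [hexpand] at hmul
    simp only [mass_X, mul_sub, map_sub, mul_smul_comm, map_smul, smul_eq_mul] at hmul
    simp only [LinearMap.comp_apply, LinearMap.mulLeft_apply]
    linarith

lemma exists_map_X_eq_exp_mul_of_leibniz [Fintype D] {Ψ : TupleAlgebra D →ₗ[ℝ] ℝ}
    (hΨ : ∀ x ∈ majCone D, 0 ≤ Ψ x)
    (hmul : ∀ u w, Ψ (X (u + w)) =
      Real.exp (w k) * (Ψ (X u) - Real.exp (u k) * Ψ 1) + Real.exp (u k) * Ψ (X w)) :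
    ∃ γ : D → ℝ, ∀ u, Ψ (X u) = Real.exp (u k) * (∑ l, γ l * u l + Ψ 1) := by
  obtain ⟨γ, hγ⟩ := exists_eq_sum_mul_of_map_add
    (δ := fun u => Real.exp (-u k) * Ψ (X u) - Ψ 1) (fun u w => by
      have hu : Real.exp (-u k) * Real.exp (u k) = 1 := by simp [← Real.exp_add]
      have hw : Real.exp (-w k) * Real.exp (w k) = 1 := by simp [← Real.exp_add]
      simp only [hmul, Pi.add_apply, neg_add, Real.exp_add]
      linear_combination (Real.exp (-u k) * Ψ (X u) - Ψ 1) * hw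
        + (Real.exp (-w k) * Ψ (X w) - Real.exp (-w k) * Real.exp (w k) * Ψ 1) * hu)
    (((Real.continuous_exp.comp (continuous_apply k).neg).mul
      (continuous_comp_X_of_nonneg_on_majCone hΨ)).sub continuous_const)
  refine ⟨γ, fun u => ?_⟩
  rw [← hγ, sub_add_cancel, ← mul_assoc, ← Real.exp_add, add_neg_cancel, Real.exp_zero, one_mul]

variable [Fintype D] {Ψ : TupleAlgebra D →ₗ[ℝ] ℝ} {γ : D → ℝ}

lemma sum_eq_zero_of_map_X_eq_exp_mul (hΨ : ∀ x ∈ majCone D, 0 ≤ Ψ x)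
    (hγ : ∀ u, Ψ (X u) = Real.exp (u k) * (∑ l, γ l * u l + Ψ 1)) : ∑ l, γ l = 0 := by
  have h1 := hΨ _ (X_const_sub_mem_majCone 1)
  have h2 := hΨ _ (sub_X_const_mem_majCone 1)
  simp only [map_sub, map_smul, hγ, smul_eq_mul, mul_one, mul_add] at h1 h2
  have h3 : Real.exp 1 * ∑ l, γ l = 0 := by linarith
  exact (mul_eq_zero.1 h3).resolve_left (Real.exp_pos 1).ne'

lemma nonpos_of_map_X_eq_exp_mul (hΨ : ∀ x ∈ majCone D, 0 ≤ Ψ x)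
    (hγ : ∀ u, Ψ (X u) = Real.exp (u k) * (∑ l, γ l * u l + Ψ 1)) {l : D} (hl : l ≠ k) :
    γ l ≤ 0 := by
  classical
  have hX (w : D → ℝ) (hw : ∀ j ≠ l, w j = 0) : Ψ (X w) = γ l * w l + Ψ 1 := by
    rw [hγ, hw k hl.symm, Real.exp_zero, one_mul, Finset.sum_eq_single l (fun j _ hj => by
      rw [hw j hj, mul_zero]) (by simp)]
  have hcone := hΨ _ (half_smul_add_half_smul_sub_one_mem_majCone
    (t := Pi.single l (1 / 2)) fun j => by
      rcases eq_or_ne j l with rfl | hj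
      · rw [Pi.single_eq_same]
        norm_num
      · simp [hj])
  rw [map_sub, map_add, map_smul, map_smul, hX _ fun j hj => by simp [hj],
    hX _ fun j hj => by simp [hj]] at hcone
  simp only [Pi.single_eq_same, smul_eq_mul] at hcone
  have hlog : Real.log (1 + 1 / 2) + Real.log (1 - 1 / 2) < 0 := by
    rw [← Real.log_mul (by norm_num) (by norm_num)]
    exact Real.log_neg (by norm_num) (by norm_num)
  exact nonpos_of_mul_nonneg_left (by linarith) hlog

theorem IsCharacterPair.exists_map_encode_sub_one_eq_sum_relEntropy
    (h : IsCharacterPair e (mass k) Φ) :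
    ∃ γ : D → ℝ, (∀ l ≠ k, 0 ≤ γ l) ∧ ∀ {ι : Type*} [Fintype ι] (v : ι → D → ℝ),
      encode v ∈ normalized D → Φ (encode v - 1) = ∑ l, γ l * relEntropy v k l := by
  obtain ⟨Ψ, hΨΦ, hmul⟩ := h.exists_leibniz
  have hΨ : ∀ x ∈ majCone D, 0 ≤ Ψ x := fun x hx =>
    (h.map_nonneg x hx).trans_eq (hΨΦ x (mass_eq_zero_of_mem_majCone hx)).symm
  obtain ⟨γ, hγ⟩ := exists_map_X_eq_exp_mul_of_leibniz hΨ hmul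
  refine ⟨fun l => -γ l, fun l hl => neg_nonneg.2 (nonpos_of_map_X_eq_exp_mul hΨ hγ hl),
    fun v hv => ?_⟩
  have hmass : ∑ i, Real.exp (v i k) = 1 := by rw [← mass_encode, hv.2]
  have hγ0 := sum_eq_zero_of_map_X_eq_exp_mul hΨ hγ
  calc Φ (encode v - 1) = Ψ (encode v) - Ψ 1 := by
        rw [← hΨΦ _ (mass_eq_zero_of_mem_majCone (sub_one_mem_majCone hv)), map_sub]
    _ = ∑ i, Real.exp (v i k) * ∑ l, γ l * v i l := by
        simp only [encode, map_sum, hγ, mul_add, Finset.sum_add_distrib, ← Finset.sum_mul, hmass]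
        ring
    _ = ∑ i, ∑ l, -γ l * (Real.exp (v i k) * (v i k - v i l)) := by
        refine Finset.sum_congr rfl fun i _ => ?_
        have hterm (l : D) : -γ l * (Real.exp (v i k) * (v i k - v i l)) =
            Real.exp (v i k) * (γ l * v i l) - Real.exp (v i k) * v i k * γ l := by ring
        simp only [hterm, Finset.sum_sub_distrib, ← Finset.mul_sum, hγ0, mul_zero, sub_zero]
    _ = ∑ l, -γ l * relEntropy v k l := by
        rw [Finset.sum_comm]
        simp only [relEntropy, Finset.mul_sum]

end Derivation

end Classification

/-! ### Strict domination -/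

section StrictDomination

variable {D : Type*} {ι κ : Type u} [Fintype ι]

lemma map_nonpos_of_forall_pos_lt [Finite D] {F : (D → ℝ) →L[ℝ] ℝ} {u : ℝ}
    (hF : ∀ x : D → ℝ, (∀ l, 0 < x l) → F x < u) : 0 ≤ u ∧ ∀ x, 0 ≤ x → F x ≤ 0 := by
  have hscale {x : D → ℝ} (hx : ∀ l, 0 < x l) {r : ℝ} (hr : 0 < r) : r * F x < u := by
    simpa using hF (r • x) fun l => mul_pos hr (hx l)
  have hpos {x : D → ℝ} (hx : ∀ l, 0 < x l) : F x ≤ 0 := by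
    by_contra! h
    have := hscale hx (div_pos (by positivity : 0 < |u| + 1) h)
    rw [div_mul_cancel₀ _ h.ne'] at this
    linarith [le_abs_self u]
  refine ⟨?_, fun x hx => ?_⟩
  · by_contra! hu
    have h1 : F 1 < 0 := (hF 1 fun _ => one_pos).trans hu
    have := hscale (x := 1) (fun _ => one_pos) (div_pos_of_neg_of_neg hu h1)
    rw [div_mul_cancel₀ _ h1.ne] at this
    exact this.false
  · have hcl : x ∈ closure (Set.univ.pi fun _ : D => Set.Ioi (0 : ℝ)) := by
      rw [closure_pi_set]
      exact fun l _ => by rw [closure_Ioi]; exact hx l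
    exact closure_minimal (s := Set.univ.pi fun _ : D => Set.Ioi (0 : ℝ)) (t := {x | F x ≤ 0})
      (fun _ hy => hpos fun l => hy l trivial) (isClosed_le F.continuous continuous_const) hcl

lemma exists_mem_stdSimplex_forall_sum_pos [Fintype D] [Nonempty ι] {δ : ι → D → ℝ}
    (h : ∀ c : D → ℝ, 0 ≤ c → c ≠ 0 → ∃ i, 0 < ∑ l, c l * δ i l) :
    ∃ a ∈ stdSimplex ℝ ι, ∀ l, 0 < ∑ i, a i * δ i l := by
  classical
  set U : Set (D → ℝ) := Set.univ.pi fun _ => Set.Ioi 0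
  set L := Fintype.linearCombination ℝ δ
  by_contra! hne
  have hdisj : Disjoint U (L '' stdSimplex ℝ ι) := by
    rw [Set.disjoint_right]
    rintro _ ⟨a, ha, rfl⟩ hU
    obtain ⟨l, hl⟩ := hne a ha
    exact hl.not_gt (by simpa [L, Fintype.linearCombination_apply] using hU l trivial)
  obtain ⟨F, u, hFu, huF⟩ := geometric_hahn_banach_open (convex_pi fun _ _ => convex_Ioi 0)
    (isOpen_set_pi Set.finite_univ fun _ _ => isOpen_Ioi)
    ((convex_stdSimplex ℝ ι).linear_image L) hdisj
  have hδ (i : ι) : u ≤ F (δ i) :=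
    huF _ ⟨Pi.single i 1, single_mem_stdSimplex ℝ i, by simp [L]⟩
  obtain ⟨hu, hF⟩ := map_nonpos_of_forall_pos_lt fun x hx => hFu x fun l _ => hx l
  have hFsum (x : D → ℝ) : F x = -∑ l, -F (Pi.single l 1) * x l := by
    conv_lhs => rw [pi_eq_sum_univ' x]
    simp [mul_comm]
  obtain ⟨i, hi⟩ := h (fun l => -F (Pi.single l 1))
    (fun l => neg_nonneg.2 (hF _ (Pi.single_nonneg.2 zero_le_one))) fun hc => by
      have hF0 (x : D → ℝ) : F x = 0 := by
        rw [hFsum]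
        simp only [congrFun hc, Pi.zero_apply, zero_mul, Finset.sum_const_zero, neg_zero]
      have h1 := hFu 1 fun _ _ => Set.mem_Ioi.2 one_pos
      have h2 := hδ (Classical.arbitrary ι)
      rw [hF0] at h1 h2
      exact (h1.trans_le h2).false
  linarith [hδ i, hFsum (δ i)]

lemma IsTropicallyInterior.exists_margin [Finite D] [Finite κ] {v : ι → D → ℝ} {w : κ → D → ℝ}
    (h : ∀ j, IsTropicallyInterior v (w j)) : ∃ μ : ℝ, 0 < μ ∧ ∀ j k, ∃ a ∈ stdSimplex ℝ ι,
      ∀ l ≠ k, w j k - w j l + μ ≤ ∑ i, a i * (v i k - v i l) := by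
  choose a ha hlt using h
  have hev : ∀ᶠ μ in 𝓝[>] (0 : ℝ), ∀ j k l, l ≠ k →
      μ < ∑ i, a j k i * (v i k - v i l) - (w j k - w j l) := by
    simp only [eventually_all]
    exact fun j k l hl => eventually_nhdsWithin_of_eventually_nhds
      (eventually_lt_nhds (sub_pos.2 (hlt j k l hl)))
  obtain ⟨μ, hμ, hμ0⟩ := (hev.and self_mem_nhdsWithin).exists
  exact ⟨μ, hμ0, fun j k => ⟨a j k, ha j k, fun l hl => by linarith [hμ j k l hl]⟩⟩

variable [Fintype κ]

lemma exists_eq_of_mem_support_encode {w : κ → D → ℝ} {a : D → ℝ}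
    (ha : a ∈ (encode w).coeff.support) : ∃ j, w j = a := by
  classical
  contrapose! ha
  have hzero : (encode w).coeff a = 0 := by
    rw [encode, AddMonoidAlgebra.coeff_sum, Finsupp.finsetSum_apply]
    exact Finset.sum_eq_zero fun j _ => by rw [coeff_X, Finsupp.single_eq_of_ne (ha j).symm]
  simpa using hzero

lemma exists_mul_mem_majCone_of_isTropicallyInterior [Finite D] {v : ι → D → ℝ} {w : κ → D → ℝ}
    (hv : encode v ∈ normalized D) (hw : encode w ∈ normalized D)
    (huniv : IsPowerUniversal (encode v)) (hv0 : IsTropicallyInterior v 0)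
    (hvw : ∀ j, IsTropicallyInterior v (w j))
    (hpos : ∀ F Φ, IsCharacterPair (encode v + encode w - 2) F Φ → 0 < Φ (encode v - encode w)) :
    ∃ η : ℝ, 0 < η ∧ ∃ h ∈ nonneg D, h ≠ 0 ∧
      h * (encode v - encode w - η • (encode v + encode w - 2)) ∈ majCone D := by
  refine exists_mul_mem_majCone_of_forall_isCharacterPair_pos hv hw huniv hv0.tropicallyDominates
    (fun a ha => ?_) hpos
  obtain ⟨j, rfl⟩ := exists_eq_of_mem_support_encode ha
  exact (hvw j).tropicallyDominates

lemma relEntropy_self (v : ι → D → ℝ) (k : D) : relEntropy v k k = 0 := by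
  simp [relEntropy]

lemma relEntropy_nonneg {v : ι → D → ℝ} (hv : encode v ∈ normalized D) (k l : D) :
    0 ≤ relEntropy v k l := by
  have hsum (k : D) : ∑ i, Real.exp (v i k) = 1 := by rw [← mass_encode, hv.2]
  calc 0 = ∑ i, (Real.exp (v i k) - Real.exp (v i l)) := by
        rw [Finset.sum_sub_distrib, hsum, hsum, sub_self]
    _ ≤ relEntropy v k l := Finset.sum_le_sum fun i _ => by
        have hexp : Real.exp (v i l) = Real.exp (v i k) * Real.exp (v i l - v i k) := by
          rw [← Real.exp_add, add_sub_cancel]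
        nlinarith [Real.add_one_le_exp (v i l - v i k), Real.exp_pos (v i k)]

lemma nonempty_of_encode_mem_normalized [Nonempty D] {v : ι → D → ℝ}
    (hv : encode v ∈ normalized D) : Nonempty ι := by
  by_contra hι
  have := not_nonempty_iff.1 hι
  exact ne_zero_of_mem_normalized hv (by simp [encode])

lemma map_encode_of_map_X_eq_exp [Fintype D] {F : TupleAlgebra D →ₐ[ℝ] ℝ} {α : D → ℝ}
    (hα : ∀ a, F (X a) = Real.exp (∑ k, α k * a k)) (v : ι → D → ℝ) :
    F (encode v) = ∑ i, Real.exp (∑ k, α k * v i k) := by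
  simp only [encode, map_sum, hα]

/-- The sum `∑ l, α l * x l`, up to a multiple of `x k`: the part that is unchanged by adding a
constant to `x`. -/
def tilt [Fintype D] (α : D → ℝ) (k : D) (x : D → ℝ) : ℝ := ∑ l, -α l * (x k - x l)

lemma sum_mul_eq_add_tilt [Fintype D] (α : D → ℝ) (k : D) (x : D → ℝ) :
    ∑ l, α l * x l = (∑ l, α l) * x k + tilt α k x := by
  rw [tilt, Finset.sum_mul, ← Finset.sum_add_distrib]
  exact Finset.sum_congr rfl fun l _ => by ring

end StrictDomination

namespace IsCharacterPair

variable {d : ℕ} {ι κ : Type u} [Fintype ι] [Fintype κ] {e x : TupleAlgebra (Fin d)}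
  {F : TupleAlgebra (Fin d) →ₐ[ℝ] ℝ} {Φ : TupleAlgebra (Fin d) →ₗ[ℝ] ℝ}

lemma map_pos (h : IsCharacterPair e F Φ) (he : ∀ l, mass l e = 0) (hx : ∀ l, mass l x = 0)
    (hminus : 0 < F e → ∀ α, memAminus α → notBasis α →
      (∀ v, F (X v) = Real.exp (∑ k, α k * v k)) → 0 < F x)
    (hplus : F e < 0 → ∀ α, memAplus α → notBasis α →
      (∀ v, F (X v) = Real.exp (∑ k, α k * v k)) → F x < 0)
    (hmass : ∀ k, F = mass k → 0 < Φ x) : 0 < Φ x := by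
  have hcone {y : TupleAlgebra (Fin d)} (hy : y ∈ majCone (Fin d)) : F y = F e * Φ y :=
    h.map_eq_map_unit_mul he (mass_eq_zero_of_mem_majCone hy)
  have hFx := h.map_eq_map_unit_mul he hx
  rcases eq_or_ne (F e) 0 with h0 | h0
  · obtain ⟨k, hk⟩ := h.exists_eq_mass he h0
    exact hmass k hk
  obtain ⟨α, hα, hsum⟩ := h.exists_map_X_eq_exp he h0
  have hbasis := notBasis_of_map_X_eq_exp he h0 hα
  rcases h0.lt_or_gt with hneg | hpos
  · have hA := memAplus_of_nonpos_on_majCone (fun y hy => hcone hy ▸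
      mul_nonpos_of_nonpos_of_nonneg hneg.le (h.map_nonneg y hy)) hα hsum
    have := hplus hneg α hA hbasis hα
    rw [hFx] at this
    exact (pos_iff_pos_of_mul_pos (by linarith : 0 < -F e * Φ x)).1 (neg_pos.2 hneg)
  · have hA := memAminus_of_nonneg_on_majCone (fun y hy => hcone hy ▸
      mul_nonneg hpos.le (h.map_nonneg y hy)) hα hsum
    exact pos_of_mul_pos_right (hFx ▸ hminus hpos α hA hbasis hα) hpos.le

lemma map_encode_sub_encode_pos {D : Type*} [Finite D] {v : ι → D → ℝ} {w : κ → D → ℝ}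
    {k : D} {Φ : TupleAlgebra D →ₗ[ℝ] ℝ}
    (h : IsCharacterPair (encode v + encode w - 2) (mass k) Φ) (hv : encode v ∈ normalized D)
    (hw : encode w ∈ normalized D) (hlt : ∀ l ≠ k, relEntropy w k l < relEntropy v k l) :
    0 < Φ (encode v - encode w) := by
  have := Fintype.ofFinite D
  obtain ⟨γ, hγ, hΦ⟩ := h.exists_map_encode_sub_one_eq_sum_relEntropy
  have hunit : ∑ l, γ l * (relEntropy v k l + relEntropy w k l) = 1 := by
    simp only [mul_add, Finset.sum_add_distrib]
    rw [← hΦ v hv, ← hΦ w hw, ← map_add, ← h.map_unit]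
    congr 1
    ring
  have hdiff : Φ (encode v - encode w) = ∑ l, γ l * (relEntropy v k l - relEntropy w k l) := by
    simp only [mul_sub, Finset.sum_sub_distrib]
    rw [← hΦ v hv, ← hΦ w hw, ← map_sub, sub_sub_sub_cancel_right]
  obtain ⟨l, -, hl⟩ := Finset.exists_ne_zero_of_sum_ne_zero (hunit.trans_ne one_ne_zero)
  have hlk : l ≠ k := by
    rintro rfl
    simp [relEntropy_self] at hl
  rw [hdiff]
  refine Finset.sum_pos' (fun l _ => ?_) ⟨l, Finset.mem_univ l, mul_pos
    ((hγ l hlk).lt_of_ne' (left_ne_zero_of_mul hl)) (sub_pos.2 (hlt l hlk))⟩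
  rcases eq_or_ne l k with rfl | hlk
  · simp [relEntropy_self]
  · exact mul_nonneg (hγ l hlk) (sub_nonneg.2 (hlt l hlk).le)

end IsCharacterPair

section StrictlyDominates

variable {d : ℕ} {ι κ : Type u} [Fintype ι] [Fintype κ]

/-- The strict inequalities between all the divergences of two families of tuples, in terms of
the entrywise logarithms `v` and `w` of the tuples. -/
structure StrictlyDominates (v : ι → Fin d → ℝ) (w : κ → Fin d → ℝ) : Prop where
  left_mem : encode v ∈ normalized (Fin d)
  right_mem : encode w ∈ normalized (Fin d)
  sum_exp_lt : ∀ α, memAminus α → notBasis α →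
    ∑ j, Real.exp (∑ k, α k * w j k) < ∑ i, Real.exp (∑ k, α k * v i k)
  lt_sum_exp : ∀ α, memAplus α → notBasis α →
    ∑ i, Real.exp (∑ k, α k * v i k) < ∑ j, Real.exp (∑ k, α k * w j k)
  exists_forall_lt : ∀ β, memBminus β → β ≠ 0 →
    ∃ i, ∀ j, ∑ k, β k * w j k < ∑ k, β k * v i k
  relEntropy_lt : ∀ k l, k ≠ l → relEntropy w k l < relEntropy v k l

namespace StrictlyDominates

variable {v : ι → Fin d → ℝ} {w : κ → Fin d → ℝ}

lemma relEntropy_pos (h : StrictlyDominates v w) {k l : Fin d} (hkl : k ≠ l) :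
    0 < relEntropy v k l :=
  (relEntropy_nonneg h.right_mem k l).trans_lt (h.relEntropy_lt k l hkl)

lemma isPowerUniversal (h : StrictlyDominates v w) : IsPowerUniversal (encode v) := by
  refine isPowerUniversal_encode h.left_mem fun k l hkl => ?_
  by_contra! heq
  simpa [relEntropy, heq] using h.relEntropy_pos hkl

lemma isTropicallyInterior_zero (h : StrictlyDominates v w) : IsTropicallyInterior v 0 := by
  refine fun k => ⟨fun i => Real.exp (v i k), ⟨fun i => (Real.exp_pos _).le, ?_⟩, fun l hl => ?_⟩
  · rw [← mass_encode, h.left_mem.2]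
  · simpa [relEntropy] using h.relEntropy_pos hl.symm

lemma isTropicallyInterior (h : StrictlyDominates v w) (j : κ) :
    IsTropicallyInterior v (w j) := by
  intro k
  have : Nonempty (Fin d) := ⟨k⟩
  have := nonempty_of_encode_mem_normalized h.left_mem
  obtain ⟨a, ha, hpos⟩ := exists_mem_stdSimplex_forall_sum_pos
    (δ := fun i (l : {l // l ≠ k}) => v i k - v i l - (w j k - w j l)) fun c hc hc0 => by
      set β : Fin d → ℝ := fun l => if hl : l = k then ∑ m, c m else -c ⟨l, hl⟩
      have hβk : β k = ∑ m, c m := dif_pos rfl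
      have hβl (l : {l // l ≠ k}) : β l = -c l := dif_neg l.2
      have hsum : ∑ l, β l = 0 := by
        simp [Fintype.sum_eq_add_sum_subtype_ne _ k, hβk, hβl]
      have hβ0 : β ≠ 0 := fun hβ0 => hc0 (funext fun l => by simpa [hβl l] using congrFun hβ0 l)
      have hβB : memBminus β := ⟨hsum, k, hβk ▸ Finset.sum_nonneg fun m _ => hc m,
        fun l hl => (hβl ⟨l, hl⟩).trans_le (neg_nonpos.2 (hc _))⟩
      have htilt (x : Fin d → ℝ) : tilt β k x = ∑ l : {l // l ≠ k}, c l * (x k - x l) := by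
        simp [tilt, Fintype.sum_eq_add_sum_subtype_ne _ k, hβl]
      obtain ⟨i, hi⟩ := h.exists_forall_lt β hβB hβ0
      refine ⟨i, ?_⟩
      have hij := sub_pos.2 (hi j)
      rw [sum_mul_eq_add_tilt β k, sum_mul_eq_add_tilt β k, hsum, zero_mul, zero_mul, zero_add,
        zero_add, htilt, htilt, ← Finset.sum_sub_distrib] at hij
      simpa only [← mul_sub] using hij
  refine ⟨a, ha, fun l hl => ?_⟩
  have hl := hpos ⟨l, hl⟩
  simp only [mul_sub (a _), Finset.sum_sub_distrib, ← Finset.sum_mul, ha.2, one_mul] at hl ⊢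
  linarith

theorem exists_mul_mem_majCone (h : StrictlyDominates v w) :
    ∃ η : ℝ, 0 < η ∧ ∃ r ∈ nonneg (Fin d), r ≠ 0 ∧
      r * (encode v - encode w - η • (encode v + encode w - 2)) ∈ majCone (Fin d) := by
  refine exists_mul_mem_majCone_of_isTropicallyInterior h.left_mem h.right_mem h.isPowerUniversal
    h.isTropicallyInterior_zero h.isTropicallyInterior fun F Φ hF => ?_
  have he := mass_eq_zero_of_mem_majCone (add_sub_two_mem_majCone h.left_mem h.right_mem)
  refine hF.map_pos he (fun l => ?_) (fun _ α hA hα hX => ?_) (fun _ α hA hα hX => ?_) ?_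
  · rw [map_sub, h.left_mem.2, h.right_mem.2, sub_self]
  · rw [map_sub, map_encode_of_map_X_eq_exp hX, map_encode_of_map_X_eq_exp hX]
    exact sub_pos.2 (h.sum_exp_lt α hA hα)
  · rw [map_sub, map_encode_of_map_X_eq_exp hX, map_encode_of_map_X_eq_exp hX]
    exact sub_neg.2 (h.lt_sum_exp α hA hα)
  · rintro k rfl
    exact hF.map_encode_sub_encode_pos h.left_mem h.right_mem fun l hl =>
      h.relEntropy_lt k l hl.symm

lemma exists_contraction (h : StrictlyDominates v w) : ∃ θ : ℝ, 0 < θ ∧ θ < 1 ∧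
    ∃ r ∈ nonneg (Fin d), r ≠ 0 ∧
      r * (θ • (encode v - 1) - (encode w - 1)) ∈ majCone (Fin d) := by
  obtain ⟨η, hη, r, hr, hr0, hmem⟩ := h.exists_mul_mem_majCone
  refine ⟨(1 + η)⁻¹, by positivity, inv_lt_one_of_one_lt₀ (by linarith), r, hr, hr0, ?_⟩
  have hslack := mul_mem_majCone (smul_mem_nonneg hη.le hr) (sub_one_mem_majCone h.left_mem)
  have hscale := (majCone (Fin d)).smul_mem (by positivity : 0 ≤ (1 + η)⁻¹)
    (add_mem hmem hslack)
  convert hscale using 1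
  have hinv : algebraMap ℝ (TupleAlgebra (Fin d)) (1 + η)⁻¹ * (1 + algebraMap ℝ _ η) = 1 := by
    simpa only [map_mul, map_add, map_one] using congrArg (algebraMap ℝ (TupleAlgebra (Fin d)))
      (inv_mul_cancel₀ (by positivity : 1 + η ≠ 0))
  simp only [Algebra.smul_def]
  linear_combination (r * (encode w - 1)) * hinv

end StrictlyDominates

end StrictlyDominates

/-! ### A gap of one power -/

lemma pow_lt_pow_succ_of_one_sub_le {θ x y : ℝ} {K : ℕ} (h0 : 0 < θ) (h1 : θ < 1)
    (hK : θ * (K + 1) < K) (hx0 : 0 < x) (hx1 : x < 1) (hy : 1 - y ≤ θ * (1 - x)) :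
    x ^ K < y ^ (K + 1) := by
  have hBernoulli := rpow_one_add_le_one_add_mul_self (s := x - 1) (by linarith) h0.le h1.le
  rw [add_sub_cancel] at hBernoulli
  calc x ^ K = x ^ (K : ℝ) := (Real.rpow_natCast _ _).symm
    _ < x ^ (θ * ((K + 1 : ℕ) : ℝ)) :=
        Real.rpow_lt_rpow_of_exponent_gt hx0 hx1 (by push_cast; exact hK)
    _ = (x ^ θ) ^ (K + 1) := by rw [Real.rpow_mul hx0.le, Real.rpow_natCast]
    _ ≤ y ^ (K + 1) := pow_le_pow_left₀ (Real.rpow_nonneg hx0.le _) (by linarith) _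

lemma pow_succ_lt_pow_of_sub_one_le {θ x y : ℝ} {K : ℕ} (h0 : 0 < θ) (h1 : θ < 1)
    (hK : x ≤ K * (1 - θ)) (hx : 1 < x) (hy0 : 0 ≤ y) (hy : y - 1 ≤ θ * (x - 1)) :
    y ^ (K + 1) < x ^ K := by
  have hx0 : 0 < x := one_pos.trans hx
  have hx1 : 0 < x - 1 := sub_pos.2 hx
  set c := (1 - θ) / x with hc
  have hc0 : 0 < c := div_pos (sub_pos.2 h1) hx0
  have hcx : c * x = 1 - θ := div_mul_cancel₀ _ hx0.ne'
  have hKc : 1 ≤ K * c := by rwa [hc, ← mul_div_assoc, le_div_iff₀ hx0, one_mul]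
  set z := 1 + θ * (x - 1) with hz
  have hz0 : 0 < z := by positivity
  have hzx : z < x := by nlinarith
  have hsplit : z * (1 + c * (x - 1)) ≤ x := by
    have : z * c ≤ 1 - θ := by rw [← hcx, mul_comm]; gcongr
    nlinarith
  calc y ^ (K + 1) ≤ z ^ (K + 1) := pow_le_pow_left₀ hy0 (by linarith) _
    _ = z ^ K * z := pow_succ _ _
    _ < z ^ K * (1 + K * (c * (x - 1))) := by
        gcongr
        nlinarith
    _ ≤ z ^ K * (1 + c * (x - 1)) ^ K := by
        gcongr
        exact one_add_mul_le_pow (by linarith [mul_pos hc0 hx1]) K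
    _ = (z * (1 + c * (x - 1))) ^ K := (mul_pow _ _ _).symm
    _ ≤ x ^ K := pow_le_pow_left₀ (by positivity) hsplit _

section Tilt

variable {D : Type*} [Fintype D] {ι κ : Type*} [Fintype ι] [Fintype κ] {α : D → ℝ} {k : D}
  {v : ι → D → ℝ} {w : κ → D → ℝ}

lemma tilt_le_tilt_add (h1 : ∑ l, α l = 1) (hα : ∀ l ≠ k, α l ≤ 0) {x y : D → ℝ} {M : ℝ}
    (hxy : ∀ l ≠ k, x k - x l ≤ y k - y l + M) : tilt α k x ≤ tilt α k y + (α k - 1) * M := by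
  classical
  have htilt (z : D → ℝ) : tilt α k z = ∑ l : {l // l ≠ k}, -α l * (z k - z l) := by
    simp [tilt, Fintype.sum_eq_add_sum_subtype_ne _ k]
  have hk : α k - 1 = ∑ l : {l // l ≠ k}, -α l := by
    rw [← h1, Fintype.sum_eq_add_sum_subtype_ne _ k, Finset.sum_neg_distrib]
    ring
  rw [htilt, htilt, hk, Finset.sum_mul, ← Finset.sum_add_distrib]
  refine Finset.sum_le_sum fun l _ => ?_
  rw [← mul_add]
  exact mul_le_mul_of_nonneg_left (hxy l l.2) (neg_nonneg.2 (hα l l.2))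

lemma tilt_le_mul_norm (h1 : ∑ l, α l = 1) (hα : ∀ l ≠ k, α l ≤ 0) (x : D → ℝ) :
    tilt α k x ≤ (α k - 1) * (2 * ‖x‖) := by
  have hx (l : D) := abs_le.1 (norm_le_pi_norm x l)
  simpa [tilt] using tilt_le_tilt_add h1 hα (y := 0) (M := 2 * ‖x‖) fun l _ => by
    simp only [Pi.zero_apply]
    linarith [hx k, hx l]

lemma sum_mul_tilt (a : ι → ℝ) (v : ι → D → ℝ) :
    ∑ i, a i * tilt α k (v i) = tilt α k (∑ i, a i • v i) := by
  simp only [tilt, Finset.mul_sum, Finset.sum_apply, ← Finset.sum_sub_distrib, Pi.smul_apply,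
    smul_eq_mul]
  rw [Finset.sum_comm]
  exact Finset.sum_congr rfl fun l _ => Finset.sum_congr rfl fun i _ => by ring

lemma exists_tilt_add_le (h1 : ∑ l, α l = 1) (hα : ∀ l ≠ k, α l ≤ 0) {a : ι → ℝ}
    (ha : a ∈ stdSimplex ℝ ι) {y : D → ℝ} {μ : ℝ}
    (hy : ∀ l ≠ k, y k - y l + μ ≤ ∑ i, a i * (v i k - v i l)) :
    ∃ i, tilt α k y + (α k - 1) * μ ≤ tilt α k (v i) := by
  obtain ⟨i₀, -⟩ := Finset.exists_ne_zero_of_sum_ne_zero (ha.2.trans_ne one_ne_zero)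
  have : Nonempty ι := ⟨i₀⟩
  obtain ⟨i, hi⟩ := Finite.exists_max fun i => tilt α k (v i)
  refine ⟨i, ?_⟩
  have hmean : ∑ i, a i * tilt α k (v i) ≤ tilt α k (v i) := by
    calc ∑ i, a i * tilt α k (v i) ≤ ∑ j, a j * tilt α k (v i) :=
          Finset.sum_le_sum fun j _ => mul_le_mul_of_nonneg_left (hi j) (ha.1 j)
      _ = tilt α k (v i) := by rw [← Finset.sum_mul, ha.2, one_mul]
  rw [sum_mul_tilt] at hmean
  have := tilt_le_tilt_add h1 hα (x := y) (y := ∑ i, a i • v i) (M := -μ) fun l hl => by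
    have := hy l hl
    simp only [mul_sub, Finset.sum_sub_distrib] at this
    simp only [Finset.sum_apply, Pi.smul_apply, smul_eq_mul]
    linarith
  linarith

lemma sum_exp_le_exp_of_tilt_le (h1 : ∑ l, α l = 1) (hv : encode v ∈ normalized D) {C : ℝ}
    (hC : ∀ i, tilt α k (v i) ≤ C) : ∑ i, Real.exp (∑ l, α l * v i l) ≤ Real.exp C := by
  calc ∑ i, Real.exp (∑ l, α l * v i l) ≤ ∑ i, Real.exp (v i k) * Real.exp C := by
        refine Finset.sum_le_sum fun i _ => ?_
        rw [sum_mul_eq_add_tilt α k, h1, one_mul, ← Real.exp_add]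
        exact Real.exp_le_exp.2 (add_le_add_right (hC i) _)
    _ = Real.exp C := by rw [← Finset.sum_mul, ← mass_encode, hv.2, one_mul]

lemma exp_le_sum_exp_of_le_tilt (h1 : ∑ l, α l = 1) {C : ℝ} {i : ι}
    (hC : C ≤ tilt α k (v i)) : Real.exp (C - ‖v‖) ≤ ∑ i, Real.exp (∑ l, α l * v i l) := by
  refine le_trans ?_ (Finset.single_le_sum (f := fun i => Real.exp (∑ l, α l * v i l))
    (fun _ _ => (Real.exp_pos _).le) (Finset.mem_univ i))
  have := abs_le.1 ((norm_le_pi_norm (v i) k).trans (norm_le_pi_norm v i))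
  rw [sum_mul_eq_add_tilt α k, h1, one_mul]
  exact Real.exp_le_exp.2 (by linarith)

lemma sum_exp_le_or_pow_succ_lt_pow [Nonempty κ] (hv : encode v ∈ normalized D)
    (hw : encode w ∈ normalized D) {μ : ℝ} (hμ : 0 < μ)
    (hmargin : ∀ j k, ∃ a ∈ stdSimplex ℝ ι,
      ∀ l ≠ k, w j k - w j l + μ ≤ ∑ i, a i * (v i k - v i l))
    {K : ℕ} (hK : 4 * ‖v‖ < K * μ) (h1 : ∑ l, α l = 1) (hα : ∀ l ≠ k, α l ≤ 0) (hk : 1 < α k) :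
    ∑ i, Real.exp (∑ l, α l * v i l) ≤ Real.exp (2 * ‖v‖ / μ * (2 * ‖v‖)) ∨
      (∑ j, Real.exp (∑ l, α l * w j l)) ^ (K + 1) < (∑ i, Real.exp (∑ l, α l * v i l)) ^ K := by
  have ht : 0 < α k - 1 := sub_pos.2 hk
  have hvi (i : ι) : tilt α k (v i) ≤ (α k - 1) * (2 * ‖v‖) :=
    (tilt_le_mul_norm h1 hα _).trans (by gcongr; exact norm_le_pi_norm v i)
  rcases lt_or_ge (α k - 1) (2 * ‖v‖ / μ) with hcase | hcase
  · exact .inl (sum_exp_le_exp_of_tilt_le h1 hv fun i => (hvi i).trans (by gcongr))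
  right
  obtain ⟨j, hj⟩ := Finite.exists_max fun j => tilt α k (w j)
  obtain ⟨a, ha, hlt⟩ := hmargin j k
  obtain ⟨i, hi⟩ := exists_tilt_add_le h1 hα ha hlt
  set t := α k - 1
  set C := tilt α k (w j)
  have hCt := hi.trans (hvi i)
  rw [div_le_iff₀ hμ] at hcase
  have hexponent : ((K + 1 : ℕ) : ℝ) * C < K * (C + t * μ - ‖v‖) := by
    have h2 : K * (2 * ‖v‖) ≤ K * (t * μ) := by gcongr
    have h3 : t * (4 * ‖v‖) < t * (K * μ) := by gcongr
    push_cast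
    nlinarith [mul_pos ht hμ]
  calc (∑ j, Real.exp (∑ l, α l * w j l)) ^ (K + 1) ≤ Real.exp C ^ (K + 1) :=
        pow_le_pow_left₀ (Finset.sum_nonneg fun _ _ => (Real.exp_pos _).le)
          (sum_exp_le_exp_of_tilt_le h1 hw hj) _
    _ < Real.exp (C + t * μ - ‖v‖) ^ K := by
        rw [← Real.exp_nat_mul, ← Real.exp_nat_mul]
        exact Real.exp_lt_exp.2 hexponent
    _ ≤ _ := pow_le_pow_left₀ (Real.exp_pos _).le (exp_le_sum_exp_of_le_tilt h1 hi) _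

end Tilt

section TropicalInterior

variable {D ι κ : Type*} [Fintype ι] {v : ι → D → ℝ}

lemma IsTropicallyInterior.nsmul {a : D → ℝ} (h : IsTropicallyInterior v a) {K : ℕ}
    (hK : K ≠ 0) : IsTropicallyInterior (fun p : Fin K → ι => ∑ t, v (p t)) (K • a) := by
  classical
  intro k
  obtain ⟨b, hb, hlt⟩ := h k
  set c : (Fin K → ι) → ℝ := ∑ i, b i • Pi.single (fun _ => i) 1 with hc
  have hsum (G : (Fin K → ι) → ℝ) : ∑ p, c p * G p = ∑ i, b i * G fun _ => i := by
    simp only [hc, Finset.sum_apply, Finset.sum_mul]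
    rw [Finset.sum_comm]
    simp [Pi.single_apply]
  refine ⟨c, (convex_stdSimplex ℝ _).sum_mem (fun i _ => hb.1 i) hb.2
    fun i _ => single_mem_stdSimplex ℝ _, fun l hl => ?_⟩
  rw [hsum]
  have := (mul_lt_mul_iff_right₀ (by positivity : 0 < (K : ℝ))).2 (hlt l hl)
  simpa [mul_sub, Finset.mul_sum, mul_left_comm] using this

lemma isTropicallyInterior_inv_smul_sum [Fintype D] [Fintype κ] {w : κ → D → ℝ} {μ : ℝ}
    (hmargin : ∀ j k, ∃ a ∈ stdSimplex ℝ ι,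
      ∀ l ≠ k, w j k - w j l + μ ≤ ∑ i, a i * (v i k - v i l))
    {K : ℕ} (hK0 : K ≠ 0) (hK : 2 * ‖w‖ < K * μ) (q : Fin (K + 1) → κ) :
    IsTropicallyInterior v ((K : ℝ)⁻¹ • ∑ t, w (q t)) := by
  intro k
  choose a ha hle using fun t => hmargin (q t) k
  have hw (j : κ) (l : D) := abs_le.1 ((norm_le_pi_norm (w j) l).trans (norm_le_pi_norm w j))
  refine ⟨∑ t, ((K : ℝ) + 1)⁻¹ • a t, (convex_stdSimplex ℝ ι).sum_mem
    (fun _ _ => by positivity) (by simp [mul_inv_cancel₀ (by positivity : (K : ℝ) + 1 ≠ 0)])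
    fun t _ => ha t, fun l hl => ?_⟩
  set A := ∑ t, (w (q t) k - w (q t) l) with hA
  have hAle : A ≤ (K + 1) * (2 * ‖w‖) := by
    calc A ≤ ∑ _t : Fin (K + 1), 2 * ‖w‖ :=
          Finset.sum_le_sum fun t _ => by linarith [hw (q t) k, hw (q t) l]
      _ = _ := by simp
  have hK1 : (0 : ℝ) < K := by positivity
  calc ((K : ℝ)⁻¹ • ∑ t, w (q t)) k - ((K : ℝ)⁻¹ • ∑ t, w (q t)) l = (K : ℝ)⁻¹ * A := by
        simp [hA, mul_sub]
    _ < ((K : ℝ) + 1)⁻¹ * (A + (K + 1) * μ) := by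
        rw [inv_mul_lt_iff₀ hK1, ← mul_assoc, ← div_eq_mul_inv, div_mul_eq_mul_div,
          lt_div_iff₀ (by positivity)]
        nlinarith
    _ = ((K : ℝ) + 1)⁻¹ * ∑ t, (w (q t) k - w (q t) l + μ) := by
        simp [hA, Finset.sum_add_distrib]
    _ ≤ ((K : ℝ) + 1)⁻¹ * ∑ t, ∑ i, a t i * (v i k - v i l) := by
        gcongr with t
        exact hle t l hl
    _ = ∑ i, (∑ t, ((K : ℝ) + 1)⁻¹ • a t) i * (v i k - v i l) := by
        rw [Finset.sum_comm]
        simp [Finset.mul_sum, Finset.sum_mul, mul_assoc]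

end TropicalInterior

section CharacterPair

variable {D : Type*} {e f g : TupleAlgebra D} {F : TupleAlgebra D →ₐ[ℝ] ℝ}
  {Φ : TupleAlgebra D →ₗ[ℝ] ℝ}

namespace IsCharacterPair

lemma map_pos_of_mem_nonneg (h : IsCharacterPair e F Φ) {r : TupleAlgebra D}
    (hr : r ∈ nonneg D) (h0 : r ≠ 0) : 0 < F r := by
  have hsupp : r.coeff.support.Nonempty := by
    rw [Finset.nonempty_iff_ne_empty, Ne, Finsupp.support_eq_empty]
    simpa using h0
  rw [eq_sum_smul_X r, map_sum]
  refine Finset.sum_pos (fun a ha => ?_) hsupp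
  rw [map_smul, smul_eq_mul]
  exact mul_pos ((hr a).lt_of_ne' (Finsupp.mem_support_iff.1 ha)) (h.pos a)

lemma map_pow_sub_one (h : IsCharacterPair e F Φ) (hf : f ∈ normalized D) (n : ℕ) :
    Φ (f ^ n - 1) = (∑ i ∈ Finset.range n, F f ^ i) * Φ (f - 1) := by
  rw [← geom_sum_mul, h.map_mul _ _ (mass_eq_zero_of_mem_majCone (sub_one_mem_majCone hf)), map_sum]
  simp only [map_pow]

lemma map_sub_one_le (h : IsCharacterPair e F Φ) (hf : f ∈ normalized D) (hg : g ∈ normalized D)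
    {θ : ℝ} {r : TupleAlgebra D} (hr : r ∈ nonneg D) (h0 : r ≠ 0)
    (hmem : r * (θ • (f - 1) - (g - 1)) ∈ majCone D) : Φ (g - 1) ≤ θ * Φ (f - 1) := by
  have hmul := h.map_nonneg _ hmem
  rw [h.map_mul _ _ fun k => by simp [hf.2 k, hg.2 k], map_sub, map_smul, smul_eq_mul] at hmul
  exact sub_nonneg.1 (nonneg_of_mul_nonneg_right hmul (h.map_pos_of_mem_nonneg hr h0))

lemma map_sub_one_pos {K : ℕ} (h : IsCharacterPair (f ^ K + g ^ (K + 1) - 2) F Φ)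
    (hf : f ∈ normalized D) (hg : g ∈ normalized D) {θ : ℝ} (hle : Φ (g - 1) ≤ θ * Φ (f - 1)) :
    0 < Φ (f - 1) := by
  refine (h.map_nonneg _ (sub_one_mem_majCone hf)).lt_of_ne' fun hf0 => ?_
  have hg0 : Φ (g - 1) = 0 :=
    le_antisymm (by simpa [hf0] using hle) (h.map_nonneg _ (sub_one_mem_majCone hg))
  have hunit : f ^ K + g ^ (K + 1) - 2 = (f ^ K - 1) + (g ^ (K + 1) - 1) := by ring
  have := h.map_unit
  rw [hunit, map_add, h.map_pow_sub_one hf, h.map_pow_sub_one hg, hf0, hg0] at this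
  simp at this

lemma map_pow_sub_pow_pos_of_eq_mass {k : D} (h : IsCharacterPair e (mass k) Φ)
    (hf : f ∈ normalized D) (hg : g ∈ normalized D) {K : ℕ} {θ : ℝ} (hK : θ * (K + 1) < K)
    (hpos : 0 < Φ (f - 1)) (hle : Φ (g - 1) ≤ θ * Φ (f - 1)) :
    0 < Φ (f ^ K - g ^ (K + 1)) := by
  have hcalc : Φ (f ^ K - g ^ (K + 1)) = K * Φ (f - 1) - (K + 1) * Φ (g - 1) := by
    rw [← sub_sub_sub_cancel_right _ _ 1, map_sub, h.map_pow_sub_one hf, h.map_pow_sub_one hg]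
    simp [hf.2, hg.2]
  rw [hcalc, sub_pos]
  calc ((K : ℝ) + 1) * Φ (g - 1) ≤ (K + 1) * (θ * Φ (f - 1)) := by gcongr
    _ = θ * (K + 1) * Φ (f - 1) := by ring
    _ < K * Φ (f - 1) := by gcongr

lemma map_pow_sub_pow_pos {d : ℕ} [NeZero d] {f g : TupleAlgebra (Fin d)}
    {F : TupleAlgebra (Fin d) →ₐ[ℝ] ℝ} {Φ : TupleAlgebra (Fin d) →ₗ[ℝ] ℝ} {K : ℕ} {θ : ℝ}
    (h : IsCharacterPair (f ^ K + g ^ (K + 1) - 2) F Φ) (hf : f ∈ normalized (Fin d))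
    (hg : g ∈ normalized (Fin d)) (h0 : 0 < θ) (h1 : θ < 1) (hK : θ * (K + 1) < K)
    (hle : Φ (g - 1) ≤ θ * Φ (f - 1))
    (hlarge : ∀ α, memAminus α → notBasis α → (∀ v, F (X v) = Real.exp (∑ k, α k * v k)) →
      F f ≤ K * (1 - θ) ∨ F g ^ (K + 1) < F f ^ K) : 0 < Φ (f ^ K - g ^ (K + 1)) := by
  have hfK := pow_mem hf K
  have hgK := pow_mem hg (K + 1)
  have he := mass_eq_zero_of_mem_majCone (add_sub_two_mem_majCone hfK hgK)
  have hpos := h.map_sub_one_pos hf hg hle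
  have hmap {x : TupleAlgebra (Fin d)} (hx : x ∈ normalized (Fin d)) :=
    h.map_eq_map_unit_mul he (mass_eq_zero_of_mem_majCone (sub_one_mem_majCone hx))
  have hF {x : TupleAlgebra (Fin d)} (hx : x ∈ normalized (Fin d)) : 0 < F x :=
    h.map_pos_of_mem_nonneg hx.1 (ne_zero_of_mem_normalized hx)
  have hFf := hmap hf
  have hFg := hmap hg
  set E := F (f ^ K + g ^ (K + 1) - 2)
  rw [map_sub, map_one] at hFf hFg
  refine h.map_pos he (fun k => by rw [map_sub, hfK.2, hgK.2, sub_self])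
    (fun hE α hA hα hX => ?_) (fun hE _ _ _ _ => ?_) ?_
  · rw [map_sub, map_pow, map_pow, sub_pos]
    refine (hlarge α hA hα hX).elim (fun hsmall => ?_) id
    exact pow_succ_lt_pow_of_sub_one_le h0 h1 hsmall (by linarith [mul_pos hE hpos])
      (hF hg).le (by rw [hFf, hFg]; nlinarith)
  · rw [map_sub, map_pow, map_pow, sub_neg]
    exact pow_lt_pow_succ_of_one_sub_le h0 h1 hK (hF hf)
      (by linarith [mul_neg_of_neg_of_pos hE hpos]) (by nlinarith)
  · rintro k rfl
    exact h.map_pow_sub_pow_pos_of_eq_mass hf hg hK hpos hle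

end IsCharacterPair

end CharacterPair

lemma one_lt_of_notBasis {d : ℕ} {α : Fin d → ℝ} {k : Fin d} (h1 : ∑ l, α l = 1)
    (hk : 1 ≤ α k) (hα : ∀ l ≠ k, α l ≤ 0) (hbasis : notBasis α) : 1 < α k := by
  refine hk.lt_of_ne' fun hk1 => hbasis k (funext fun l => ?_)
  have hsum : ∑ l ∈ Finset.univ.erase k, α l = 0 := by
    linarith [Finset.add_sum_erase _ α (Finset.mem_univ k)]
  rcases eq_or_ne l k with rfl | hl
  · rw [hk1, Pi.single_eq_same]
  · rw [Pi.single_eq_of_ne hl]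
    exact (Finset.sum_eq_zero_iff_of_nonpos fun l hl => hα l (Finset.ne_of_mem_erase hl)).1 hsum l
      (Finset.mem_erase.2 ⟨hl, Finset.mem_univ l⟩)

namespace StrictlyDominates

variable {d : ℕ} {ι κ : Type u} [Fintype ι] [Fintype κ] {v : ι → Fin d → ℝ}
  {w : κ → Fin d → ℝ}

lemma exists_pow_mul_mem_majCone_of_forall_isCharacterPair_pos (h : StrictlyDominates v w)
    {μ : ℝ} (hmargin : ∀ j k, ∃ a ∈ stdSimplex ℝ ι,
      ∀ l ≠ k, w j k - w j l + μ ≤ ∑ i, a i * (v i k - v i l))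
    {K : ℕ} (hK0 : K ≠ 0) (hK : 2 * ‖w‖ < K * μ)
    (hpos : ∀ F Φ, IsCharacterPair (encode v ^ K + encode w ^ (K + 1) - 2) F Φ →
      0 < Φ (encode v ^ K - encode w ^ (K + 1))) :
    ∃ r ∈ nonneg (Fin d), r ≠ 0 ∧
      r * (encode v ^ K - encode w ^ (K + 1)) ∈ majCone (Fin d) := by
  have hvK := pow_mem h.left_mem K
  have hwK := pow_mem h.right_mem (K + 1)
  have hunit := add_sub_two_mem_majCone hvK hwK
  have huniv := h.isPowerUniversal.pow hK0
  have hzero := h.isTropicallyInterior_zero.nsmul hK0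
  have hword (q : Fin (K + 1) → κ) :=
    (isTropicallyInterior_inv_smul_sum hmargin hK0 hK q).nsmul hK0
  have hcancel (x : Fin d → ℝ) : K • (K : ℝ)⁻¹ • x = x := by
    rw [← Nat.cast_smul_eq_nsmul ℝ, smul_inv_smul₀ (Nat.cast_ne_zero.2 hK0)]
  simp only [hcancel] at hword
  rw [smul_zero] at hzero
  simp only [encode_pow] at hvK hwK hunit huniv hpos ⊢
  obtain ⟨η, hη, r, hr, hr0, hmem⟩ :=
    exists_mul_mem_majCone_of_isTropicallyInterior hvK hwK huniv hzero hword hpos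
  refine ⟨r, hr, hr0, ?_⟩
  have := add_mem hmem (mul_mem_majCone (smul_mem_nonneg hη.le hr) hunit)
  rwa [smul_mul_assoc, ← mul_smul_comm, ← mul_add, sub_add_cancel] at this

lemma exists_pow_mul_mem_majCone [NeZero d] (h : StrictlyDominates v w) :
    ∃ K : ℕ, ∃ r ∈ nonneg (Fin d), r ≠ 0 ∧
      r * (encode v ^ K - encode w ^ (K + 1)) ∈ majCone (Fin d) := by
  obtain ⟨θ, h0, h1, r, hr, hr0, hmem⟩ := h.exists_contraction
  obtain ⟨μ, hμ, hmargin⟩ := IsTropicallyInterior.exists_margin h.isTropicallyInterior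
  have := nonempty_of_encode_mem_normalized h.right_mem
  set b := Real.exp (2 * ‖v‖ / μ * (2 * ‖v‖))
  have hb1 : 1 ≤ b := Real.one_le_exp (by positivity)
  obtain ⟨K, hK⟩ := exists_nat_gt (max (max (4 * ‖v‖ / μ) (2 * ‖w‖ / μ)) (b / (1 - θ)))
  rw [max_lt_iff, max_lt_iff, div_lt_iff₀ hμ, div_lt_iff₀ hμ, div_lt_iff₀ (sub_pos.2 h1)] at hK
  obtain ⟨⟨hKv, hKw⟩, hKb⟩ := hK
  have hK0 : K ≠ 0 := by
    rintro rfl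
    rw [Nat.cast_zero, zero_mul] at hKb
    linarith
  refine ⟨K, h.exists_pow_mul_mem_majCone_of_forall_isCharacterPair_pos hmargin hK0 hKw
    fun F Φ hF => ?_⟩
  have hle := hF.map_sub_one_le h.left_mem h.right_mem hr hr0 hmem
  refine hF.map_pow_sub_pow_pos h.left_mem h.right_mem h0 h1 (by linarith) hle
    fun α hA hbasis hX => ?_
  obtain ⟨hsum, k, hk, hα⟩ := hA
  rw [map_encode_of_map_X_eq_exp hX, map_encode_of_map_X_eq_exp hX]
  exact (sum_exp_le_or_pow_succ_lt_pow h.left_mem h.right_mem hμ hmargin hKv hsum hα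
    (one_lt_of_notBasis hsum hk hα hbasis)).imp_left fun hle => hle.trans hKb.le

theorem eventually_pow_sub_pow_mem_majCone [NeZero d] (h : StrictlyDominates v w) :
    ∀ᶠ n : ℕ in atTop, encode v ^ n - encode w ^ n ∈ majCone (Fin d) := by
  obtain ⟨K, r, hr, hr0, hmem⟩ := h.exists_pow_mul_mem_majCone
  exact CatalyticMajorization.eventually_pow_sub_pow_mem_majCone h.left_mem.1 h.right_mem
    h.isPowerUniversal hr hr0 hmem

end StrictlyDominates

/-! ### Matrix divergences in logarithmic coordinates -/

section Exponents

variable {d : ℕ} {α β : Fin d → ℝ}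

lemma one_lt_iSup_of_memAminus (hα : memAminus α) (hbasis : notBasis α) : 1 < ⨆ k, α k := by
  obtain ⟨hsum, k, hk, hle⟩ := hα
  exact (one_lt_of_notBasis hsum hk hle hbasis).trans_le
    (le_ciSup (Set.finite_range α).bddAbove k)

lemma iSup_lt_one_of_memAplus [NeZero d] (hα : memAplus α) (hbasis : notBasis α) :
    ⨆ k, α k < 1 := by
  obtain ⟨k, hk⟩ := exists_eq_ciSup_of_finite (f := α)
  have hadd := Finset.add_sum_erase _ α (Finset.mem_univ k)
  have herase : 0 ≤ ∑ l ∈ Finset.univ.erase k, α l := Finset.sum_nonneg fun l _ => hα.2 l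
  rw [hα.1] at hadd
  refine hk ▸ lt_of_le_of_ne (by linarith) fun hk1 => hbasis k (funext fun l => ?_)
  rcases eq_or_ne l k with rfl | hl
  · rw [hk1, Pi.single_eq_same]
  · rw [Pi.single_eq_of_ne hl]
    exact (Finset.sum_eq_zero_iff_of_nonneg fun l _ => hα.2 l).1 (by linarith) l
      (Finset.mem_erase.2 ⟨hl, Finset.mem_univ l⟩)

lemma iSup_pos_of_memBminus (hβ : memBminus β) (h0 : β ≠ 0) : 0 < ⨆ k, β k := by
  obtain ⟨k, hk⟩ : ∃ k, 0 < β k := by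
    by_contra! hle
    exact h0 (funext fun k =>
      (Finset.sum_eq_zero_iff_of_nonpos fun k _ => hle k).1 hβ.1 k (Finset.mem_univ k))
  exact hk.trans_le (le_ciSup (Set.finite_range β).bddAbove k)

end Exponents

section LogVec

variable {d m m' : ℕ} {P : Fin d → Fin m → ℝ} {Q : Fin d → Fin m' → ℝ}

lemma prod_rpow_eq_exp (hP : TupOK P) (α : Fin d → ℝ) (i : {i // i ∈ suppIdx P}) :
    ∏ k, P k i ^ α k = Real.exp (∑ k, α k * logVec P i k) := by
  rw [Real.exp_sum]
  refine Finset.prod_congr rfl fun k _ => ?_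
  rw [mul_comm, Real.exp_mul, exp_logVec hP]

lemma sum_prod_rpow_eq_sum_exp (hP : TupOK P) (α : Fin d → ℝ) :
    ∑ i ∈ suppIdx P, ∏ k, P k i ^ α k = ∑ i, Real.exp (∑ k, α k * logVec P i k) := by
  rw [← Finset.sum_coe_sort]
  exact Finset.sum_congr rfl fun i _ => prod_rpow_eq_exp hP α i

lemma exists_prod_rpow_eq_biSup (hP : TupOK P) [Nonempty {i // i ∈ suppIdx P}]
    (β : Fin d → ℝ) :
    ∃ i ∈ suppIdx P, ∏ k, P k i ^ β k = ⨆ i ∈ suppIdx P, ∏ k, P k i ^ β k := by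
  obtain ⟨i⟩ := ‹Nonempty {i // i ∈ suppIdx P}›
  refine Finset.mem_image.1 (Finset.ciSup_mem_image _ ⟨i, i.2, ?_⟩)
  rw [Real.sSup_empty, prod_rpow_eq_exp hP]
  positivity

lemma KL_eq_relEntropy (hP : TupOK P) (k l : Fin d) :
    KL (P k) (P l) = relEntropy (logVec P) k l := by
  rw [KL, ← sum_subtype_suppIdx (P := P) fun i hi => by
    rw [eq_zero_of_notMem_suppIdx hi k, zero_mul]]
  refine Finset.sum_congr rfl fun i _ => ?_
  rw [exp_logVec hP, Real.log_div (pos_of_mem_suppIdx hP i.2 k).ne'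
    (pos_of_mem_suppIdx hP i.2 l).ne']
  rfl

lemma sum_prod_rpow_pos (hP : TupOK P) [Nonempty {i // i ∈ suppIdx P}] (α : Fin d → ℝ) :
    0 < ∑ i ∈ suppIdx P, ∏ k, P k i ^ α k := by
  rw [sum_prod_rpow_eq_sum_exp hP]
  exact Finset.sum_pos (fun i _ => Real.exp_pos _) Finset.univ_nonempty

variable [Nonempty {i // i ∈ suppIdx P}] [Nonempty {j // j ∈ suppIdx Q}]

lemma sum_exp_lt_sum_exp_of_Dmat_lt (hP : TupOK P) (hQ : TupOK Q) {α : Fin d → ℝ}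
    (hα : 1 < ⨆ k, α k) (h : Dmat α Q < Dmat α P) :
    ∑ j, Real.exp (∑ k, α k * logVec Q j k) < ∑ i, Real.exp (∑ k, α k * logVec P i k) := by
  rw [← sum_prod_rpow_eq_sum_exp hP, ← sum_prod_rpow_eq_sum_exp hQ]
  have hpos : 0 < 1 / ((⨆ k, α k) - 1) := one_div_pos.2 (sub_pos.2 hα)
  exact (Real.log_lt_log_iff (sum_prod_rpow_pos hQ α) (sum_prod_rpow_pos hP α)).1
    ((mul_lt_mul_iff_right₀ hpos).1 h)

lemma sum_exp_lt_sum_exp_of_Dmat_lt_of_lt_one (hP : TupOK P) (hQ : TupOK Q) {α : Fin d → ℝ}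
    (hα : ⨆ k, α k < 1) (h : Dmat α Q < Dmat α P) :
    ∑ i, Real.exp (∑ k, α k * logVec P i k) < ∑ j, Real.exp (∑ k, α k * logVec Q j k) := by
  rw [← sum_prod_rpow_eq_sum_exp hP, ← sum_prod_rpow_eq_sum_exp hQ]
  have hneg : 1 / ((⨆ k, α k) - 1) < 0 := one_div_neg.2 (sub_neg.2 hα)
  exact (Real.log_lt_log_iff (sum_prod_rpow_pos hP α) (sum_prod_rpow_pos hQ α)).1
    ((mul_lt_mul_left_of_neg hneg).1 h)

lemma exists_forall_sum_lt_of_DmatT_lt (hP : TupOK P) (hQ : TupOK Q) {β : Fin d → ℝ}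
    (hβ : 0 < ⨆ k, β k) (h : DmatT β Q < DmatT β P) :
    ∃ i, ∀ j, ∑ k, β k * logVec Q j k < ∑ k, β k * logVec P i k := by
  obtain ⟨i, hi, hPi⟩ := exists_prod_rpow_eq_biSup hP β
  obtain ⟨j, hj, hQj⟩ := exists_prod_rpow_eq_biSup hQ β
  have hposP := prod_rpow_eq_exp hP β ⟨i, hi⟩ ▸ Real.exp_pos _
  have hposQ := prod_rpow_eq_exp hQ β ⟨j, hj⟩ ▸ Real.exp_pos _
  have hsup : ⨆ j ∈ suppIdx Q, ∏ k, Q k j ^ β k < ∏ k, P k i ^ β k := by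
    rw [DmatT, DmatT, mul_lt_mul_iff_right₀ (one_div_pos.2 hβ), ← hPi, ← hQj] at h
    rw [← hQj]
    exact (Real.log_lt_log_iff hposQ hposP).1 h
  have hlt := (Set.Finite.ciSup_lt_iff (suppIdx Q).finite_toSet
    ⟨j, hj, Real.sSup_empty.trans_le hposQ.le⟩).1 hsup
  refine ⟨⟨i, hi⟩, fun j => Real.exp_lt_exp.1 ?_⟩
  rw [← prod_rpow_eq_exp hP, ← prod_rpow_eq_exp hQ]
  exact hlt j j.2

end LogVec

theorem strictlyDominates_logVec {d m m' : ℕ} [NeZero d] {P : Fin d → Fin m → ℝ}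
    {Q : Fin d → Fin m' → ℝ} (hP : TupOK P) (hQ : TupOK Q)
    (hP1 : ∀ k, IsProbVec (P k)) (hQ1 : ∀ k, IsProbVec (Q k))
    (hA : ∀ α : Fin d → ℝ, (memAplus α ∨ memAminus α) → notBasis α → Dmat α Q < Dmat α P)
    (hB : ∀ β : Fin d → ℝ, memBminus β → β ≠ 0 → DmatT β Q < DmatT β P)
    (hKL : ∀ k l, k ≠ l → KL (Q k) (Q l) < KL (P k) (P l)) :
    StrictlyDominates (logVec P) (logVec Q) := by
  have hvP := encode_logVec_mem_normalized hP hP1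
  have hvQ := encode_logVec_mem_normalized hQ hQ1
  have := nonempty_of_encode_mem_normalized hvP
  have := nonempty_of_encode_mem_normalized hvQ
  exact {
    left_mem := hvP
    right_mem := hvQ
    sum_exp_lt := fun α hα hbasis => sum_exp_lt_sum_exp_of_Dmat_lt hP hQ
      (one_lt_iSup_of_memAminus hα hbasis) (hA α (.inr hα) hbasis)
    lt_sum_exp := fun α hα hbasis => sum_exp_lt_sum_exp_of_Dmat_lt_of_lt_one hP hQ
      (iSup_lt_one_of_memAplus hα hbasis) (hA α (.inl hα) hbasis)
    exists_forall_lt := fun β hβ h0 => exists_forall_sum_lt_of_DmatT_lt hP hQ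
      (iSup_pos_of_memBminus hβ h0) (hB β hβ h0)
    relEntropy_lt := fun k l hkl => by
      simpa only [KL_eq_relEntropy hP, KL_eq_relEntropy hQ] using hKL k l hkl }

end CatalyticMajorization

/-- **Catalytic matrix majorization with the explicit catalyst.**  Under the
strict divergence inequalities, for every sufficiently large `n` the vectors
`r⁽ᵏ⁾ = (1/n) ⨁_{s=0}^{n-1} (p⁽ᵏ⁾)^{⊗(n-1-s)} ⊗ (q⁽ᵏ⁾)^{⊗s}` are probability
vectors and some stochastic matrix carries `p⁽ᵏ⁾ ⊗ r⁽ᵏ⁾` to `q⁽ᵏ⁾ ⊗ r⁽ᵏ⁾`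
for all `k`. -/
theorem catalytic_matrix_majorization_sufficient
    {d m m' : ℕ} (hd : 1 ≤ d)
    (P : Fin d → Fin m → ℝ) (Q : Fin d → Fin m' → ℝ)
    (hP : ∀ k, IsProbVec (P k)) (hQ : ∀ k, IsProbVec (Q k))
    (hPs : ∀ k l i, P k i ≠ 0 ↔ P l i ≠ 0)
    (hQs : ∀ k l i, Q k i ≠ 0 ↔ Q l i ≠ 0)
    (hA : ∀ α : Fin d → ℝ, (memAplus α ∨ memAminus α) → notBasis α →
      Dmat α Q < Dmat α P)
    (hB : ∀ β : Fin d → ℝ, memBminus β → β ≠ 0 → DmatT β Q < DmatT β P)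
    (hKL : ∀ k l, k ≠ l → KL (Q k) (Q l) < KL (P k) (P l)) :
    ∃ N : ℕ, ∀ n : ℕ, N ≤ n →
      (∀ k, IsProbVec (trick (P k) (Q k) n)) ∧
      ∃ T : (Fin m' × TrickIdx m m' n) → (Fin m × TrickIdx m m' n) → ℝ,
        IsStochastic T ∧
        ∀ k, matVec T (kron (P k) (trick (P k) (Q k) n)) =
          kron (Q k) (trick (P k) (Q k) n) := by
  have : NeZero d := ⟨Nat.one_le_iff_ne_zero.1 hd⟩
  have hP' : TupOK P := ⟨fun k => (hP k).1, hPs⟩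
  have hQ' : TupOK Q := ⟨fun k => (hQ k).1, hQs⟩
  have hdom := CatalyticMajorization.strictlyDominates_logVec hP' hQ' hP hQ hA hB hKL
  obtain ⟨N, hN⟩ := Filter.eventually_atTop.1
    (hdom.eventually_pow_sub_pow_mem_majCone.and (Filter.eventually_ne_atTop 0))
  refine ⟨N, fun n hn => ?_⟩
  obtain ⟨hmem, hn0⟩ := hN n hn
  exact ⟨fun k => CatalyticMajorization.isProbVec_trick (hP k) (hQ k) hn0,
    CatalyticMajorization.exists_isStochastic_matVec_kron_trick hP' hQ' hP hQ hn0 hmem⟩
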